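/- arXiv:1902.04459 — 7 statements merged into one kernel-verified Lean document; each statement's English description precedes it below -/
import Mathlib

section
/- Let T>0, N≥1, and let Q : [0,T] → M_N(ℂ) be a continuous family of symmetric complex N×N matrices, defining the time-dependent quadratic form q_t(X) = ⟨X, Q(t)X⟩ for X ∈ ℝ^N. Assume there exist constants 0<T*<T, c>0 and a positive integer k≥1 such that Re q_t(X) ≥ c t^k |X|² for all t ∈ [0,T*] and all X ∈ ℝ^N. Then there exist t₀ ∈ (0, min(1,T*)) and positive constants c₁, c₂ > 0 such that for all t ∈ (0,t₀) and all Ξ ∈ ℝ^N, |∫_{ℝ^N} e^{−i⟨X,Ξ⟩} e^{−q_t(X)} dX| ≤ c₁ t^{−kN/2} e^{−c₂ t^{2k} |Ξ|²}. -/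
open MeasureTheory

/- Since `Re Q` is positive definite, `Re Q` and `Im Q` are simultaneously diagonalized by a real
congruence `P`, which turns the integral into a product of one-dimensional Gaussian integrals.
Undoing the congruence, the Fourier transform of `e^{-q}` is `e^{-⟨Ξ, Q⁻¹Ξ⟩/4} ∫ e^{-q}`.
If `Re q ≥ a|X|²`, the last integral is at most `(π/a)^{N/2}`; and if `‖Q‖ ≤ M`, writing `Ξ = QZ`
gives `Re ⟨Ξ, Q⁻¹Ξ⟩ = Re ⟨QZ, conj Z⟩ ≥ a|Z|² ≥ (a/M²)|Ξ|²`. Taking `a = c t^k` yields the rate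
`t^k`, which is better than `t^{2k}` for `t ≤ 1`. -/

open Matrix
open scoped Real ComplexOrder

section SimultaneousDiagonalization

variable {ι 𝕜 : Type*} [Fintype ι] [DecidableEq ι] [RCLike 𝕜]

open scoped MatrixOrder Matrix.Norms.L2Operator in
theorem exists_isUnit_conjTranspose_mul_mul_eq_one {A : Matrix ι ι 𝕜} (hA : A.PosDef) :
    ∃ R : Matrix ι ι 𝕜, IsUnit R ∧ Rᴴ * A * R = 1 := by
  obtain ⟨S, hS, rfl⟩ :=
    CStarAlgebra.isStrictlyPositive_iff_eq_star_mul_self.mp hA.isStrictlyPositive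
  have hdet : IsUnit S.det := (isUnit_iff_isUnit_det S).mp hS
  refine ⟨S⁻¹, isUnit_nonsing_inv_iff.mpr hS, ?_⟩
  rw [star_eq_conjTranspose, ← Matrix.mul_assoc, ← conjTranspose_mul, mul_nonsing_inv S hdet,
    conjTranspose_one, Matrix.one_mul, mul_nonsing_inv S hdet]

theorem exists_isUnit_conjTranspose_mul_mul_eq_one_and_eq_diagonal {A B : Matrix ι ι 𝕜}
    (hA : A.PosDef) (hB : B.IsHermitian) :
    ∃ P : Matrix ι ι 𝕜, IsUnit P ∧ Pᴴ * A * P = 1 ∧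
      ∃ β : ι → ℝ, Pᴴ * B * P = diagonal (RCLike.ofReal ∘ β) := by
  obtain ⟨R, hR, hRA⟩ := exists_isUnit_conjTranspose_mul_mul_eq_one hA
  have hRB : (Rᴴ * B * R).IsHermitian := isHermitian_conjTranspose_mul_mul R hB
  set U := hRB.eigenvectorUnitary
  have conj_mul (C : Matrix ι ι 𝕜) :
      (R * U : Matrix ι ι 𝕜)ᴴ * C * (R * U) = star (U : Matrix ι ι 𝕜) * (Rᴴ * C * R) * U := by
    simp only [conjTranspose_mul, star_eq_conjTranspose, Matrix.mul_assoc]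
  refine ⟨R * U, hR.mul Unitary.isUnit_coe, ?_, hRB.eigenvalues, ?_⟩
  · rw [conj_mul, hRA, Matrix.mul_one, Unitary.coe_star_mul_self]
  · rw [conj_mul, ← Unitary.conjStarAlgAut_star_apply (S := 𝕜),
      hRB.conjStarAlgAut_star_eigenvectorUnitary]

end SimultaneousDiagonalization

section ComplexQuadForm

theorem isHermitian_map_of_isSymm {ι α : Type*} {A : Matrix ι ι α} (hA : A.IsSymm) (f : α → ℝ) :
    (A.map f).IsHermitian :=
  (conjTranspose_eq_transpose_of_trivial _).trans (hA.map f)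

variable {ι : Type*} [Fintype ι]

/-- The complex-valued quadratic form `x ↦ ⟨x, Qx⟩` on real vectors, for the bilinear (not
sesquilinear) pairing on `ℂ^ι`. -/
def complexQuadForm (Q : Matrix ι ι ℂ) (x : ι → ℝ) : ℂ :=
  (Complex.ofReal ∘ x) ⬝ᵥ Q *ᵥ (Complex.ofReal ∘ x)

theorem complexQuadForm_re (Q : Matrix ι ι ℂ) (x : ι → ℝ) :
    (complexQuadForm Q x).re = x ⬝ᵥ Q.map Complex.re *ᵥ x := by
  simp [complexQuadForm, dotProduct, mulVec]

theorem complexQuadForm_mulVec (Q : Matrix ι ι ℂ) (P : Matrix ι ι ℝ) (y : ι → ℝ) :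
    complexQuadForm Q (P *ᵥ y) =
      complexQuadForm ((P.map Complex.ofReal)ᵀ * Q * P.map Complex.ofReal) y := by
  have hP : Complex.ofReal ∘ (P *ᵥ y) = P.map Complex.ofReal *ᵥ (Complex.ofReal ∘ y) :=
    funext (RingHom.map_mulVec Complex.ofRealHom P y)
  rw [complexQuadForm, complexQuadForm, hP, ← mulVec_mulVec, ← mulVec_mulVec,
    dotProduct_mulVec _ (P.map Complex.ofReal)ᵀ, vecMul_transpose]

theorem complexQuadForm_diagonal [DecidableEq ι] (b : ι → ℂ) (y : ι → ℝ) :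
    complexQuadForm (diagonal b) y = ∑ i, b i * (y i : ℂ) ^ 2 := by
  simp only [complexQuadForm, dotProduct, mulVec_diagonal, Function.comp_apply]
  exact Finset.sum_congr rfl fun i _ => by ring

theorem posDef_map_re_of_le_re_complexQuadForm {Q : Matrix ι ι ℂ} (hQ : Q.IsSymm) {a : ℝ}
    (ha : 0 < a) (hre : ∀ x, a * (x ⬝ᵥ x) ≤ (complexQuadForm Q x).re) :
    (Q.map Complex.re).PosDef := by
  refine .of_dotProduct_mulVec_pos (isHermitian_map_of_isSymm hQ _) fun x hx => ?_
  rw [star_trivial, ← complexQuadForm_re]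
  have hxx : 0 < x ⬝ᵥ x := by simpa using dotProduct_star_self_pos_iff.mpr hx
  exact (mul_pos ha hxx).trans_le (hre x)

theorem exists_isUnit_transpose_mul_mul_eq_diagonal [DecidableEq ι] {Q : Matrix ι ι ℂ}
    (hQ : Q.IsSymm) (hre : (Q.map Complex.re).PosDef) :
    ∃ P : Matrix ι ι ℝ, IsUnit P ∧ ∃ b : ι → ℂ, (∀ i, 0 < (b i).re) ∧
      (P.map Complex.ofReal)ᵀ * Q * P.map Complex.ofReal = diagonal b := by
  have him : (Q.map Complex.im).IsHermitian := isHermitian_map_of_isSymm hQ _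
  obtain ⟨P, hP, hPre, β, hPim⟩ :=
    exists_isUnit_conjTranspose_mul_mul_eq_one_and_eq_diagonal hre him
  refine ⟨P, hP, fun i => 1 + β i * Complex.I, fun i => by simp, ?_⟩
  rw [conjTranspose_eq_transpose_of_trivial] at hPre hPim
  have hmap_re : ((P.map Complex.ofReal)ᵀ * Q * P.map Complex.ofReal).map Complex.re = 1 := by
    rw [← hPre]; ext; simp [mul_apply]
  have hmap_im : ((P.map Complex.ofReal)ᵀ * Q * P.map Complex.ofReal).map Complex.im =
      diagonal β := by
    refine .trans ?_ hPim; ext; simp [mul_apply]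
  ext i j
  apply Complex.ext
  · refine (congr_fun₂ hmap_re i j).trans ?_
    by_cases h : i = j <;> simp [h, one_apply]
  · refine (congr_fun₂ hmap_im i j).trans ?_
    by_cases h : i = j <;> simp [h]

theorem star_dotProduct_mulVec_re {Q : Matrix ι ι ℂ} (hQ : Q.IsSymm) (z : ι → ℂ) :
    (star z ⬝ᵥ Q *ᵥ z).re =
      (complexQuadForm Q (Complex.re ∘ z)).re + (complexQuadForm Q (Complex.im ∘ z)).re := by
  set u : ι → ℂ := Complex.ofReal ∘ Complex.re ∘ z with hu
  set v : ι → ℂ := Complex.ofReal ∘ Complex.im ∘ z with hv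
  have hz : z = u + Complex.I • v := by ext i; simp [hu, hv, mul_comm Complex.I]
  have hz' : star z = u - Complex.I • v := by
    ext i; apply Complex.ext <;> simp [hu, hv]
  have hsymm : u ⬝ᵥ Q *ᵥ v = v ⬝ᵥ Q *ᵥ u := by
    rw [dotProduct_mulVec, ← mulVec_transpose, hQ, dotProduct_comm]
  have : star z ⬝ᵥ Q *ᵥ z = u ⬝ᵥ Q *ᵥ u + v ⬝ᵥ Q *ᵥ v := by
    rw [hz', hz]
    simp only [mulVec_add, mulVec_smul, sub_dotProduct, dotProduct_add, smul_dotProduct,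
      dotProduct_smul, smul_eq_mul, hsymm]
    linear_combination (-(v ⬝ᵥ Q *ᵥ v)) * Complex.I_sq
  rw [this, Complex.add_re]
  rfl

theorem mul_sq_norm_le_re_star_dotProduct_mulVec {Q : Matrix ι ι ℂ} (hQ : Q.IsSymm) {a : ℝ}
    (hre : ∀ x, a * (x ⬝ᵥ x) ≤ (complexQuadForm Q x).re) (z : EuclideanSpace ℂ ι) :
    a * ‖z‖ ^ 2 ≤ (star z.ofLp ⬝ᵥ Q *ᵥ z.ofLp).re := by
  have hz : ‖z‖ ^ 2 = (Complex.re ∘ z.ofLp) ⬝ᵥ (Complex.re ∘ z.ofLp)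
      + (Complex.im ∘ z.ofLp) ⬝ᵥ (Complex.im ∘ z.ofLp) := by
    simp [EuclideanSpace.norm_sq_eq, dotProduct, ← Complex.normSq_eq_norm_sq, Complex.normSq_apply,
      Finset.sum_add_distrib]
  rw [star_dotProduct_mulVec_re hQ, hz, mul_add]
  exact add_le_add (hre _) (hre _)

theorem isUnit_of_le_re_complexQuadForm [DecidableEq ι] {Q : Matrix ι ι ℂ} (hQ : Q.IsSymm) {a : ℝ}
    (ha : 0 < a) (hre : ∀ x, a * (x ⬝ᵥ x) ≤ (complexQuadForm Q x).re) : IsUnit Q := by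
  refine mulVec_injective_iff_isUnit.mp ((injective_iff_map_eq_zero Q.mulVecLin).mpr fun z hz => ?_)
  have h := mul_sq_norm_le_re_star_dotProduct_mulVec hQ hre (WithLp.toLp 2 z)
  rw [mulVecLin_apply] at hz
  rw [WithLp.ofLp_toLp, hz, dotProduct_zero, Complex.zero_re] at h
  have : ‖WithLp.toLp 2 z‖ ^ 2 = 0 := by
    nlinarith [sq_nonneg ‖WithLp.toLp 2 z‖]
  simpa using this

open scoped Matrix.Norms.L2Operator in
theorem div_sq_mul_le_re_complexQuadForm_inv [DecidableEq ι] {Q : Matrix ι ι ℂ} (hQ : Q.IsSymm)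
    {a M : ℝ} (ha : 0 < a) (hre : ∀ x, a * (x ⬝ᵥ x) ≤ (complexQuadForm Q x).re) (hM : ‖Q‖ ≤ M)
    (ξ : ι → ℝ) : a / M ^ 2 * (ξ ⬝ᵥ ξ) ≤ (complexQuadForm Q⁻¹ ξ).re := by
  set z : EuclideanSpace ℂ ι := WithLp.toLp 2 (Q⁻¹ *ᵥ (Complex.ofReal ∘ ξ)) with hz
  have hQz : Q *ᵥ z.ofLp = Complex.ofReal ∘ ξ := by
    rw [hz, WithLp.ofLp_toLp, mulVec_mulVec, mul_nonsing_inv, one_mulVec]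
    exact (isUnit_iff_isUnit_det Q).mp (isUnit_of_le_re_complexQuadForm hQ ha hre)
  have hre_eq : (complexQuadForm Q⁻¹ ξ).re = (star z.ofLp ⬝ᵥ Q *ᵥ z.ofLp).re := by
    rw [hQz]
    simp [complexQuadForm, dotProduct, hz, mul_comm]
  have hξ : ξ ⬝ᵥ ξ ≤ M ^ 2 * ‖z‖ ^ 2 := by
    calc ξ ⬝ᵥ ξ = ‖WithLp.toLp 2 (Q *ᵥ z.ofLp)‖ ^ 2 := by
          rw [EuclideanSpace.norm_sq_eq, hQz]
          simp [dotProduct, sq]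
      _ ≤ (‖Q‖ * ‖z‖) ^ 2 := by gcongr; exact l2_opNorm_mulVec Q z
      _ ≤ (M * ‖z‖) ^ 2 := by gcongr
      _ = M ^ 2 * ‖z‖ ^ 2 := mul_pow ..
  calc a / M ^ 2 * (ξ ⬝ᵥ ξ) = a * ((ξ ⬝ᵥ ξ) / M ^ 2) := by ring
    _ ≤ a * ‖z‖ ^ 2 := by gcongr; exact div_le_of_le_mul₀ (sq_nonneg M) (sq_nonneg _) (by linarith)
    _ ≤ _ := hre_eq ▸ mul_sq_norm_le_re_star_dotProduct_mulVec hQ hre z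

end ComplexQuadForm

section GaussianIntegrals

variable {ι : Type*} [Fintype ι]

theorem integral_eq_abs_det_smul_integral_comp_mulVec [DecidableEq ι] {E : Type*}
    [NormedAddCommGroup E] [NormedSpace ℝ E] {P : Matrix ι ι ℝ} (hP : IsUnit P) (f : (ι → ℝ) → E) :
    ∫ x, f x = |P.det| • ∫ y, f (P *ᵥ y) := by
  set L := P.toLin'.toContinuousLinearMap
  have hLdet : L.det = P.det := LinearMap.det_toLin' P
  have hLinj : Set.InjOn L Set.univ := (mulVec_injective_of_isUnit hP).injOn
  have hLrange : L '' Set.univ = Set.univ :=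
    Set.image_univ_of_surjective (mulVec_surjective_iff_isUnit.mpr hP)
  have h := integral_image_eq_integral_abs_det_fderiv_smul volume MeasurableSet.univ
    (fun x _ => L.hasFDerivWithinAt) hLinj f
  simp only [hLrange, setIntegral_univ, hLdet, integral_smul] at h
  exact h

theorem sq_norm_eq_dotProduct_self (x : EuclideanSpace ℝ ι) : ‖x‖ ^ 2 = x.ofLp ⬝ᵥ x.ofLp := by
  rw [EuclideanSpace.real_norm_sq_eq]
  simp only [dotProduct, sq]

theorem integral_rexp_neg_mul_dotProduct_self {a : ℝ} (ha : 0 < a) :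
    ∫ x : ι → ℝ, Real.exp (-a * (x ⬝ᵥ x)) = (π / a) ^ ((Fintype.card ι : ℝ) / 2) := by
  have h := GaussianFourier.integral_rexp_neg_mul_sq_norm (V := EuclideanSpace ℝ ι) ha
  rw [finrank_euclideanSpace,
    ← (PiLp.volume_preserving_toLp ι).integral_comp
      (MeasurableEquiv.toLp 2 _).measurableEmbedding] at h
  simpa only [sq_norm_eq_dotProduct_self] using h

theorem norm_integral_cexp_neg_complexQuadForm_le {Q : Matrix ι ι ℂ} {a : ℝ} (ha : 0 < a)
    (hre : ∀ x, a * (x ⬝ᵥ x) ≤ (complexQuadForm Q x).re) :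
    ‖∫ x, Complex.exp (-complexQuadForm Q x)‖ ≤ (π / a) ^ ((Fintype.card ι : ℝ) / 2) := by
  have hint : Integrable fun x : ι → ℝ => Real.exp (-a * (x ⬝ᵥ x)) := by
    refine .of_integral_ne_zero ?_
    rw [integral_rexp_neg_mul_dotProduct_self ha]
    positivity
  rw [← integral_rexp_neg_mul_dotProduct_self ha]
  refine norm_integral_le_of_norm_le hint (.of_forall fun x => ?_)
  rw [Complex.norm_exp, Complex.neg_re, neg_mul]
  gcongr
  exact hre x

theorem integral_cexp_neg_I_mul_dotProduct_mul_cexp_neg_diagonal [DecidableEq ι] {b : ι → ℂ}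
    (hb : ∀ i, 0 < (b i).re) (η : ι → ℝ) :
    ∫ y, Complex.exp (-(Complex.I * (y ⬝ᵥ η : ℝ))) * Complex.exp (-complexQuadForm (diagonal b) y) =
      Complex.exp (-complexQuadForm (diagonal b)⁻¹ η / 4) *
        ∫ y, Complex.exp (-complexQuadForm (diagonal b) y) := by
  have hinv : (diagonal b)⁻¹ = diagonal fun i => (b i)⁻¹ := by
    refine inv_eq_right_inv ?_
    rw [diagonal_mul_diagonal, ← diagonal_one]
    exact congrArg diagonal (funext fun i => mul_inv_cancel₀ (Complex.ne_zero_of_re_pos (hb i)))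
  have hfourier (y : ι → ℝ) :
      Complex.exp (-(Complex.I * (y ⬝ᵥ η : ℝ))) * Complex.exp (-complexQuadForm (diagonal b) y) =
        Complex.exp (-∑ i, b i * (y i : ℂ) ^ 2 + ∑ i, (-Complex.I * η i) * y i) := by
    rw [← Complex.exp_add, complexQuadForm_diagonal, add_comm, dotProduct, Complex.ofReal_sum,
      Finset.mul_sum]
    congr 2
    rw [← Finset.sum_neg_distrib]
    exact Finset.sum_congr rfl fun i _ => by push_cast; ring
  have hfactor : Complex.exp (-complexQuadForm (diagonal b)⁻¹ η / 4) =
      ∏ i, Complex.exp ((-Complex.I * η i) ^ 2 / (4 * b i)) := by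
    rw [hinv, complexQuadForm_diagonal, ← Complex.exp_sum, ← Finset.sum_neg_distrib,
      Finset.sum_div]
    refine congrArg _ (Finset.sum_congr rfl fun i _ => ?_)
    rw [mul_pow, neg_sq, Complex.I_sq]
    ring
  have hzero : ∫ y, Complex.exp (-complexQuadForm (diagonal b) y) =
      ∏ i, (π / b i) ^ (1 / 2 : ℂ) := by
    simpa [complexQuadForm_diagonal] using GaussianFourier.integral_cexp_neg_sum_mul_add hb 0
  simp_rw [hfourier, hzero]
  rw [GaussianFourier.integral_cexp_neg_sum_mul_add hb, Finset.prod_mul_distrib, hfactor, mul_comm]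

theorem integral_cexp_neg_I_mul_dotProduct_mul_cexp_neg_complexQuadForm [DecidableEq ι]
    {Q : Matrix ι ι ℂ} (hQ : Q.IsSymm) (hre : (Q.map Complex.re).PosDef) (ξ : ι → ℝ) :
    ∫ x, Complex.exp (-(Complex.I * (x ⬝ᵥ ξ : ℝ))) * Complex.exp (-complexQuadForm Q x) =
      Complex.exp (-complexQuadForm Q⁻¹ ξ / 4) * ∫ x, Complex.exp (-complexQuadForm Q x) := by
  obtain ⟨P, hP, b, hb, hPQ⟩ := exists_isUnit_transpose_mul_mul_eq_diagonal hQ hre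
  have hdual (y : ι → ℝ) : (P *ᵥ y) ⬝ᵥ ξ = y ⬝ᵥ (Pᵀ *ᵥ ξ) := by
    rw [dotProduct_mulVec, vecMul_transpose]
  have hinv : complexQuadForm Q⁻¹ ξ = complexQuadForm (diagonal b)⁻¹ (Pᵀ *ᵥ ξ) := by
    have hPdet : IsUnit (P.map Complex.ofReal).det :=
      (isUnit_iff_isUnit_det _).mp (hP.map Complex.ofRealHom.mapMatrix)
    rw [← hPQ, complexQuadForm_mulVec, transpose_map, transpose_transpose, Matrix.mul_inv_rev,
      Matrix.mul_inv_rev, mul_nonsing_inv_cancel_left _ _ hPdet,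
      nonsing_inv_mul_cancel_right _ _ (isUnit_det_transpose _ hPdet)]
  rw [integral_eq_abs_det_smul_integral_comp_mulVec hP,
    integral_eq_abs_det_smul_integral_comp_mulVec hP fun x => Complex.exp (-complexQuadForm Q x)]
  simp only [complexQuadForm_mulVec, hPQ, hdual, hinv, mul_smul_comm,
    integral_cexp_neg_I_mul_dotProduct_mul_cexp_neg_diagonal hb]

open scoped Matrix.Norms.L2Operator in
theorem norm_integral_cexp_neg_I_mul_dotProduct_mul_cexp_neg_complexQuadForm_le [DecidableEq ι]
    {Q : Matrix ι ι ℂ} (hQ : Q.IsSymm) {a M : ℝ} (ha : 0 < a)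
    (hre : ∀ x, a * (x ⬝ᵥ x) ≤ (complexQuadForm Q x).re) (hM : ‖Q‖ ≤ M) (ξ : ι → ℝ) :
    ‖∫ x, Complex.exp (-(Complex.I * (x ⬝ᵥ ξ : ℝ))) * Complex.exp (-complexQuadForm Q x)‖ ≤
      (π / a) ^ ((Fintype.card ι : ℝ) / 2) * Real.exp (-(a / (4 * M ^ 2)) * (ξ ⬝ᵥ ξ)) := by
  rw [integral_cexp_neg_I_mul_dotProduct_mul_cexp_neg_complexQuadForm hQ
    (posDef_map_re_of_le_re_complexQuadForm hQ ha hre), norm_mul, mul_comm, Complex.norm_exp]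
  gcongr
  · exact norm_integral_cexp_neg_complexQuadForm_le ha hre
  · have hinv := div_sq_mul_le_re_complexQuadForm_inv hQ ha hre hM ξ
    have hdiv : (-complexQuadForm Q⁻¹ ξ / 4).re = -(complexQuadForm Q⁻¹ ξ).re / 4 := by simp
    rw [hdiv]
    calc -(complexQuadForm Q⁻¹ ξ).re / 4 ≤ -(a / M ^ 2 * (ξ ⬝ᵥ ξ)) / 4 := by gcongr
      _ = _ := by ring

end GaussianIntegrals

open scoped Matrix.Norms.L2Operator in
theorem bddAbove_image_l2_opNorm_of_continuousOn {α ι 𝕜 : Type*} [TopologicalSpace α] [Fintype ι]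
    [DecidableEq ι] [RCLike 𝕜] {Q : α → Matrix ι ι 𝕜} {K s : Set α} (hK : IsCompact K)
    (hQ : ContinuousOn Q K) (hs : s ⊆ K) : BddAbove ((fun t => ‖Q t‖) '' s) :=
  (hK.bddAbove_image hQ.norm).mono (Set.image_mono hs)

open scoped Matrix.Norms.L2Operator in
theorem statement_0_general {ι : Type*} [Fintype ι] [DecidableEq ι] {Tstar c κ : ℝ} (hc : 0 < c)
    {Q : ℝ → Matrix ι ι ℂ} (hQbdd : BddAbove ((fun t => ‖Q t‖) '' Set.Ioc 0 Tstar))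
    (hQsymm : ∀ t ∈ Set.Ioc 0 Tstar, (Q t).IsSymm) {q : ℝ → EuclideanSpace ℝ ι → ℂ}
    (hq : ∀ t X, q t X = ∑ i, (X i : ℂ) * (Q t).mulVec (fun j => (X j : ℂ)) i)
    (hcoer : ∀ t ∈ Set.Ioc 0 Tstar, ∀ X : EuclideanSpace ℝ ι,
      c * t ^ κ * ‖X‖ ^ 2 ≤ (q t X).re) :
    ∃ c₁ > (0 : ℝ), ∃ c₂ > (0 : ℝ), ∀ t ∈ Set.Ioc 0 Tstar, ∀ Ξ : EuclideanSpace ℝ ι,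
      ‖∫ X : EuclideanSpace ℝ ι,
          Complex.exp (-(Complex.I * ∑ i, (X i : ℂ) * (Ξ i : ℂ))) * Complex.exp (-(q t X))‖
        ≤ c₁ / t ^ (κ * Fintype.card ι / 2) * Real.exp (-c₂ * t ^ κ * ‖Ξ‖ ^ 2) := by
  obtain ⟨M, hM0, hM⟩ : ∃ M > 0, ∀ t ∈ Set.Ioc 0 Tstar, ‖Q t‖ ≤ M := by
    obtain ⟨M, hM⟩ := hQbdd
    exact ⟨max M 1, by positivity, fun t ht => le_max_of_le_left (hM ⟨t, ht, rfl⟩)⟩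
  refine ⟨(π / c) ^ ((Fintype.card ι : ℝ) / 2), by positivity, c / (4 * M ^ 2), by positivity,
    fun t ht Ξ => ?_⟩
  have ht0 : 0 < t := ht.1
  have hre (x : ι → ℝ) : c * t ^ κ * (x ⬝ᵥ x) ≤ (complexQuadForm (Q t) x).re := by
    have := hcoer t ht (WithLp.toLp 2 x)
    rwa [sq_norm_eq_dotProduct_self, hq] at this
  have key := norm_integral_cexp_neg_I_mul_dotProduct_mul_cexp_neg_complexQuadForm_le
    (hQsymm t ht) (by positivity) hre (hM t ht) Ξ.ofLp
  have hrate : (π / (c * t ^ κ)) ^ ((Fintype.card ι : ℝ) / 2) =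
      (π / c) ^ ((Fintype.card ι : ℝ) / 2) / t ^ (κ * Fintype.card ι / 2) := by
    rw [← div_div, Real.div_rpow (by positivity) (by positivity), ← Real.rpow_mul ht0.le,
      mul_div_assoc]
  rw [← (PiLp.volume_preserving_toLp ι).integral_comp
      (MeasurableEquiv.toLp 2 _).measurableEmbedding]
  convert key using 2
  · simp [hq, complexQuadForm, dotProduct, Function.comp_def]
  · rw [hrate]
  · rw [sq_norm_eq_dotProduct_self]; ring_nf

/-- Gaussian-type decay of the Fourier transform of `e^{-q_t}` for a
time-dependent complex-valued quadratic form `q_t(X) = ⟨X, Q(t)X⟩` on `ℝ^N` whose real part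
satisfies the coercivity estimate `Re q_t(X) ≥ c t^k |X|²` on `[0, T*]`. -/
theorem statement_0 (N : ℕ) (hN : 1 ≤ N) (T Tstar c : ℝ) (k : ℕ)
    (hT : 0 < T) (hTstar : 0 < Tstar) (hTstarT : Tstar < T) (hc : 0 < c) (hk : 1 ≤ k)
    (Q : ℝ → Matrix (Fin N) (Fin N) ℂ)
    (hQcont : ContinuousOn Q (Set.Icc 0 T))
    (hQsymm : ∀ t ∈ Set.Icc (0 : ℝ) T, (Q t).IsSymm)
    (q : ℝ → EuclideanSpace ℝ (Fin N) → ℂ)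
    (hq : ∀ t X, q t X = ∑ i, (X i : ℂ) * (Q t).mulVec (fun j => (X j : ℂ)) i)
    (hcoer : ∀ t ∈ Set.Icc (0 : ℝ) Tstar, ∀ X : EuclideanSpace ℝ (Fin N),
      c * t ^ k * ‖X‖ ^ 2 ≤ (q t X).re) :
    ∃ t₀ ∈ Set.Ioo (0 : ℝ) (min 1 Tstar), ∃ c₁ > (0 : ℝ), ∃ c₂ > (0 : ℝ),
      ∀ t ∈ Set.Ioo (0 : ℝ) t₀, ∀ Ξ : EuclideanSpace ℝ (Fin N),
        ‖∫ X : EuclideanSpace ℝ (Fin N),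
            Complex.exp (-(Complex.I * ∑ i, (X i : ℂ) * (Ξ i : ℂ))) * Complex.exp (-(q t X))‖
          ≤ c₁ / t ^ ((k * N : ℝ) / 2) * Real.exp (-c₂ * t ^ (2 * k) * ‖Ξ‖ ^ 2) := by
  have hsub : Set.Ioc 0 Tstar ⊆ Set.Icc 0 T := fun t ht => ⟨ht.1.le, ht.2.trans hTstarT.le⟩
  obtain ⟨c₁, hc₁, c₂, hc₂, hdecay⟩ := statement_0_general (κ := k) hc
    (bddAbove_image_l2_opNorm_of_continuousOn isCompact_Icc hQcont hsub)
    (fun t ht => hQsymm t (hsub ht)) hq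
    (fun t ht => by simpa only [Real.rpow_natCast] using hcoer t ⟨ht.1.le, ht.2⟩)
  obtain ⟨t₀, ht₀, ht₀min⟩ := exists_between (lt_min one_pos hTstar)
  refine ⟨t₀, ⟨ht₀, ht₀min⟩, c₁, hc₁, c₂, hc₂, fun t ht Ξ => ?_⟩
  have ht0 : 0 < t := ht.1
  obtain ⟨ht1, htTstar⟩ := le_min_iff.mp (ht.2.trans ht₀min).le
  have hpow : t ^ (2 * k) ≤ t ^ k := pow_le_pow_of_le_one ht0.le ht1 (by lia)
  refine (hdecay t ⟨ht0, htTstar⟩ Ξ).trans ?_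
  simp only [Real.rpow_natCast, Fintype.card_fin, neg_mul]
  gcongr
end

section
/- Let T>0, N≥1, and let Q : [0,T] → M_N(ℂ) be a continuous family of symmetric complex N×N matrices, defining the time-dependent quadratic form q_t(X) = ⟨X, Q(t)X⟩ for X ∈ ℝ^N. Assume there exist constants 0<T*<T, c>0 and a positive integer k≥1 such that Re q_t(X) ≥ c t^k |X|² for all t ∈ [0,T*] and all X ∈ ℝ^N. Then there exist t₀ ∈ (0, min(1,T*)) and a constant C>1 such that for all multi-indices α, β ∈ ℕ^N and all t ∈ (0,t₀), sup_{X ∈ ℝ^N} |X^α ∂_X^β (e^{−q_t(X)})| ≤ C^{1+|α|+|β|} · t^{−(k/2)(|α|+2|β|+s)} · (α!)^{1/2} (β!)^{1/2}, where s = 5N/4 + 2⌊N/2⌋ + 2. -/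
open MeasureTheory

/-- The partial derivative in the `i`-th coordinate direction of a function on `ℝ^N`. -/
noncomputable def pderivE {N : ℕ} (i : Fin N) (f : EuclideanSpace ℝ (Fin N) → ℂ) :
    EuclideanSpace ℝ (Fin N) → ℂ :=
  fun x => fderiv ℝ f x (EuclideanSpace.single i 1)

/-- The multi-index iterated partial derivative `∂_X^β`. -/
noncomputable def mderiv {N : ℕ} (β : Fin N → ℕ) (f : EuclideanSpace ℝ (Fin N) → ℂ) :
    EuclideanSpace ℝ (Fin N) → ℂ :=
  (List.ofFn fun i : Fin N => (pderivE i)^[β i]).foldr (· ∘ ·) id f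

/-!
The Gaussian `X ↦ e^{-q_t(X)}` extends to the entire function `z ↦ e^{-⟨z, Q(t)z⟩}` on `ℂ^N`, so
its derivatives are controlled by Cauchy's inequalities on a polydisc. Put `τ = t^{k/2}` and move
from `X` by a complex `w` with `|w_j| ≤ R`: the real part of the form stays above
`c τ² |X|² / 2 - O(R² / τ²)`. The radius `R = τ √(|β| + 1)` makes the error `O(|β| + 1)`, which
costs only a factor `C^{1 + |β|}`, while Cauchy's factor `β! / R^{|β|}` is at most `τ^{-|β|} √β!`.
The remaining Gaussian `e^{-c τ² |X|² / 2}` absorbs `X^α` at the price of `(√c τ)^{-|α|} √α!`.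
The resulting power `t^{-k (|α| + |β|) / 2}` is better than the one required.
-/

open Metric Set
open scoped ContDiff Matrix Nat Pointwise

section DirectionalDerivatives

variable {𝕜 E F : Type*} [NontriviallyNormedField 𝕜]
  [NormedAddCommGroup E] [NormedSpace 𝕜 E] [NormedAddCommGroup F] [NormedSpace 𝕜 F]

variable (𝕜) in
/-- The derivative `∂_v f` in the direction `v`, as an operator on functions so that it can be
iterated. -/
noncomputable def dirDeriv (v : E) (f : E → F) : E → F :=
  fun x => fderiv 𝕜 f x v

variable (𝕜) in
/-- The mixed derivative `∂_{v₁}^{n₁} ⋯ ∂_{vₘ}^{nₘ} f`, encoded by the list of pairs `(vᵢ, nᵢ)`; the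
last pair of the list is differentiated first. -/
noncomputable def mixedDeriv (l : List (E × ℕ)) (f : E → F) : E → F :=
  l.foldr (fun p => (dirDeriv 𝕜 p.1)^[p.2]) f

theorem contDiff_dirDeriv {f : E → F} (hf : ContDiff 𝕜 ∞ f) (v : E) :
    ContDiff 𝕜 ∞ (dirDeriv 𝕜 v f) :=
  (hf.fderiv_right le_rfl).clm_apply contDiff_const

theorem contDiff_iterate_dirDeriv {f : E → F} (hf : ContDiff 𝕜 ∞ f) (v : E) (n : ℕ) :
    ContDiff 𝕜 ∞ ((dirDeriv 𝕜 v)^[n] f) :=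
  Function.Iterate.rec _ hf (fun _ hg => contDiff_dirDeriv hg v) n

theorem contDiff_mixedDeriv {f : E → F} (hf : ContDiff 𝕜 ∞ f) (l : List (E × ℕ)) :
    ContDiff 𝕜 ∞ (mixedDeriv 𝕜 l f) := by
  induction l with
  | nil => exact hf
  | cons p l ih => exact contDiff_iterate_dirDeriv ih p.1 p.2

theorem iteratedDeriv_comp_add_smul {f : E → F} (hf : ContDiff 𝕜 ∞ f) (x v : E) (n : ℕ) :
    iteratedDeriv n (fun ζ : 𝕜 => f (x + ζ • v)) =
      fun ζ => (dirDeriv 𝕜 v)^[n] f (x + ζ • v) := by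
  induction n generalizing f with
  | zero => exact iteratedDeriv_zero
  | succ n ih =>
    have hderiv : deriv (fun ζ : 𝕜 => f (x + ζ • v)) = fun ζ => dirDeriv 𝕜 v f (x + ζ • v) := by
      ext ζ
      have hline : HasDerivAt (fun ζ : 𝕜 => x + ζ • v) v ζ := by
        simpa using ((hasDerivAt_id ζ).smul_const v).const_add x
      exact ((hf.differentiable (by simp) _).hasFDerivAt.comp_hasDerivAt ζ hline).deriv
    rw [iteratedDeriv_succ', hderiv, ih (contDiff_dirDeriv hf v), Function.iterate_succ_apply]

section Restriction

variable {𝕜' E' F' : Type*} [NontriviallyNormedField 𝕜'] [NormedAlgebra 𝕜 𝕜']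
  [NormedAddCommGroup E'] [NormedSpace 𝕜 E'] [NormedSpace 𝕜' E'] [IsScalarTower 𝕜 𝕜' E']
  [NormedAddCommGroup F'] [NormedSpace 𝕜 F'] [NormedSpace 𝕜' F'] [IsScalarTower 𝕜 𝕜' F']
  {g : E' → F'} (L : E →L[𝕜] E')

theorem dirDeriv_comp_clm (hg : ContDiff 𝕜' ∞ g) (v : E) :
    dirDeriv 𝕜 v (g ∘ L) = dirDeriv 𝕜' (L v) g ∘ L := by
  ext x
  have hgL : HasFDerivAt g (fderiv 𝕜' g (L x)) (L x) :=
    (hg.differentiable (by simp) _).hasFDerivAt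
  simp only [dirDeriv, Function.comp_apply, ((hgL.restrictScalars 𝕜).comp x L.hasFDerivAt).fderiv,
    ContinuousLinearMap.comp_apply, ContinuousLinearMap.coe_restrictScalars']

theorem iterate_dirDeriv_comp_clm (hg : ContDiff 𝕜' ∞ g) (v : E) (n : ℕ) :
    (dirDeriv 𝕜 v)^[n] (g ∘ L) = (dirDeriv 𝕜' (L v))^[n] g ∘ L := by
  induction n generalizing g with
  | zero => rfl
  | succ n ih =>
    simp only [Function.iterate_succ_apply, dirDeriv_comp_clm L hg v,
      ih (contDiff_dirDeriv hg (L v))]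

theorem mixedDeriv_comp_clm (hg : ContDiff 𝕜' ∞ g) (l : List (E × ℕ)) :
    mixedDeriv 𝕜 l (g ∘ L) = mixedDeriv 𝕜' (l.map (Prod.map L id)) g ∘ L := by
  induction l with
  | nil => rfl
  | cons p l ih =>
    calc mixedDeriv 𝕜 (p :: l) (g ∘ L)
        = (dirDeriv 𝕜 p.1)^[p.2] (mixedDeriv 𝕜' (l.map (Prod.map L id)) g ∘ L) := by
          rw [← ih]; rfl
      _ = mixedDeriv 𝕜' ((p :: l).map (Prod.map L id)) g ∘ L :=
          iterate_dirDeriv_comp_clm L (contDiff_mixedDeriv hg _) p.1 p.2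

end Restriction

end DirectionalDerivatives

section CauchyEstimates

variable {E F : Type*} [NormedAddCommGroup E] [NormedSpace ℂ E]
  [NormedAddCommGroup F] [NormedSpace ℂ F] [CompleteSpace F] {f : E → F} {x : E} {r K : ℝ}

theorem norm_iterate_dirDeriv_le (hf : ContDiff ℂ ∞ f) (hr : 0 < r) {v : E} (n : ℕ)
    (hK : ∀ ζ : ℂ, ‖ζ‖ = r → ‖f (x + ζ • v)‖ ≤ K) :
    ‖(dirDeriv ℂ v)^[n] f x‖ ≤ K * (n ! / r ^ n) := by
  have hline : Differentiable ℂ fun ζ : ℂ => f (x + ζ • v) :=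
    (hf.differentiable (by simp)).comp (by fun_prop)
  have hcauchy := Complex.norm_iteratedDeriv_le_of_forall_mem_sphere_norm_le n hr
    hline.diffContOnCl fun ζ hζ => hK ζ (mem_sphere_zero_iff_norm.mp hζ)
  rw [iteratedDeriv_comp_add_smul hf] at hcauchy
  simpa only [zero_smul, add_zero, mul_div_right_comm, mul_comm K] using hcauchy

-- The polydisc is the Minkowski sum of the discs `{ζ vᵢ : |ζ| = r}`: moving along one direction and
-- then within the remaining discs stays in the sum, even if the directions are dependent.
theorem norm_mixedDeriv_le (hf : ContDiff ℂ ∞ f) (hr : 0 < r) (l : List (E × ℕ))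
    (hK : ∀ w ∈ (l.map fun p => (· • p.1) '' sphere (0 : ℂ) r).sum, ‖f (x + w)‖ ≤ K) :
    ‖mixedDeriv ℂ l f x‖ ≤ K * (l.map fun p => (p.2 ! : ℝ) / r ^ p.2).prod := by
  induction l generalizing x with
  | nil => simpa [mixedDeriv] using hK 0 rfl
  | cons p l ih =>
    rw [List.map_cons, List.prod_cons, mul_left_comm, mul_comm]
    refine norm_iterate_dirDeriv_le (contDiff_mixedDeriv hf l) hr p.2 fun ζ hζ => ih fun w hw => ?_
    rw [add_assoc]
    refine hK _ ?_
    rw [List.map_cons, List.sum_cons]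
    exact add_mem_add (mem_image_of_mem _ (mem_sphere_zero_iff_norm.mpr hζ)) hw

end CauchyEstimates

section Complexification

/-- The inclusion `ℝ^ι → ℂ^ι`. The target carries the supremum norm, whose balls are the polydiscs
of the Cauchy estimates. -/
noncomputable def complexify (ι : Type*) [Fintype ι] : EuclideanSpace ℝ ι →L[ℝ] (ι → ℂ) :=
  ContinuousLinearMap.pi fun i => Complex.ofRealCLM.comp (EuclideanSpace.proj i)

theorem norm_complexify_le {ι : Type*} [Fintype ι] (X : EuclideanSpace ℝ ι) :
    ‖complexify ι X‖ ≤ ‖X‖ :=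
  (pi_norm_le_iff_of_nonneg (norm_nonneg X)).mpr fun i =>
    (Complex.norm_real (X i)).trans_le (PiLp.norm_apply_le X i)

theorem complexify_single {ι : Type*} [Fintype ι] [DecidableEq ι] (i : ι) :
    complexify ι (EuclideanSpace.single i 1) = Pi.single i 1 := by
  ext j
  simp [complexify, Pi.single_apply, apply_ite]

variable {N : ℕ}

theorem mderiv_eq_mixedDeriv (β : Fin N → ℕ) (f : EuclideanSpace ℝ (Fin N) → ℂ) :
    mderiv β f = mixedDeriv ℝ (List.ofFn fun i => (EuclideanSpace.single i 1, β i)) f := by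
  have foldr_comp (l : List (Fin N)) :
      (l.map fun i => (pderivE i)^[β i]).foldr (· ∘ ·) id f =
        mixedDeriv ℝ (l.map fun i => (EuclideanSpace.single i 1, β i)) f := by
    induction l with
    | nil => rfl
    | cons i l ih => exact congrArg ((pderivE i)^[β i]) ih
  simpa only [mderiv, List.ofFn_eq_map] using foldr_comp (List.finRange N)

theorem norm_le_of_mem_sum_sphere_smul_single {r : ℝ} (hr : 0 ≤ r) {w : Fin N → ℂ}
    (hw : w ∈ (List.ofFn fun i : Fin N =>
      (· • (Pi.single i 1 : Fin N → ℂ)) '' sphere (0 : ℂ) r).sum) :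
    ‖w‖ ≤ r := by
  obtain ⟨u, rfl⟩ := mem_sum_list_ofFn.mp hw
  choose ζ hζ hu using fun i => (u i).2
  refine (pi_norm_le_iff_of_nonneg hr).mpr fun j => ?_
  simp [List.sum_ofFn, ← hu, Pi.single_apply, mem_sphere_zero_iff_norm.mp (hζ j)]

theorem norm_mderiv_comp_complexify_le {G : (Fin N → ℂ) → ℂ} (hG : ContDiff ℂ ∞ G)
    (β : Fin N → ℕ) {r K : ℝ} (hr : 0 < r) {X : EuclideanSpace ℝ (Fin N)}
    (hK : ∀ w, ‖w‖ ≤ r → ‖G (complexify (Fin N) X + w)‖ ≤ K) :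
    ‖mderiv β (G ∘ complexify (Fin N)) X‖ ≤ K * ((∏ i, (β i)!) / r ^ ∑ i, β i) := by
  rw [mderiv_eq_mixedDeriv, mixedDeriv_comp_clm _ hG, List.map_ofFn]
  have hcauchy := norm_mixedDeriv_le hG hr
    (List.ofFn fun i => ((Pi.single i 1 : Fin N → ℂ), β i)) (x := complexify (Fin N) X) (K := K)
    fun w hw => hK w (norm_le_of_mem_sum_sphere_smul_single hr.le (by
      simpa only [List.map_ofFn, Function.comp_def] using hw))
  simpa [List.map_ofFn, Function.comp_def, complexify_single, List.prod_ofFn,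
    Finset.prod_div_distrib, Finset.prod_pow_eq_pow_sum] using hcauchy

end Complexification

section Factorials

theorem pow_le_sqrt_factorial_mul_exp (y : ℝ) (n : ℕ) :
    y ^ n ≤ √(n ! : ℝ) * Real.exp (y ^ 2 / 2) := by
  have hsq : (y ^ n) ^ 2 ≤ n ! * Real.exp (y ^ 2) := by
    have h := Real.pow_div_factorial_le_exp (y ^ 2) (sq_nonneg y) n
    rwa [div_le_iff₀' (by positivity), pow_right_comm] at h
  calc y ^ n ≤ √(n ! * Real.exp (y ^ 2)) := (le_abs_self _).trans (Real.abs_le_sqrt hsq)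
    _ = √(n ! : ℝ) * Real.exp (y ^ 2 / 2) := by
      rw [Real.sqrt_mul (by positivity), Real.exp_half]

theorem abs_pow_mul_exp_neg_le {δ : ℝ} (hδ : 0 < δ) (x : ℝ) (n : ℕ) :
    |x| ^ n * Real.exp (-(δ / 2 * x ^ 2)) ≤ √(n ! : ℝ) * (√δ)⁻¹ ^ n := by
  have h := pow_le_sqrt_factorial_mul_exp (√δ * |x|) n
  rw [mul_pow, mul_pow, Real.sq_sqrt hδ.le, sq_abs, mul_div_right_comm] at h
  rw [Real.exp_neg, inv_pow, ← div_eq_mul_inv, ← div_eq_mul_inv,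
    div_le_div_iff₀ (by positivity) (by positivity)]
  rwa [mul_comm]

theorem norm_prod_pow_mul_exp_neg_le {ι : Type*} [Fintype ι] {δ : ℝ} (hδ : 0 < δ) (α : ι → ℕ)
    (X : EuclideanSpace ℝ ι) :
    ‖∏ i, (X i : ℂ) ^ α i‖ * Real.exp (-(δ / 2 * ‖X‖ ^ 2)) ≤
      √(∏ i, ((α i)! : ℝ)) * (√δ)⁻¹ ^ ∑ i, α i := by
  have hexp : Real.exp (-(δ / 2 * ‖X‖ ^ 2)) = ∏ i, Real.exp (-(δ / 2 * X i ^ 2)) := by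
    simp [EuclideanSpace.norm_sq_eq, Finset.mul_sum, ← Finset.sum_neg_distrib, Real.exp_sum]
  calc ‖∏ i, (X i : ℂ) ^ α i‖ * Real.exp (-(δ / 2 * ‖X‖ ^ 2))
      = ∏ i, |X i| ^ α i * Real.exp (-(δ / 2 * X i ^ 2)) := by
        simp [hexp, norm_prod, Finset.prod_mul_distrib]
    _ ≤ ∏ i, √((α i)! : ℝ) * (√δ)⁻¹ ^ α i :=
        Finset.prod_le_prod (fun i _ => by positivity) fun i _ => abs_pow_mul_exp_neg_le hδ _ _
    _ = √(∏ i, ((α i)! : ℝ)) * (√δ)⁻¹ ^ ∑ i, α i := by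
        rw [Finset.prod_mul_distrib, Finset.prod_pow_eq_pow_sum,
          Real.sqrt_prod _ fun i _ => by positivity]

theorem prod_factorial_le_pow_sum {ι : Type*} (s : Finset ι) (β : ι → ℕ) :
    ∏ i ∈ s, (β i)! ≤ (∑ i ∈ s, β i) ^ ∑ i ∈ s, β i :=
  (Nat.le_of_dvd (Nat.factorial_pos _) (Nat.prod_factorial_dvd_factorial_sum s β)).trans
    (Nat.factorial_le_pow _)

theorem prod_factorial_div_pow_le {ι : Type*} [Fintype ι] {τ : ℝ} (hτ : 0 < τ) (β : ι → ℕ) :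
    (∏ i, ((β i)! : ℝ)) / (√((∑ i, β i : ℕ) + 1) * τ) ^ ∑ i, β i ≤
      √(∏ i, ((β i)! : ℝ)) * τ⁻¹ ^ ∑ i, β i := by
  set b := ∑ i, β i
  have hsqrt : √(∏ i, ((β i)! : ℝ)) ≤ √((b : ℝ) + 1) ^ b := by
    rw [Real.sqrt_le_left (by positivity), pow_right_comm, Real.sq_sqrt (by positivity)]
    exact_mod_cast (prod_factorial_le_pow_sum Finset.univ β).trans
      (Nat.pow_le_pow_left (Nat.le_succ b) b)
  rw [mul_pow, inv_pow, ← div_div, ← div_eq_mul_inv]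
  gcongr
  rw [div_le_iff₀ (by positivity)]
  calc ∏ i, ((β i)! : ℝ) = √(∏ i, ((β i)! : ℝ)) * √(∏ i, ((β i)! : ℝ)) :=
        (Real.mul_self_sqrt (by positivity)).symm
    _ ≤ √(∏ i, ((β i)! : ℝ)) * √((b : ℝ) + 1) ^ b := by gcongr

end Factorials

section QuadraticForms

variable {ι : Type*} [Fintype ι] {A : Matrix ι ι ℂ} {M : ℝ}

theorem norm_dotProduct_mulVec_le {u v : ι → ℂ} {a b : ℝ} (hA : ∑ i, ∑ j, ‖A i j‖ ≤ M)
    (hu : ‖u‖ ≤ a) (hv : ‖v‖ ≤ b) : ‖u ⬝ᵥ A *ᵥ v‖ ≤ M * (a * b) := by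
  have ha : 0 ≤ a := (norm_nonneg u).trans hu
  have hb : 0 ≤ b := (norm_nonneg v).trans hv
  calc ‖u ⬝ᵥ A *ᵥ v‖ = ‖∑ i, ∑ j, A i j * (u i * v j)‖ := by
        simp only [dotProduct, Matrix.mulVec, Finset.mul_sum, mul_left_comm]
    _ ≤ ∑ i, ∑ j, ‖A i j‖ * (a * b) := by
        refine norm_sum_le_of_le _ fun i _ => norm_sum_le_of_le _ fun j _ => ?_
        rw [norm_mul, norm_mul]
        gcongr
        exacts [(norm_le_pi_norm u i).trans hu, (norm_le_pi_norm v j).trans hv]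
    _ = (∑ i, ∑ j, ‖A i j‖) * (a * b) := by simp only [Finset.sum_mul]
    _ ≤ M * (a * b) := by gcongr

theorem contDiff_exp_neg_dotProduct_mulVec {n : WithTop ℕ∞} :
    ContDiff ℂ n fun z : ι → ℂ => Complex.exp (-(z ⬝ᵥ A *ᵥ z)) := by
  unfold Matrix.mulVec dotProduct
  fun_prop

-- The cross terms cost at most `2 M ρ R`, which is absorbed by
-- `2 M ρ R ≤ δ ρ² / 2 + 2 M² R² / δ`.
theorem le_re_dotProduct_mulVec_add {x w : ι → ℂ} {δ ρ R : ℝ} (hA : ∑ i, ∑ j, ‖A i j‖ ≤ M)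
    (hδ : 0 < δ) (hxρ : ‖x‖ ≤ ρ) (hx : δ * ρ ^ 2 ≤ (x ⬝ᵥ A *ᵥ x).re) (hw : ‖w‖ ≤ R) :
    δ / 2 * ρ ^ 2 - (M + 2 * M ^ 2 / δ) * R ^ 2 ≤ ((x + w) ⬝ᵥ A *ᵥ (x + w)).re := by
  have hre {u v : ι → ℂ} {a b : ℝ} (hu : ‖u‖ ≤ a) (hv : ‖v‖ ≤ b) :
      -(M * (a * b)) ≤ (u ⬝ᵥ A *ᵥ v).re :=
    neg_le_of_abs_le ((Complex.abs_re_le_norm _).trans (norm_dotProduct_mulVec_le hA hu hv))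
  have hexpand : ((x + w) ⬝ᵥ A *ᵥ (x + w)).re = (x ⬝ᵥ A *ᵥ x).re + (x ⬝ᵥ A *ᵥ w).re +
      (w ⬝ᵥ A *ᵥ x).re + (w ⬝ᵥ A *ᵥ w).re := by
    simp only [Matrix.mulVec_add, add_dotProduct, dotProduct_add, Complex.add_re]
    ring
  have hyoung : 2 * M * ρ * R ≤ δ / 2 * ρ ^ 2 + 2 * M ^ 2 / δ * R ^ 2 := by
    have hsq : δ / 2 * ρ ^ 2 + 2 * M ^ 2 / δ * R ^ 2 - 2 * M * ρ * R =
        (δ * ρ - 2 * M * R) ^ 2 / (2 * δ) := by field_simp; ring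
    rw [← sub_nonneg, hsq]
    positivity
  linarith [hre hxρ hw, hre hw hxρ, hre hw hw]

theorem exists_sum_norm_entry_le {S : Type*} [TopologicalSpace S] {K : Set S} (hK : IsCompact K)
    {Q : S → Matrix ι ι ℂ} (hQ : ContinuousOn Q K) :
    ∃ M, ∀ t ∈ K, ∑ i, ∑ j, ‖Q t i j‖ ≤ M := by
  have hentries : ContinuousOn (fun t => ∑ i, ∑ j, ‖Q t i j‖) K := by
    refine continuousOn_finsetSum _ fun i _ => continuousOn_finsetSum _ fun j _ => ?_
    exact ((continuous_id.matrix_elem i j).comp_continuousOn hQ).norm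
  obtain ⟨M, hM⟩ := hK.exists_bound_of_continuousOn hentries
  exact ⟨M, fun t ht => (le_abs_self _).trans (hM t ht)⟩

end QuadraticForms

section GelfandShilov

variable {N : ℕ} {A : Matrix (Fin N) (Fin N) ℂ} {M c τ : ℝ} {X : EuclideanSpace ℝ (Fin N)}

theorem norm_exp_neg_dotProduct_mulVec_add_le {w : Fin N → ℂ} {m : ℝ}
    (hA : ∑ i, ∑ j, ‖A i j‖ ≤ M) (hc : 0 < c) (hτ : 0 < τ) (hτ_le : τ ≤ 1) (hm : 0 ≤ m)
    (hX : c * τ ^ 2 * ‖X‖ ^ 2 ≤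
      (complexify (Fin N) X ⬝ᵥ A *ᵥ complexify (Fin N) X).re)
    (hw : ‖w‖ ≤ √m * τ) :
    ‖Complex.exp (-((complexify (Fin N) X + w) ⬝ᵥ A *ᵥ (complexify (Fin N) X + w)))‖ ≤
      Real.exp (-(c * τ ^ 2 / 2 * ‖X‖ ^ 2)) * Real.exp ((M + 2 * M ^ 2 / c) * m) := by
  have hM : 0 ≤ M := le_trans (by positivity) hA
  have hlower := le_re_dotProduct_mulVec_add hA (by positivity : 0 < c * τ ^ 2)
    (norm_complexify_le X) hX hw
  have hcost : (M + 2 * M ^ 2 / (c * τ ^ 2)) * (√m * τ) ^ 2 ≤ (M + 2 * M ^ 2 / c) * m :=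
    calc (M + 2 * M ^ 2 / (c * τ ^ 2)) * (√m * τ) ^ 2 = (M * τ ^ 2 + 2 * M ^ 2 / c) * m := by
          rw [mul_pow, Real.sq_sqrt hm]
          field_simp
      _ ≤ (M + 2 * M ^ 2 / c) * m := by
          gcongr
          exact mul_le_of_le_one_right hM (pow_le_one₀ hτ.le hτ_le)
  rw [Complex.norm_exp, ← Real.exp_add, Complex.neg_re]
  exact Real.exp_le_exp.mpr (by linarith)

theorem norm_prod_pow_mul_mderiv_exp_neg_le (hA : ∑ i, ∑ j, ‖A i j‖ ≤ M) (hc : 0 < c)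
    (hτ : 0 < τ) (hτ_le : τ ≤ 1)
    (hX : c * τ ^ 2 * ‖X‖ ^ 2 ≤
      (complexify (Fin N) X ⬝ᵥ A *ᵥ complexify (Fin N) X).re)
    (α β : Fin N → ℕ) :
    ‖(∏ i, (X i : ℂ) ^ α i) *
        mderiv β ((fun z => Complex.exp (-(z ⬝ᵥ A *ᵥ z))) ∘ complexify (Fin N)) X‖ ≤
      Real.exp (M + 2 * M ^ 2 / c) ^ (1 + ∑ i, β i) * (√c)⁻¹ ^ (∑ i, α i) *
        τ⁻¹ ^ (∑ i, α i + ∑ i, β i) * √(∏ i, ((α i)! : ℝ)) * √(∏ i, ((β i)! : ℝ)) := by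
  set a := ∑ i, α i
  set b := ∑ i, β i
  set B := M + 2 * M ^ 2 / c
  have hmderiv := norm_mderiv_comp_complexify_le contDiff_exp_neg_dotProduct_mulVec β
    (by positivity : 0 < √((b : ℝ) + 1) * τ)
    fun w hw => norm_exp_neg_dotProduct_mulVec_add_le hA hc hτ hτ_le (by positivity) hX hw
  have hgauss := norm_prod_pow_mul_exp_neg_le (by positivity : 0 < c * τ ^ 2) α X
  rw [Real.sqrt_mul hc.le, Real.sqrt_sq hτ.le, mul_inv] at hgauss
  have hexp : Real.exp (B * (b + 1)) = Real.exp B ^ (1 + b) := by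
    rw [← Real.exp_nat_mul]
    push_cast
    ring_nf
  rw [norm_mul, ← hexp]
  calc _ ≤ ‖∏ i, (X i : ℂ) ^ α i‖ * (Real.exp (-(c * τ ^ 2 / 2 * ‖X‖ ^ 2)) *
          Real.exp (B * (b + 1)) * (√(∏ i, ((β i)! : ℝ)) * τ⁻¹ ^ b)) := by
        refine mul_le_mul_of_nonneg_left (hmderiv.trans ?_) (norm_nonneg _)
        gcongr
        exact_mod_cast prod_factorial_div_pow_le hτ β
    _ = ‖∏ i, (X i : ℂ) ^ α i‖ * Real.exp (-(c * τ ^ 2 / 2 * ‖X‖ ^ 2)) *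
          (Real.exp (B * (b + 1)) * (√(∏ i, ((β i)! : ℝ)) * τ⁻¹ ^ b)) := by ring
    _ ≤ √(∏ i, ((α i)! : ℝ)) * ((√c)⁻¹ * τ⁻¹) ^ a *
          (Real.exp (B * (b + 1)) * (√(∏ i, ((β i)! : ℝ)) * τ⁻¹ ^ b)) := by gcongr
    _ = _ := by ring

end GelfandShilov

theorem statement_1_general {N : ℕ} {Tstar c κ M : ℝ} (hc : 0 < c) (hκ : 0 ≤ κ)
    {Q : ℝ → Matrix (Fin N) (Fin N) ℂ}
    (hQ : ∀ t ∈ Ioc 0 Tstar, ∑ i, ∑ j, ‖Q t i j‖ ≤ M)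
    {q : ℝ → EuclideanSpace ℝ (Fin N) → ℂ}
    (hq : ∀ t X, q t X = ∑ i, (X i : ℂ) * (Q t).mulVec (fun j => (X j : ℂ)) i)
    (hcoer : ∀ t ∈ Ioc 0 Tstar, ∀ X : EuclideanSpace ℝ (Fin N),
      c * t ^ κ * ‖X‖ ^ 2 ≤ (q t X).re) :
    ∃ C > (1 : ℝ), ∀ α β : Fin N → ℕ, ∀ t ∈ Ioc 0 (min 1 Tstar),
      ∀ X : EuclideanSpace ℝ (Fin N),
        ‖(∏ i, (X i : ℂ) ^ α i) * mderiv β (fun Y => Complex.exp (-(q t Y))) X‖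
          ≤ C ^ (1 + (∑ i, α i) + ∑ i, β i) / t ^ (κ / 2 * ((∑ i, α i) + ∑ i, β i))
              * √(∏ i, (α i)!) * √(∏ i, (β i)!) := by
  set E := Real.exp (M + 2 * M ^ 2 / c)
  have hE : 0 < E := Real.exp_pos _
  have hsqrt : 0 < (√c)⁻¹ := by positivity
  refine ⟨1 + E + (√c)⁻¹, by linarith, fun α β t ⟨ht, htmin⟩ X => ?_⟩
  obtain ⟨ht_one, htT⟩ := le_min_iff.mp htmin
  set C := 1 + E + (√c)⁻¹
  have hτ_sq : (t ^ (κ / 2)) ^ 2 = t ^ κ := by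
    rw [← Real.rpow_mul_natCast ht.le, Nat.cast_ofNat, div_mul_cancel₀ _ two_ne_zero]
  have hτ_pow : (t ^ (κ / 2))⁻¹ ^ (∑ i, α i + ∑ i, β i) =
      (t ^ (κ / 2 * ((∑ i, α i : ℕ) + (∑ i, β i : ℕ))))⁻¹ := by
    rw [inv_pow, ← Real.rpow_mul_natCast ht.le, Nat.cast_add]
  have hqt : q t = fun Y => complexify (Fin N) Y ⬝ᵥ Q t *ᵥ complexify (Fin N) Y :=
    funext (hq t)
  have hbound := norm_prod_pow_mul_mderiv_exp_neg_le (hQ t ⟨ht, htT⟩) hc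
    (Real.rpow_pos_of_pos ht (κ / 2)) (Real.rpow_le_one ht.le ht_one (by positivity))
    (by simpa only [hτ_sq, hqt] using hcoer t ⟨ht, htT⟩ X) α β
  have hC : E ^ (1 + ∑ i, β i) * (√c)⁻¹ ^ (∑ i, α i) ≤ C ^ (1 + (∑ i, α i) + ∑ i, β i) :=
    calc E ^ (1 + ∑ i, β i) * (√c)⁻¹ ^ (∑ i, α i)
        ≤ C ^ (1 + ∑ i, β i) * C ^ (∑ i, α i) := by gcongr <;> linarith
      _ = C ^ (1 + (∑ i, α i) + ∑ i, β i) := by ring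
  rw [hτ_pow] at hbound
  rw [hqt, div_eq_mul_inv]
  exact hbound.trans (by gcongr)

/-- Gelfand–Shilov type pointwise bounds for `X^α ∂_X^β (e^{-q_t})`, where
`q_t(X) = ⟨X, Q(t)X⟩` is a time-dependent complex-valued quadratic form on `ℝ^N` with
`Re q_t(X) ≥ c t^k |X|²` on `[0, T*]`, and `s = 5N/4 + 2⌊N/2⌋ + 2`. -/
theorem statement_1 (N : ℕ) (hN : 1 ≤ N) (T Tstar c : ℝ) (k : ℕ)
    (hT : 0 < T) (hTstar : 0 < Tstar) (hTstarT : Tstar < T) (hc : 0 < c) (hk : 1 ≤ k)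
    (Q : ℝ → Matrix (Fin N) (Fin N) ℂ)
    (hQcont : ContinuousOn Q (Set.Icc 0 T))
    (hQsymm : ∀ t ∈ Set.Icc (0 : ℝ) T, (Q t).IsSymm)
    (q : ℝ → EuclideanSpace ℝ (Fin N) → ℂ)
    (hq : ∀ t X, q t X = ∑ i, (X i : ℂ) * (Q t).mulVec (fun j => (X j : ℂ)) i)
    (hcoer : ∀ t ∈ Set.Icc (0 : ℝ) Tstar, ∀ X : EuclideanSpace ℝ (Fin N),
      c * t ^ k * ‖X‖ ^ 2 ≤ (q t X).re) :
    ∃ t₀ ∈ Set.Ioo (0 : ℝ) (min 1 Tstar), ∃ C > (1 : ℝ),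
      ∀ α β : Fin N → ℕ, ∀ t ∈ Set.Ioo (0 : ℝ) t₀, ∀ X : EuclideanSpace ℝ (Fin N),
        ‖(∏ i, (X i : ℂ) ^ α i) * mderiv β (fun Y => Complex.exp (-(q t Y))) X‖
          ≤ C ^ (1 + (∑ i, α i) + ∑ i, β i)
              / t ^ ((k : ℝ) / 2 * ((∑ i, α i) + 2 * (∑ i, β i)
                  + ((5 * N : ℝ) / 4 + 2 * (N / 2 : ℕ) + 2)))
              * Real.sqrt (∏ i, Nat.factorial (α i)) * Real.sqrt (∏ i, Nat.factorial (β i)) := by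
  obtain ⟨M, hM⟩ := exists_sum_norm_entry_le isCompact_Icc hQcont
  obtain ⟨C, hC, hbound⟩ := statement_1_general hc k.cast_nonneg
    (fun t ht => hM t ⟨ht.1.le, ht.2.trans hTstarT.le⟩) hq fun t ht X => by
      simpa only [Real.rpow_natCast] using hcoer t ⟨ht.1.le, ht.2⟩ X
  have hmin : 0 < min 1 Tstar := lt_min one_pos hTstar
  refine ⟨min 1 Tstar / 2, ⟨half_pos hmin, half_lt_self hmin⟩, C, hC, fun α β t ⟨ht, htlt⟩ X => ?_⟩
  have ht_le : t ≤ min 1 Tstar := (htlt.trans (half_lt_self hmin)).le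
  refine (hbound α β t ⟨ht, ht_le⟩ X).trans ?_
  gcongr _ / ?_ * _ * _
  refine Real.rpow_le_rpow_of_exponent_ge ht (ht_le.trans (min_le_left _ _)) ?_
  have hs : (0 : ℝ) ≤ (5 * N : ℝ) / 4 + 2 * (N / 2 : ℕ) + 2 := by positivity
  exact mul_le_mul_of_nonneg_left (by linarith) (by positivity)
end

section
/- Let F ∈ M_n(ℂ) be a complex n×n matrix and K ≥ 0 be a non-negative integer. Then for all X ∈ ℂ^n satisfying (Re F)(F^k X) = 0 for every k ∈ {0,…,K}, one has (Re F)(Im F)^k X = 0 for every k ∈ {0,…,K}. -/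
noncomputable section

/-- The real part `Re F` of a complex matrix, viewed as a complex matrix. -/
def matRe {ι : Type*} (F : Matrix ι ι ℂ) : Matrix ι ι ℂ := F.map fun z => ((z.re : ℝ) : ℂ)

/-- The imaginary part `Im F` of a complex matrix, viewed as a complex matrix. -/
def matIm {ι : Type*} (F : Matrix ι ι ℂ) : Matrix ι ι ℂ := F.map fun z => ((z.im : ℝ) : ℂ)

end

/-!
As long as the orbit of `X` under `F = Re F + i Im F` stays in `ker (Re F)`, each step of `F` acts
as `i Im F`. Hence `F ^ k X = i ^ k (Im F) ^ k X`, and the scalar `i ^ k` can be cancelled.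
-/

theorem matRe_add_I_smul_matIm {ι : Type*} (F : Matrix ι ι ℂ) :
    matRe F + Complex.I • matIm F = F := by
  ext i j
  simpa [matRe, matIm, mul_comm] using Complex.re_add_im (F i j)

theorem toLin'_eq_toLin'_matRe_add_I_smul_toLin'_matIm {ι : Type*} [Fintype ι] [DecidableEq ι]
    (F : Matrix ι ι ℂ) :
    F.toLin' = (matRe F).toLin' + Complex.I • (matIm F).toLin' := by
  rw [← map_smul, ← map_add, matRe_add_I_smul_matIm]

section LinearMap

variable {R M : Type*} [CommSemiring R] [AddCommMonoid M] [Module R M]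
  {F A B : Module.End R M} {c : R} {x : M}

theorem pow_apply_eq_smul_pow_apply_of_eq_add_smul (hF : F = A + c • B) {k : ℕ}
    (hA : ∀ j < k, A ((F ^ j) x) = 0) :
    (F ^ k) x = c ^ k • (B ^ k) x := by
  induction k with
  | zero => simp
  | succ k ih =>
    have hk : (F ^ k) x = c ^ k • (B ^ k) x := ih fun j hj => hA j (hj.trans k.lt_succ_self)
    calc (F ^ (k + 1)) x
        = A ((F ^ k) x) + c • B ((F ^ k) x) := by
          rw [pow_succ', Module.End.mul_apply, ← LinearMap.smul_apply, ← LinearMap.add_apply, ← hF]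
      _ = c • B (c ^ k • (B ^ k) x) := by rw [hA k k.lt_succ_self, zero_add, hk]
      _ = c ^ (k + 1) • (B ^ (k + 1)) x := by
          rw [map_smul, smul_smul, ← pow_succ', pow_succ' B, Module.End.mul_apply]

theorem statement_3_general (hF : F = A + c • B) (hc : IsSMulRegular M c) {K : ℕ}
    (hA : ∀ k ≤ K, A ((F ^ k) x) = 0) :
    ∀ k ≤ K, A ((B ^ k) x) = 0 := by
  intro k hk
  have hpow : (F ^ k) x = c ^ k • (B ^ k) x :=
    pow_apply_eq_smul_pow_apply_of_eq_add_smul hF fun j hj => hA j (hj.le.trans hk)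
  have hsmul : c ^ k • A ((B ^ k) x) = 0 := by rw [← map_smul, ← hpow, hA k hk]
  exact (hc.pow k).right_eq_zero_of_smul hsmul

end LinearMap

/-- Let `F` be a complex `n×n` matrix and `K ≥ 0`. If `X ∈ ℂ^n`
satisfies `(Re F)(F^k X) = 0` for every `k ∈ {0,…,K}`, then `(Re F)(Im F)^k X = 0`
for every `k ∈ {0,…,K}`. -/
theorem statement_3 (n : ℕ) (F : Matrix (Fin n) (Fin n) ℂ) (K : ℕ) (X : Fin n → ℂ)
    (hX : ∀ k ≤ K, (matRe F).mulVec ((F ^ k).mulVec X) = 0) :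
    ∀ k ≤ K, (matRe F * matIm F ^ k).mulVec X = 0 := by
  simpa [← Matrix.toLin'_pow] using statement_3_general
    (toLin'_eq_toLin'_matRe_add_I_smul_toLin'_matIm F) (.of_ne_zero Complex.I_ne_zero)
    (x := X) (K := K) (by simpa [← Matrix.toLin'_pow] using hX)
end

section
/- There exists a positive constant C > 1 depending only on the dimension N such that for all constants 0 < c₁ < 1, 0 < c₂ < 1, C₁ > 0, C₂ > 0 and every Schwartz function f ∈ 𝒮(ℝ^N) satisfying |f(x)| ≤ C₁ e^{−c₁|x|²} for all x ∈ ℝ^N and |f̂(ξ)| ≤ C₂ e^{−c₂|ξ|²} for all ξ ∈ ℝ^N, one has for all multi-indices α, β ∈ ℕ^N: sup_{x∈ℝ^N} |x^α ∂_x^β f(x)| ≤ C^{1+|α|+|β|} · [ C₁ c₁^{−(|α|+N/4)} · C₂ c₂^{−(|β|+⌊N/2⌋+1+N/4)} · α! · β! ]^{1/2}. -/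
open MeasureTheory

/-!
The derivative is the logarithm of translation: `∂ = h⁻¹ log (1 + Δ_h)`, where `Δ_h` is the forward
difference of step `h`. Applying this in each coordinate and cutting the power series after `2n`
terms, `n = |β|`, replaces `∂^β f (x)` by a combination of values of `f`, with total weight
exponential in `n` times `h^(-n)`. If every step points away from the origin, these values are taken
in the orthant where each `|y i| ≥ |x i|`, so the Gaussian bound on `f` at `|x|` controls all of
them. On the Fourier side the truncation error is at most a constant exponential in `n` times
`h^n ∫ |ξ|^(2n) |f̂ ξ| dξ`. The best `h` gives a Landau–Kolmogorov inequality
`|∂^β f (x)|² ≤ C^(n+1) · C₁ e^(-c₁|x|²) · ∫ |ξ|^(2n) |f̂ ξ| dξ`, in which the Gaussian factor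
absorbs `|x^α|²` at the cost of `α! c₁^(-|α|)`, and the moment of `f̂` of order `2n` is at most
`C₂ n! c₂^(-n-N/2)` up to exponentials in `n`, with `n! ≤ N^n β!`.
-/

open scoped FourierTransform RealInnerProductSpace

section LogSeries

/-- The `k`-th Taylor coefficient of `log (1 + z) ^ n` at `0`. Since the derivative is the logarithm
of a translation, `logPowCoeff n k` is the coefficient of the `k`-th forward difference in the
expansion of the `n`-th derivative. -/
noncomputable def logPowCoeff (n k : ℕ) : ℂ :=
  (k.factorial : ℂ)⁻¹ * iteratedDeriv k (fun z : ℂ => Complex.log (1 + z) ^ n) 0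

lemma differentiableOn_log_one_add_pow (n : ℕ) :
    DifferentiableOn ℂ (fun z : ℂ => Complex.log (1 + z) ^ n) (Metric.closedBall 0 (1 / 2)) := by
  intro z hz
  have hz' : ‖z‖ < 1 := (mem_closedBall_zero_iff.mp hz).trans_lt (by norm_num)
  exact (((differentiableAt_const 1).add differentiableAt_id).clog
    (Complex.mem_slitPlane_of_norm_lt_one hz')).pow n |>.differentiableWithinAt

lemma norm_logPowCoeff_le (n k : ℕ) : ‖logPowCoeff n k‖ ≤ 2 ^ k := by
  have hdiff : DiffContOnCl ℂ (fun z : ℂ => Complex.log (1 + z) ^ n) (Metric.ball 0 (1 / 2)) := by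
    apply DifferentiableOn.diffContOnCl
    rw [closure_ball _ (by norm_num)]
    exact differentiableOn_log_one_add_pow n
  have hbound : ∀ z ∈ Metric.sphere (0 : ℂ) (1 / 2), ‖Complex.log (1 + z) ^ n‖ ≤ 1 := by
    intro z hz
    rw [mem_sphere_zero_iff_norm] at hz
    rw [norm_pow]
    refine pow_le_one₀ (norm_nonneg _) ?_
    linarith [Complex.norm_log_one_add_half_le_self hz.le]
  have hcauchy := Complex.norm_iteratedDeriv_le_of_forall_mem_sphere_norm_le k (by norm_num)
    hdiff hbound
  rw [logPowCoeff, norm_mul, norm_inv, Complex.norm_natCast,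
    inv_mul_le_iff₀ (by exact_mod_cast k.factorial_pos)]
  simpa using hcauchy

lemma hasSum_logPowCoeff (n : ℕ) {z : ℂ} (hz : ‖z‖ < 1 / 2) :
    HasSum (fun k => logPowCoeff n k * z ^ k) (Complex.log (1 + z) ^ n) := by
  have h := Complex.hasSum_taylorSeries_on_ball
    ((differentiableOn_log_one_add_pow n).mono Metric.ball_subset_closedBall)
    (mem_ball_zero_iff.mpr hz)
  refine h.congr_fun fun k => ?_
  simp only [logPowCoeff, smul_eq_mul, sub_zero]
  ring

lemma norm_sum_range_logPowCoeff_sub_le (n m : ℕ) {z : ℂ} (hz : ‖z‖ ≤ 1 / 4) :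
    ‖∑ k ∈ Finset.range m, logPowCoeff n k * z ^ k - Complex.log (1 + z) ^ n‖
      ≤ 2 * (2 * ‖z‖) ^ m := by
  have hterm : ∀ k, ‖logPowCoeff n k * z ^ k‖ ≤ 1 * (2 * ‖z‖) ^ k := by
    intro k
    rw [norm_mul, norm_pow, one_mul, mul_pow]
    gcongr
    exact norm_logPowCoeff_le n k
  refine (norm_sub_le_of_geometric_bound_of_hasSum (by linarith) hterm
    (hasSum_logPowCoeff n (by linarith)) m).trans ?_
  rw [div_le_iff₀ (by linarith), one_mul]
  nlinarith [pow_nonneg (by positivity : 0 ≤ 2 * ‖z‖) m]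

end LogSeries

section DifferenceSymbol

/-- The Fourier symbol, at frequency `θ`, of the `m`-term truncation of the expansion
`(d/dt) ^ n = log (1 + Δ) ^ n` of a derivative in powers of the unit-step forward difference `Δ`. -/
noncomputable def diffSymbol (n m : ℕ) (θ : ℝ) : ℂ :=
  ∑ k ∈ Finset.range m, logPowCoeff n k * (Complex.exp (θ * Complex.I) - 1) ^ k

lemma sum_range_two_pow_mul_two_pow_le (m : ℕ) :
    ∑ k ∈ Finset.range m, (2 : ℝ) ^ k * 2 ^ k ≤ 4 ^ m := by
  have h := geom_sum_eq (by norm_num : (2 * 2 : ℝ) ≠ 1) m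
  simp only [← mul_pow, h]
  norm_num
  linarith [pow_nonneg (by norm_num : (0 : ℝ) ≤ 4) m]

lemma norm_diffSymbol_le (n m : ℕ) (θ : ℝ) : ‖diffSymbol n m θ‖ ≤ 4 ^ m := by
  refine (norm_sum_le_of_le _ fun k _ => ?_).trans (sum_range_two_pow_mul_two_pow_le m)
  have hexp : ‖Complex.exp (θ * Complex.I) - 1‖ ≤ 2 := by
    refine (norm_sub_le _ _).trans ?_
    rw [Complex.norm_exp_ofReal_mul_I, norm_one, one_add_one_eq_two]
  rw [norm_mul, norm_pow]
  gcongr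
  exact norm_logPowCoeff_le n k

lemma norm_diffSymbol_sub_pow_le (n m : ℕ) {θ : ℝ} (hθ : |θ| ≤ 1 / 4) :
    ‖diffSymbol n m θ - (θ * Complex.I) ^ n‖ ≤ 2 * (2 * |θ|) ^ m := by
  have hz : ‖Complex.exp (θ * Complex.I) - 1‖ ≤ |θ| := by
    simpa [mul_comm] using Real.norm_exp_I_mul_ofReal_sub_one_le (x := θ)
  have hlog : Complex.log (1 + (Complex.exp (θ * Complex.I) - 1)) = θ * Complex.I := by
    have hπ := Real.pi_gt_three
    obtain ⟨hl, hr⟩ := abs_le.mp hθ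
    rw [add_sub_cancel, Complex.log_exp] <;> simp <;> linarith
  have h := norm_sum_range_logPowCoeff_sub_le n m (hz.trans hθ)
  rw [hlog] at h
  exact h.trans (by gcongr)

lemma norm_prod_sub_prod_le {ι R : Type*} [NormedCommRing R] [NormOneClass R] (s : Finset ι)
    {φ ψ : ι → R} {B ε : ℝ} (hB : 1 ≤ B) (hφ : ∀ i ∈ s, ‖φ i‖ ≤ B) (hψ : ∀ i ∈ s, ‖ψ i‖ ≤ B)
    (hε : ∀ i ∈ s, ‖φ i - ψ i‖ ≤ ε) :
    ‖∏ i ∈ s, φ i - ∏ i ∈ s, ψ i‖ ≤ s.card * (B ^ s.card * ε) := by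
  induction s using Finset.cons_induction with
  | empty => simp
  | cons a s ha ih =>
    simp only [Finset.mem_cons, forall_eq_or_imp] at hφ hψ hε
    have hψs : ‖∏ i ∈ s, ψ i‖ ≤ B ^ s.card :=
      (Finset.norm_prod_le s ψ).trans <|
        (Finset.prod_le_prod (by simp) hψ.2).trans_eq (Finset.prod_const B)
    have hε0 : 0 ≤ ε := (norm_nonneg _).trans hε.1
    rw [Finset.prod_cons, Finset.prod_cons, Finset.card_cons]
    calc ‖φ a * ∏ i ∈ s, φ i - ψ a * ∏ i ∈ s, ψ i‖
        = ‖φ a * (∏ i ∈ s, φ i - ∏ i ∈ s, ψ i) + (φ a - ψ a) * ∏ i ∈ s, ψ i‖ := by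
          congr 1; ring
      _ ≤ ‖φ a‖ * ‖∏ i ∈ s, φ i - ∏ i ∈ s, ψ i‖ + ‖φ a - ψ a‖ * ‖∏ i ∈ s, ψ i‖ :=
          (norm_add_le _ _).trans (add_le_add (norm_mul_le _ _) (norm_mul_le _ _))
      _ ≤ B * (s.card * (B ^ s.card * ε)) + ε * (B ^ s.card * B) := by
          gcongr
          · exact hφ.1
          · exact ih hφ.2 hψ.2 hε.2
          · exact hε.1
          · exact hψs.trans (le_mul_of_one_le_right (by positivity) hB)
      _ = (s.card + 1 : ℕ) * (B ^ (s.card + 1) * ε) := by push_cast; ring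

/-- The constant lost in the Landau–Kolmogorov inequality below for mixed derivatives of total
order `n` in `d` directions; only its exponential growth in `n` matters. -/
noncomputable def landauConst (d n : ℕ) : ℝ := (2 * d + 2) * 16 ^ ((d + 1) * n)

lemma landauConst_nonneg (d n : ℕ) : 0 ≤ landauConst d n := by
  unfold landauConst; positivity

lemma four_pow_two_mul_pow_le_landauConst (d n : ℕ) :
    ((4 : ℝ) ^ (2 * n)) ^ d ≤ landauConst d n := by
  have hbase : (4 : ℝ) ^ (2 * n) = 16 ^ n := by rw [pow_mul]; norm_num
  have hpow : (16 : ℝ) ^ (n * d) ≤ 16 ^ ((d + 1) * n) :=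
    pow_le_pow_right₀ (by norm_num) (by nlinarith)
  rw [hbase, ← pow_mul, landauConst]
  exact hpow.trans
    (le_mul_of_one_le_left (by positivity) (by linarith [d.cast_nonneg (α := ℝ)]))

variable {ι : Type*} [Fintype ι]

lemma norm_prod_mul_I_pow_le {θ : ι → ℝ} {T : ℝ} (hθ : ∀ i, |θ i| ≤ T) (β : ι → ℕ) :
    ‖∏ i, (θ i * Complex.I) ^ β i‖ ≤ T ^ ∑ i, β i := by
  rw [norm_prod, ← Finset.prod_pow_eq_pow_sum]
  refine Finset.prod_le_prod (fun _ _ => norm_nonneg _) fun i _ => ?_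
  rw [norm_pow, norm_mul, Complex.norm_I, mul_one, Complex.norm_real, Real.norm_eq_abs]
  exact pow_le_pow_left₀ (abs_nonneg _) (hθ i) _

lemma norm_prod_diffSymbol_sub_prod_pow_le_of_le {θ : ι → ℝ} {T : ℝ} (hT : T ≤ 1 / 4)
    (hθ : ∀ i, |θ i| ≤ T) (β : ι → ℕ) (n : ℕ) :
    ‖∏ i, diffSymbol (β i) (2 * n) (θ i) - ∏ i, (θ i * Complex.I) ^ β i‖
      ≤ landauConst (Fintype.card ι) n * T ^ (2 * n) := by
  have hB : (1 : ℝ) ≤ 4 ^ (2 * n) := one_le_pow₀ (by norm_num)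
  have hT2 : 0 ≤ T ^ (2 * n) := by rw [pow_mul]; positivity
  have hψ (i : ι) : ‖(θ i * Complex.I) ^ β i‖ ≤ 4 ^ (2 * n) := by
    rw [norm_pow, norm_mul, Complex.norm_I, mul_one, Complex.norm_real, Real.norm_eq_abs]
    exact (pow_le_one₀ (abs_nonneg _) (by linarith [hθ i])).trans hB
  have hε (i : ι) :
      ‖diffSymbol (β i) (2 * n) (θ i) - (θ i * Complex.I) ^ β i‖ ≤ 2 * (2 * T) ^ (2 * n) :=
    (norm_diffSymbol_sub_pow_le _ _ ((hθ i).trans hT)).trans (by gcongr; exact hθ i)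
  refine (norm_prod_sub_prod_le Finset.univ hB (fun i _ => norm_diffSymbol_le _ _ _)
    (fun i _ => hψ i) fun i _ => hε i).trans ?_
  rw [Finset.card_univ, landauConst]
  set d := Fintype.card ι
  calc (d : ℝ) * (((4 : ℝ) ^ (2 * n)) ^ d * (2 * (2 * T) ^ (2 * n)))
      = 2 * d * (16 ^ (d * n) * 4 ^ n) * T ^ (2 * n) := by
        rw [mul_pow 2 T, pow_mul 2 2 n, pow_mul 4 2 n, ← pow_mul, mul_comm n d]
        norm_num
        ring
    _ ≤ (2 * d + 2) * (16 ^ (d * n) * 16 ^ n) * T ^ (2 * n) := by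
        gcongr <;> norm_num
    _ = (2 * d + 2) * 16 ^ ((d + 1) * n) * T ^ (2 * n) := by
        rw [← pow_add, add_one_mul]

lemma norm_prod_diffSymbol_sub_prod_pow_le_of_ge {θ : ι → ℝ} {T : ℝ} (hT : 1 / 4 ≤ T)
    (hθ : ∀ i, |θ i| ≤ T) {β : ι → ℕ} {n : ℕ} (hn : ∑ i, β i = n) :
    ‖∏ i, diffSymbol (β i) (2 * n) (θ i) - ∏ i, (θ i * Complex.I) ^ β i‖
      ≤ landauConst (Fintype.card ι) n * T ^ (2 * n) := by
  have hφ : ‖∏ i, diffSymbol (β i) (2 * n) (θ i)‖ ≤ 16 ^ (Fintype.card ι * n) := by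
    rw [norm_prod]
    refine (Finset.prod_le_prod (by simp) fun i _ => norm_diffSymbol_le _ _ _).trans_eq ?_
    rw [Finset.prod_const, Finset.card_univ, ← pow_mul, mul_assoc, pow_mul, mul_comm n]
    norm_num
  have hψ := norm_prod_mul_I_pow_le hθ β
  rw [hn] at hψ
  rw [landauConst]
  set d := Fintype.card ι
  calc _ ≤ (16 : ℝ) ^ (d * n) * 1 + 1 * T ^ n := by
        rw [mul_one, one_mul]
        exact (norm_sub_le _ _).trans (add_le_add hφ hψ)
    _ ≤ 16 ^ (d * n) * (16 * T ^ 2) ^ n + 16 ^ (d * n) * (16 * T ^ 2) ^ n := by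
        gcongr
        · exact one_le_pow₀ (by nlinarith)
        · exact one_le_pow₀ (by norm_num)
        · nlinarith
    _ = 2 * 16 ^ ((d + 1) * n) * T ^ (2 * n) := by
        rw [mul_pow, add_one_mul, pow_add, pow_mul T]; ring
    _ ≤ (2 * d + 2) * 16 ^ ((d + 1) * n) * T ^ (2 * n) := by
        gcongr
        linarith [d.cast_nonneg (α := ℝ)]

lemma norm_prod_diffSymbol_sub_prod_pow_le {θ : ι → ℝ} {T : ℝ} (hθ : ∀ i, |θ i| ≤ T)
    {β : ι → ℕ} {n : ℕ} (hn : ∑ i, β i = n) :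
    ‖∏ i, diffSymbol (β i) (2 * n) (θ i) - ∏ i, (θ i * Complex.I) ^ β i‖
      ≤ landauConst (Fintype.card ι) n * T ^ (2 * n) := by
  rcases le_total T (1 / 4) with hT | hT
  · exact norm_prod_diffSymbol_sub_prod_pow_le_of_le hT hθ β n
  · exact norm_prod_diffSymbol_sub_prod_pow_le_of_ge hT hθ hn

end DifferenceSymbol

section Multipliers

variable {V : Type*} [NormedAddCommGroup V] [InnerProductSpace ℝ V] [FiniteDimensional ℝ V]
  [MeasurableSpace V] [BorelSpace V]

variable {E : Type*} [NormedAddCommGroup E] [NormedSpace ℂ E]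

lemma fourierInv_add_of_integrable {F G : V → E} (hF : Integrable F) (hG : Integrable G) :
    𝓕⁻ (F + G) = 𝓕⁻ F + 𝓕⁻ G :=
  VectorFourier.fourierIntegral_add (L := -innerₗ V) Real.continuous_fourierChar
    (continuous_inner (𝕜 := ℝ)).neg hF hG

lemma fourierInv_const_smul (c : ℂ) (F : V → E) (y : V) : 𝓕⁻ (c • F) y = c • 𝓕⁻ F y :=
  congrFun (VectorFourier.fourierIntegral_const_smul 𝐞 volume (-innerₗ V) F c) y

lemma norm_fourierInv_le_integral_norm (F : V → E) (y : V) : ‖𝓕⁻ F y‖ ≤ ∫ ζ, ‖F ζ‖ :=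
  VectorFourier.norm_fourierIntegral_le_integral_norm 𝐞 volume (-innerₗ V) F y

/-- `φ` is a Fourier multiplier of norm at most `B` for the supremum over `Y`. This one-sided
version of boundedness on `L^∞` is what allows forward differences to be confined to an orthant. -/
def IsBoundedMultiplierOn (Y : Set V) (φ : V → ℂ) (B : ℝ) : Prop :=
  ∀ F : V → ℂ, Integrable F → Integrable (φ * F) ∧
    ∀ M : ℝ, (∀ y ∈ Y, ‖𝓕⁻ F y‖ ≤ M) → ∀ y ∈ Y, ‖𝓕⁻ (φ * F) y‖ ≤ B * M

namespace IsBoundedMultiplierOn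

variable {Y : Set V} {φ ψ : V → ℂ} {A B : ℝ}

lemma zero (Y : Set V) : IsBoundedMultiplierOn Y 0 0 := by
  intro F _
  rw [zero_mul]
  refine ⟨integrable_zero V ℂ volume, fun M _ y _ => ?_⟩
  simpa using norm_fourierInv_le_integral_norm (0 : V → ℂ) y

lemma one (Y : Set V) : IsBoundedMultiplierOn Y 1 1 := by
  intro F hF
  rw [one_mul]
  exact ⟨hF, fun M hM => by simpa only [one_mul] using hM⟩

lemma mul (hφ : IsBoundedMultiplierOn Y φ A) (hψ : IsBoundedMultiplierOn Y ψ B) :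
    IsBoundedMultiplierOn Y (φ * ψ) (A * B) := by
  intro F hF
  obtain ⟨hint, hbound⟩ := hψ F hF
  rw [mul_assoc]
  refine ⟨(hφ _ hint).1, fun M hM => ?_⟩
  rw [mul_assoc]
  exact (hφ _ hint).2 _ (hbound M hM)

lemma add (hφ : IsBoundedMultiplierOn Y φ A) (hψ : IsBoundedMultiplierOn Y ψ B) :
    IsBoundedMultiplierOn Y (φ + ψ) (A + B) := by
  intro F hF
  obtain ⟨hφF, hφbound⟩ := hφ F hF
  obtain ⟨hψF, hψbound⟩ := hψ F hF
  rw [add_mul]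
  refine ⟨hφF.add hψF, fun M hM y hy => ?_⟩
  rw [fourierInv_add_of_integrable hφF hψF, Pi.add_apply, add_mul]
  exact (norm_add_le _ _).trans (add_le_add (hφbound M hM y hy) (hψbound M hM y hy))

lemma const_smul (c : ℂ) (hφ : IsBoundedMultiplierOn Y φ B) :
    IsBoundedMultiplierOn Y (c • φ) (‖c‖ * B) := by
  intro F hF
  obtain ⟨hφF, hφbound⟩ := hφ F hF
  rw [smul_mul_assoc]
  refine ⟨hφF.smul c, fun M hM y hy => ?_⟩
  rw [fourierInv_const_smul, norm_smul, mul_assoc]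
  gcongr
  exact hφbound M hM y hy

lemma pow (hφ : IsBoundedMultiplierOn Y φ B) (k : ℕ) :
    IsBoundedMultiplierOn Y (φ ^ k) (B ^ k) := by
  induction k with
  | zero => simpa only [pow_zero] using one Y
  | succ k ih => simpa only [pow_succ] using ih.mul hφ

lemma sum {ι : Type*} (s : Finset ι) {φ : ι → V → ℂ} {B : ι → ℝ}
    (hφ : ∀ i ∈ s, IsBoundedMultiplierOn Y (φ i) (B i)) :
    IsBoundedMultiplierOn Y (∑ i ∈ s, φ i) (∑ i ∈ s, B i) := by
  induction s using Finset.cons_induction with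
  | empty => simpa only [Finset.sum_empty] using zero Y
  | cons a s ha ih =>
    simp only [Finset.mem_cons, forall_eq_or_imp] at hφ
    simpa only [Finset.sum_cons] using hφ.1.add (ih hφ.2)

lemma prod {ι : Type*} (s : Finset ι) {φ : ι → V → ℂ} {B : ι → ℝ}
    (hφ : ∀ i ∈ s, IsBoundedMultiplierOn Y (φ i) (B i)) :
    IsBoundedMultiplierOn Y (∏ i ∈ s, φ i) (∏ i ∈ s, B i) := by
  induction s using Finset.cons_induction with
  | empty => simpa only [Finset.prod_empty] using one Y
  | cons a s ha ih =>
    simp only [Finset.mem_cons, forall_eq_or_imp] at hφ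
    simpa only [Finset.prod_cons] using hφ.1.mul (ih hφ.2)

lemma mono (hφ : IsBoundedMultiplierOn Y φ A) (hAB : A ≤ B) :
    IsBoundedMultiplierOn Y φ B := by
  refine fun F hF => ⟨(hφ F hF).1, fun M hM y hy => ((hφ F hF).2 M hM y hy).trans ?_⟩
  exact mul_le_mul_of_nonneg_right hAB ((norm_nonneg _).trans (hM y hy))

lemma exp_inner {v : V} (hv : ∀ y ∈ Y, y + v ∈ Y) :
    IsBoundedMultiplierOn Y (fun ζ => Complex.exp ((2 * Real.pi * ⟪ζ, v⟫ : ℝ) * Complex.I)) 1 := by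
  intro F hF
  constructor
  · refine hF.bdd_mul (c := 1) (by fun_prop) (.of_forall fun ζ => ?_)
    rw [Complex.norm_exp_ofReal_mul_I]
  · intro M hM y hy
    have hshift : 𝓕⁻ ((fun ζ => Complex.exp ((2 * Real.pi * ⟪ζ, v⟫ : ℝ) * Complex.I)) * F) y
        = 𝓕⁻ F (y + v) := by
      simp only [Real.fourierInv_eq', Pi.mul_apply, smul_eq_mul, inner_add_right, ← mul_assoc,
        ← Complex.exp_add]
      congr! 4
      push_cast
      ring
    rw [hshift, one_mul]
    exact hM _ (hv y hy)

lemma diffSymbol {v : V} (hv : ∀ y ∈ Y, y + v ∈ Y) (n m : ℕ) :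
    IsBoundedMultiplierOn Y (fun ζ => diffSymbol n m (2 * Real.pi * ⟪ζ, v⟫)) (4 ^ m) := by
  have hdiff := (exp_inner hv).add ((one Y).const_smul (-1))
  have hsum := sum (Finset.range m) fun k _ => (hdiff.pow k).const_smul (logPowCoeff n k)
  convert hsum.mono ?_ using 1
  · ext ζ
    simp [_root_.diffSymbol, sub_eq_add_neg]
  · refine (Finset.sum_le_sum fun k _ => ?_).trans (sum_range_two_pow_mul_two_pow_le m)
    norm_num
    exact norm_logPowCoeff_le n k

end IsBoundedMultiplierOn

end Multipliers

section LandauKolmogorov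

variable {V : Type*} [NormedAddCommGroup V] [InnerProductSpace ℝ V] {ι : Type*} [Fintype ι]

/-- The Fourier symbol `∏ i, (2πi ⟨ζ, v i⟩) ^ β i` of the mixed derivative taken `β i` times in each
direction `v i`. -/
noncomputable def derivSymbol (v : ι → V) (β : ι → ℕ) (ζ : V) : ℂ :=
  ∏ i, ((2 * Real.pi * ⟪ζ, v i⟫ : ℝ) * Complex.I) ^ β i

lemma derivSymbol_smul (s : ι → ℝ) (v : ι → V) (β : ι → ℕ) :
    derivSymbol (fun i => s i • v i) β = ((∏ i, s i ^ β i : ℝ) : ℂ) • derivSymbol v β := by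
  ext ζ
  simp only [derivSymbol, Pi.smul_apply, smul_eq_mul, Complex.ofReal_prod,
    ← Finset.prod_mul_distrib, inner_smul_right]
  refine Finset.prod_congr rfl fun i _ => ?_
  push_cast
  ring

@[fun_prop]
lemma continuous_derivSymbol (v : ι → V) (β : ι → ℕ) : Continuous (derivSymbol v β) := by
  unfold derivSymbol
  fun_prop

lemma le_two_mul_mul_sqrt_of_forall_pos {a K M R : ℝ} (hK : 0 ≤ K) (hM : 0 ≤ M) (hR : 0 ≤ R)
    (h : ∀ t > 0, t * a ≤ K * (M + t ^ 2 * R)) : a ≤ 2 * K * √(M * R) := by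
  rcases le_total a 0 with ha | ha
  · exact ha.trans (by positivity)
  have hquad : ∀ t : ℝ, 0 ≤ K * R * (t * t) + -a * t + K * M := by
    intro t
    rcases le_or_gt t 0 with ht | ht
    · nlinarith [mul_nonneg hK hM, mul_nonneg (mul_nonneg hK hR) (mul_self_nonneg t),
        mul_nonneg ha (neg_nonneg.mpr ht)]
    · linarith [h t ht]
  have hdiscrim := discrim_le_zero hquad
  rw [discrim] at hdiscrim
  refine abs_le_of_sq_le_sq' ?_ (by positivity) |>.2
  rw [mul_pow, Real.sq_sqrt (mul_nonneg hM hR)]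
  linarith

lemma norm_prod_diffSymbol_sub_derivSymbol_le {v : ι → V} {h : ℝ} (hv : ∀ i, ‖v i‖ ≤ h)
    {β : ι → ℕ} {n : ℕ} (hn : ∑ i, β i = n) (ζ : V) :
    ‖∏ i, diffSymbol (β i) (2 * n) (2 * Real.pi * ⟪ζ, v i⟫) - derivSymbol v β ζ‖
      ≤ landauConst (Fintype.card ι) n * h ^ (2 * n) * (2 * Real.pi * ‖ζ‖) ^ (2 * n) := by
  have hθ (i : ι) : |2 * Real.pi * ⟪ζ, v i⟫| ≤ h * (2 * Real.pi * ‖ζ‖) := by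
    rw [abs_mul, abs_of_pos Real.two_pi_pos, mul_left_comm, mul_comm h]
    gcongr
    exact (abs_real_inner_le_norm _ _).trans (by gcongr; exact hv i)
  exact (norm_prod_diffSymbol_sub_prod_pow_le hθ hn).trans_eq (by rw [mul_pow h, ← mul_assoc])

variable [FiniteDimensional ℝ V] [MeasurableSpace V] [BorelSpace V]

lemma isBoundedMultiplierOn_prod_diffSymbol {v : ι → V} {Y : Set V}
    (hY : ∀ i, ∀ y ∈ Y, y + v i ∈ Y) (β : ι → ℕ) (n : ℕ) :
    IsBoundedMultiplierOn Y (fun ζ => ∏ i, diffSymbol (β i) (2 * n) (2 * Real.pi * ⟪ζ, v i⟫))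
      (landauConst (Fintype.card ι) n) := by
  have hprod := IsBoundedMultiplierOn.prod Finset.univ fun i _ =>
    IsBoundedMultiplierOn.diffSymbol (hY i) (β i) (2 * n)
  rw [Finset.prod_const, Finset.card_univ, Finset.prod_fn] at hprod
  exact hprod.mono (four_pow_two_mul_pow_le_landauConst _ n)

lemma norm_fourierInv_derivSymbol_mul_le_add {v : ι → V} {h : ℝ} (hv : ∀ i, ‖v i‖ ≤ h) {Y : Set V}
    (hY : ∀ i, ∀ y ∈ Y, y + v i ∈ Y) {β : ι → ℕ} {n : ℕ} (hn : ∑ i, β i = n) {F : V → ℂ}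
    (hF : Integrable F) (hFn : Integrable fun ζ => (2 * Real.pi * ‖ζ‖) ^ (2 * n) * ‖F ζ‖) {M : ℝ}
    (hM : ∀ y ∈ Y, ‖𝓕⁻ F y‖ ≤ M) {y : V} (hy : y ∈ Y) :
    ‖𝓕⁻ (derivSymbol v β * F) y‖ ≤ landauConst (Fintype.card ι) n *
      (M + h ^ (2 * n) * ∫ ζ, (2 * Real.pi * ‖ζ‖) ^ (2 * n) * ‖F ζ‖) := by
  set L := landauConst (Fintype.card ι) n
  set Φ : V → ℂ := fun ζ => ∏ i, diffSymbol (β i) (2 * n) (2 * Real.pi * ⟪ζ, v i⟫)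
  obtain ⟨hmain_int, hmain⟩ := isBoundedMultiplierOn_prod_diffSymbol hY β n F hF
  have herror (ζ : V) : ‖((derivSymbol v β - Φ) * F) ζ‖
      ≤ L * h ^ (2 * n) * ((2 * Real.pi * ‖ζ‖) ^ (2 * n) * ‖F ζ‖) := by
    rw [Pi.mul_apply, norm_mul, Pi.sub_apply, norm_sub_rev, ← mul_assoc]
    gcongr
    exact norm_prod_diffSymbol_sub_derivSymbol_le hv hn ζ
  have herror_int : Integrable ((derivSymbol v β - Φ) * F) := by
    refine (hFn.const_mul _).mono' ?_ (.of_forall herror)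
    have hcont : Continuous (derivSymbol v β - Φ) := by
      simp only [Φ, diffSymbol]
      fun_prop
    exact hcont.aestronglyMeasurable.mul hF.1
  calc ‖𝓕⁻ (derivSymbol v β * F) y‖
      = ‖𝓕⁻ (Φ * F) y + 𝓕⁻ ((derivSymbol v β - Φ) * F) y‖ := by
        rw [← Pi.add_apply, ← fourierInv_add_of_integrable hmain_int herror_int, ← add_mul,
          add_sub_cancel]
    _ ≤ L * M + ∫ ζ, L * h ^ (2 * n) * ((2 * Real.pi * ‖ζ‖) ^ (2 * n) * ‖F ζ‖) :=
        (norm_add_le _ _).trans <| add_le_add (hmain M hM y hy) <|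
          (norm_fourierInv_le_integral_norm _ y).trans <|
            integral_mono herror_int.norm (hFn.const_mul _) herror
    _ = _ := by rw [integral_const_mul]; ring

theorem norm_fourierInv_derivSymbol_mul_le_sqrt {v : ι → V} (hv : ∀ i, ‖v i‖ ≤ 1) {Y : Set V}
    (hY : ∀ i, ∀ t > (0 : ℝ), ∀ y ∈ Y, y + t • v i ∈ Y) {β : ι → ℕ} {n : ℕ} (hn : ∑ i, β i = n)
    {F : V → ℂ} (hF : Integrable F)
    (hFn : Integrable fun ζ => (2 * Real.pi * ‖ζ‖) ^ (2 * n) * ‖F ζ‖) {M : ℝ}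
    (hM : ∀ y ∈ Y, ‖𝓕⁻ F y‖ ≤ M) {y : V} (hy : y ∈ Y) :
    ‖𝓕⁻ (derivSymbol v β * F) y‖ ≤ 2 * landauConst (Fintype.card ι) n *
      √(M * ∫ ζ, (2 * Real.pi * ‖ζ‖) ^ (2 * n) * ‖F ζ‖) := by
  have hM0 : 0 ≤ M := (norm_nonneg _).trans (hM y hy)
  rcases eq_or_ne n 0 with rfl | hn0
  · have hβ : β = 0 := funext fun i => Finset.sum_eq_zero_iff.mp hn i (Finset.mem_univ i)
    have hone : derivSymbol v β = 1 := by ext ζ; simp [derivSymbol, hβ]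
    have hK : 1 ≤ 2 * landauConst (Fintype.card ι) 0 := by
      linarith [four_pow_two_mul_pow_le_landauConst (Fintype.card ι) 0,
        show ((4 : ℝ) ^ (2 * 0)) ^ Fintype.card ι = 1 by simp]
    rw [hone, one_mul]
    refine le_trans (Real.le_sqrt_of_sq_le ?_) (le_mul_of_one_le_left (Real.sqrt_nonneg _) hK)
    simp only [mul_zero, pow_zero, one_mul, sq]
    exact mul_le_mul (hM y hy) (norm_fourierInv_le_integral_norm F y) (norm_nonneg _) hM0
  · refine le_two_mul_mul_sqrt_of_forall_pos (landauConst_nonneg _ n) hM0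
      (integral_nonneg fun ζ => by positivity) fun t ht => ?_
    obtain ⟨h, hh, rfl⟩ : ∃ h : ℝ, 0 < h ∧ h ^ n = t :=
      ⟨t ^ (n : ℝ)⁻¹, by positivity, Real.rpow_inv_natCast_pow ht.le hn0⟩
    have hscaled := norm_fourierInv_derivSymbol_mul_le_add (v := fun i => h • v i) (h := h)
      (fun i => by
        rw [norm_smul, Real.norm_of_nonneg hh.le]
        exact mul_le_of_le_one_right hh.le (hv i))
      (fun i => hY i h hh) hn hF hFn hM hy
    rwa [derivSymbol_smul, smul_mul_assoc, fourierInv_const_smul, norm_smul,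
      Finset.prod_pow_eq_pow_sum, hn, Complex.norm_real, Real.norm_of_nonneg (by positivity),
      pow_mul' h 2 n] at hscaled

end LandauKolmogorov

section SchwartzDerivatives

open scoped SchwartzMap LineDeriv

variable {V : Type*} [NormedAddCommGroup V] [InnerProductSpace ℝ V] [FiniteDimensional ℝ V]
  [MeasurableSpace V] [BorelSpace V] {N : ℕ}

lemma fourierInv_fourier_coe (f : 𝓢(V, ℂ)) : 𝓕⁻ (𝓕 ⇑f) = f := by
  rw [← SchwartzMap.fourier_coe, ← SchwartzMap.fourierInv_coe,
    FourierTransform.fourierInv_fourier_eq]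

lemma fourier_iterate_lineDerivOp_apply (f : 𝓢(V, ℂ)) (v : V) (k : ℕ) (ζ : V) :
    𝓕 ((∂_{v} : 𝓢(V, ℂ) → 𝓢(V, ℂ))^[k] f) ζ
      = ((2 * Real.pi * ⟪ζ, v⟫ : ℝ) * Complex.I) ^ k * 𝓕 f ζ := by
  induction k with
  | zero => simp
  | succ k ih =>
    have htemperate : (fun x : V => ⟪x, v⟫).HasTemperateGrowth := by fun_prop
    rw [Function.iterate_succ_apply', SchwartzMap.fourier_lineDerivOp_eq]
    simp only [_root_.smul_apply, SchwartzMap.smulLeftCLM_apply_apply htemperate, ih,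
      smul_eq_mul, Complex.real_smul]
    push_cast
    ring

lemma exists_schwartzMap_eq_mderiv (β : Fin N → ℕ) (f : 𝓢(EuclideanSpace ℝ (Fin N), ℂ)) :
    ∃ g : 𝓢(EuclideanSpace ℝ (Fin N), ℂ), ⇑g = mderiv β f ∧
      ∀ ζ, 𝓕 g ζ = derivSymbol (fun i => EuclideanSpace.single i 1) β ζ * 𝓕 f ζ := by
  set e : Fin N → EuclideanSpace ℝ (Fin N) := fun i => EuclideanSpace.single i 1
  have hlist : ∀ l : List (Fin N), ∃ g : 𝓢(EuclideanSpace ℝ (Fin N), ℂ),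
      ⇑g = (l.map fun i => (pderivE i)^[β i]).foldr (· ∘ ·) id f ∧
      ∀ ζ, 𝓕 g ζ = (l.map fun i => ((2 * Real.pi * ⟪ζ, e i⟫ : ℝ) * Complex.I) ^ β i).prod
        * 𝓕 f ζ := by
    intro l
    induction l with
    | nil => exact ⟨f, rfl, by simp⟩
    | cons i l ih =>
      obtain ⟨g, hg, hgF⟩ := ih
      have hcoe : Function.Semiconj (⇑) (∂_{e i} : 𝓢(_, ℂ) → 𝓢(_, ℂ)) (pderivE i) := fun _ => rfl
      refine ⟨∂_{e i}^[β i] g, ?_, fun ζ => ?_⟩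
      · rw [(hcoe.iterate_right (β i)).eq g, hg]
        rfl
      · rw [fourier_iterate_lineDerivOp_apply, hgF, List.map_cons, List.prod_cons,
          ← mul_assoc]
  obtain ⟨g, hg, hgF⟩ := hlist (List.finRange N)
  refine ⟨g, by rw [hg, mderiv, List.ofFn_eq_map], fun ζ => ?_⟩
  rw [hgF, ← List.ofFn_eq_map, List.prod_ofFn, derivSymbol]

lemma mderiv_eq_fourierInv (β : Fin N → ℕ) (f : 𝓢(EuclideanSpace ℝ (Fin N), ℂ)) :
    mderiv β f = 𝓕⁻ (derivSymbol (fun i => EuclideanSpace.single i 1) β * 𝓕 ⇑f) := by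
  obtain ⟨g, hg, hgF⟩ := exists_schwartzMap_eq_mderiv β f
  have hsymbol : derivSymbol (fun i => EuclideanSpace.single i 1) β * 𝓕 ⇑f = 𝓕 ⇑g :=
    (funext hgF).symm
  rw [hsymbol, fourierInv_fourier_coe, hg]

lemma exists_abs_eq_one_and_mul_eq_abs {ι : Type*} (a : ι → ℝ) :
    ∃ σ : ι → ℝ, ∀ i, |σ i| = 1 ∧ σ i * a i = |a i| := by
  refine ⟨fun i => if 0 ≤ a i then 1 else -1, fun i => ?_⟩
  dsimp only
  split_ifs with h
  · simp [abs_of_nonneg h]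
  · simp [abs_of_neg (not_le.mp h)]

theorem norm_mderiv_le (f : 𝓢(EuclideanSpace ℝ (Fin N), ℂ)) {x : EuclideanSpace ℝ (Fin N)} {M : ℝ}
    (hM : ∀ y : EuclideanSpace ℝ (Fin N), (∀ i, |x i| ≤ |y i|) → ‖f y‖ ≤ M) {β : Fin N → ℕ} {n : ℕ}
    (hn : ∑ i, β i = n) :
    ‖mderiv β f x‖ ≤ 2 * landauConst N n *
      √(M * ∫ ζ, (2 * Real.pi * ‖ζ‖) ^ (2 * n) * ‖𝓕 ⇑f ζ‖) := by
  obtain ⟨σ, hσ⟩ := exists_abs_eq_one_and_mul_eq_abs fun i => x i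
  have hσsq (i : Fin N) : σ i * σ i = 1 := by rw [← abs_mul_abs_self, (hσ i).1, one_mul]
  set Y : Set (EuclideanSpace ℝ (Fin N)) := {y | ∀ i, |x i| ≤ σ i * y i}
  have hY : ∀ i, ∀ t > (0 : ℝ), ∀ y ∈ Y, y + t • σ i • EuclideanSpace.single i 1 ∈ Y := by
    intro i t ht y hy j
    refine (hy j).trans ?_
    rcases eq_or_ne j i with rfl | hji
    · simp only [PiLp.add_apply, PiLp.smul_apply, PiLp.single_apply, if_true, smul_eq_mul]
      nlinarith [hσsq j]
    · simp [hji]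
  have hbound : ∀ y ∈ Y, ‖𝓕⁻ (𝓕 ⇑f) y‖ ≤ M := by
    intro y hy
    rw [fourierInv_fourier_coe]
    refine hM y fun i => (hy i).trans ((le_abs_self _).trans_eq ?_)
    rw [abs_mul, (hσ i).1, one_mul]
  have hmoment : Integrable fun ζ => (2 * Real.pi * ‖ζ‖) ^ (2 * n) * ‖𝓕 ⇑f ζ‖ := by
    simp_rw [mul_pow _ ‖_‖, mul_assoc]
    exact ((𝓕 f).integrable_pow_mul volume (2 * n)).const_mul _
  have hnorm (i : Fin N) : ‖σ i • EuclideanSpace.single i (1 : ℝ)‖ ≤ 1 := by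
    simp [norm_smul, (hσ i).1]
  have h := norm_fourierInv_derivSymbol_mul_le_sqrt hnorm hY hn (𝓕 f).integrable hmoment hbound
    (y := x) fun i => (hσ i).2.ge
  have hunit : ‖((∏ i, σ i ^ β i : ℝ) : ℂ)‖ = 1 := by
    simp [(hσ _).1]
  rwa [derivSymbol_smul, smul_mul_assoc, fourierInv_const_smul, norm_smul, hunit, one_mul,
    ← mderiv_eq_fourierInv, Fintype.card_fin] at h

end SchwartzDerivatives

section GaussianBounds

lemma pow_mul_exp_neg_mul_sq_le {c : ℝ} (hc : 0 < c) (n : ℕ) (r : ℝ) :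
    r ^ (2 * n) * Real.exp (-c * r ^ 2)
      ≤ 2 ^ n * n.factorial / c ^ n * Real.exp (-(c / 2) * r ^ 2) := by
  have hexp := Real.pow_div_factorial_le_exp (x := c / 2 * r ^ 2) (by positivity) n
  rw [div_le_iff₀ (by positivity)] at hexp
  calc r ^ (2 * n) * Real.exp (-c * r ^ 2)
      = 2 ^ n / c ^ n * (c / 2 * r ^ 2) ^ n * Real.exp (-c * r ^ 2) := by
        rw [← div_pow, ← mul_pow, pow_mul]
        congr 2
        field_simp
    _ ≤ 2 ^ n / c ^ n * (Real.exp (c / 2 * r ^ 2) * n.factorial) * Real.exp (-c * r ^ 2) := by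
        gcongr
    _ = 2 ^ n * n.factorial / c ^ n * (Real.exp (c / 2 * r ^ 2) * Real.exp (-c * r ^ 2)) := by ring
    _ = 2 ^ n * n.factorial / c ^ n * Real.exp (-(c / 2) * r ^ 2) := by
        rw [← Real.exp_add]
        ring_nf

section Moments

variable {V : Type*} [NormedAddCommGroup V] [InnerProductSpace ℝ V] [FiniteDimensional ℝ V]
  [MeasurableSpace V] [BorelSpace V]

lemma integrable_exp_neg_mul_sq_norm {b : ℝ} (hb : 0 < b) :
    Integrable fun v : V => Real.exp (-b * ‖v‖ ^ 2) := by
  have h := GaussianFourier.integrable_cexp_neg_mul_sq_norm_add (V := V) (b := b) (by simpa) 0 0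
  refine h.norm.congr (.of_forall fun v => ?_)
  simp [Complex.norm_exp, ← Complex.ofReal_pow]

lemma integral_exp_neg_two_pi_sq_mul_le {c : ℝ} (hc : 0 < c) :
    ∫ v : V, Real.exp (-(2 * Real.pi ^ 2 * c) * ‖v‖ ^ 2)
      ≤ (c ^ (Module.finrank ℝ V / 2 : ℝ))⁻¹ := by
  rw [GaussianFourier.integral_rexp_neg_mul_sq_norm (by positivity),
    ← Real.inv_rpow hc.le]
  gcongr
  rw [div_le_iff₀ (by positivity)]
  field_simp
  nlinarith [Real.pi_gt_three]

lemma integral_pow_mul_norm_le_of_norm_le_exp {E : Type*} [NormedAddCommGroup E] {F : V → E}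
    {c C : ℝ} (hc : 0 < c) (hF : ∀ ζ, ‖F ζ‖ ≤ C * Real.exp (-c * (2 * Real.pi * ‖ζ‖) ^ 2))
    (n : ℕ) :
    ∫ ζ, (2 * Real.pi * ‖ζ‖) ^ (2 * n) * ‖F ζ‖
      ≤ C * (2 ^ n * n.factorial) / c ^ (n + Module.finrank ℝ V / 2 : ℝ) := by
  have hC : 0 ≤ C := by simpa using (norm_nonneg _).trans (hF 0)
  have hpointwise (ζ : V) : (2 * Real.pi * ‖ζ‖) ^ (2 * n) * ‖F ζ‖
      ≤ C * (2 ^ n * n.factorial / c ^ n) * Real.exp (-(2 * Real.pi ^ 2 * c) * ‖ζ‖ ^ 2) :=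
    calc (2 * Real.pi * ‖ζ‖) ^ (2 * n) * ‖F ζ‖
        ≤ (2 * Real.pi * ‖ζ‖) ^ (2 * n) * (C * Real.exp (-c * (2 * Real.pi * ‖ζ‖) ^ 2)) := by
          gcongr
          exact hF ζ
      _ = C * ((2 * Real.pi * ‖ζ‖) ^ (2 * n) * Real.exp (-c * (2 * Real.pi * ‖ζ‖) ^ 2)) :=
          mul_left_comm _ _ _
      _ ≤ C * (2 ^ n * n.factorial / c ^ n * Real.exp (-(c / 2) * (2 * Real.pi * ‖ζ‖) ^ 2)) := by
          exact mul_le_mul_of_nonneg_left (pow_mul_exp_neg_mul_sq_le hc n _) hC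
      _ = _ := by ring_nf
  calc ∫ ζ, (2 * Real.pi * ‖ζ‖) ^ (2 * n) * ‖F ζ‖
      ≤ ∫ ζ : V, C * (2 ^ n * n.factorial / c ^ n)
          * Real.exp (-(2 * Real.pi ^ 2 * c) * ‖ζ‖ ^ 2) :=
        integral_mono_of_nonneg (.of_forall fun ζ => by positivity)
          ((integrable_exp_neg_mul_sq_norm (by positivity)).const_mul _) (.of_forall hpointwise)
    _ ≤ C * (2 ^ n * n.factorial / c ^ n) * (c ^ (Module.finrank ℝ V / 2 : ℝ))⁻¹ := by
        rw [integral_const_mul]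
        gcongr
        exact integral_exp_neg_two_pi_sq_mul_le hc
    _ = _ := by
        rw [Real.rpow_add hc, Real.rpow_natCast]
        field_simp

end Moments

lemma prod_sq_pow_le_mul_exp {ι : Type*} [Fintype ι] {c : ℝ} (hc : 0 < c) (α : ι → ℕ)
    (x : EuclideanSpace ℝ ι) :
    ∏ i, (x i ^ 2) ^ α i
      ≤ (∏ i, (α i).factorial : ℕ) / c ^ (∑ i, α i) * Real.exp (c * ‖x‖ ^ 2) := by
  rw [EuclideanSpace.real_norm_sq_eq, Finset.mul_sum, Real.exp_sum, ← Finset.prod_pow_eq_pow_sum,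
    Nat.cast_prod, ← Finset.prod_div_distrib, ← Finset.prod_mul_distrib]
  refine Finset.prod_le_prod (fun i _ => by positivity) fun i _ => ?_
  have hexp := Real.pow_div_factorial_le_exp (x := c * x i ^ 2) (by positivity) (α i)
  rw [div_le_iff₀ (by positivity), mul_pow] at hexp
  rw [div_mul_eq_mul_div, le_div_iff₀ (by positivity)]
  linarith

lemma norm_prod_pow_le_sqrt {ι : Type*} [Fintype ι] {c : ℝ} (hc : 0 < c) (α : ι → ℕ)
    (x : EuclideanSpace ℝ ι) :
    ‖∏ i, (x i : ℂ) ^ α i‖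
      ≤ √((∏ i, (α i).factorial : ℕ) / c ^ (∑ i, α i) * Real.exp (c * ‖x‖ ^ 2)) := by
  refine Real.le_sqrt_of_sq_le ((prod_sq_pow_le_mul_exp hc α x).trans_eq' ?_)
  rw [norm_prod, ← Finset.prod_pow]
  refine Finset.prod_congr rfl fun i _ => ?_
  rw [norm_pow, Complex.norm_real, Real.norm_eq_abs, pow_right_comm |x i|, sq_abs]

lemma factorial_sum_le {ι : Type*} [Fintype ι] (β : ι → ℕ) :
    (∑ i, β i).factorial ≤ Fintype.card ι ^ (∑ i, β i) * ∏ i, (β i).factorial := by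
  classical
  have hmulti : Nat.multinomial Finset.univ β ≤ Fintype.card ι ^ (∑ i, β i) := by
    have hsum := Finset.sum_pow_eq_sum_piAntidiag Finset.univ (fun _ : ι => (1 : ℕ)) (∑ i, β i)
    simp only [Finset.sum_const, Finset.card_univ, smul_eq_mul, mul_one, one_pow,
      Finset.prod_const_one, Nat.cast_id] at hsum
    rw [hsum]
    exact Finset.single_le_sum (f := fun k => Nat.multinomial Finset.univ k)
      (fun _ _ => Nat.zero_le _) (by simp [Finset.mem_piAntidiag])
  rw [← Nat.multinomial_spec, mul_comm]
  exact Nat.mul_le_mul_right _ hmulti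

end GaussianBounds

section Uncertainty

open scoped SchwartzMap

variable {N : ℕ}

lemma fourier_apply_eq_integral (f : EuclideanSpace ℝ (Fin N) → ℂ)
    (ζ : EuclideanSpace ℝ (Fin N)) :
    𝓕 f ζ = ∫ x : EuclideanSpace ℝ (Fin N),
      Complex.exp (-(Complex.I * ∑ i, (x i : ℂ) * (((2 * Real.pi) • ζ) i : ℂ))) * f x := by
  rw [Real.fourier_eq']
  refine integral_congr_ae (.of_forall fun x => ?_)
  simp only [smul_eq_mul, PiLp.inner_apply, PiLp.smul_apply, RCLike.inner_apply, conj_trivial,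
    Finset.mul_sum, Complex.ofReal_sum, Finset.sum_mul, ← Finset.sum_neg_distrib]
  congr! 3
  push_cast
  ring

lemma norm_mderiv_le_of_gaussian {c₁ c₂ C₁ C₂ : ℝ} (hc₁ : 0 < c₁) (hc₂ : 0 < c₂)
    {f : 𝓢(EuclideanSpace ℝ (Fin N), ℂ)} (hf : ∀ x, ‖f x‖ ≤ C₁ * Real.exp (-c₁ * ‖x‖ ^ 2))
    (hF : ∀ ζ, ‖𝓕 ⇑f ζ‖ ≤ C₂ * Real.exp (-c₂ * (2 * Real.pi * ‖ζ‖) ^ 2))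
    {β : Fin N → ℕ} {n : ℕ} (hn : ∑ i, β i = n) (x : EuclideanSpace ℝ (Fin N)) :
    ‖mderiv β f x‖ ≤ 2 * landauConst N n * √(C₁ * Real.exp (-c₁ * ‖x‖ ^ 2) *
      (C₂ * (2 ^ n * n.factorial) / c₂ ^ (n + N / 2 : ℝ))) := by
  have hC₁ : 0 ≤ C₁ := by simpa using (norm_nonneg _).trans (hf 0)
  have hM : ∀ y : EuclideanSpace ℝ (Fin N), (∀ i, |x i| ≤ |y i|) →
      ‖f y‖ ≤ C₁ * Real.exp (-c₁ * ‖x‖ ^ 2) := by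
    intro y hy
    have hxy : ‖x‖ ^ 2 ≤ ‖y‖ ^ 2 := by
      simp only [EuclideanSpace.real_norm_sq_eq]
      exact Finset.sum_le_sum fun i _ => sq_le_sq.mpr (hy i)
    refine (hf y).trans (mul_le_mul_of_nonneg_left (Real.exp_le_exp.mpr ?_) hC₁)
    nlinarith
  have hmoment := integral_pow_mul_norm_le_of_norm_le_exp hc₂ hF n
  rw [finrank_euclideanSpace_fin] at hmoment
  refine (norm_mderiv_le f hM hn).trans ?_
  gcongr
  exact mul_nonneg zero_le_two (landauConst_nonneg N n)

lemma two_mul_landauConst_mul_pow_le (N A n : ℕ) :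
    2 * landauConst N n * ((N : ℝ) + 1) ^ n ≤ (4 * (N + 1) * 16 ^ (N + 1)) ^ (1 + A + n) := by
  set K : ℝ := 4 * (N + 1) * 16 ^ (N + 1)
  have h16 : (1 : ℝ) ≤ 16 ^ (N + 1) := one_le_pow₀ (by norm_num)
  have hN : (1 : ℝ) ≤ N + 1 := le_add_of_nonneg_left N.cast_nonneg
  have hK : 4 * ((N : ℝ) + 1) ≤ K := le_mul_of_one_le_right (by linarith only [hN]) h16
  have hK' : 16 ^ (N + 1) * ((N : ℝ) + 1) ≤ K := by
    rw [mul_comm]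
    exact mul_le_mul_of_nonneg_right (by linarith only [hN]) (by positivity)
  calc 2 * landauConst N n * ((N : ℝ) + 1) ^ n
      = 4 * ((N : ℝ) + 1) * (16 ^ (N + 1) * ((N : ℝ) + 1)) ^ n := by
        rw [landauConst, mul_pow, ← pow_mul]; ring
    _ ≤ K * K ^ n := by gcongr
    _ = K ^ (1 + n) := by rw [pow_add, pow_one]
    _ ≤ K ^ (1 + A + n) := pow_le_pow_right₀ (by linarith only [hN, hK]) (by omega)

lemma two_pow_mul_factorial_sum_le (β : Fin N → ℕ) :
    (2 ^ (∑ i, β i) * (∑ i, β i).factorial : ℝ)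
      ≤ (((N : ℝ) + 1) ^ (∑ i, β i)) ^ 2 * (∏ i, (β i).factorial : ℕ) := by
  set n := ∑ i, β i
  have hfactorial : (n.factorial : ℝ) ≤ N ^ n * (∏ i, (β i).factorial : ℕ) := by
    exact_mod_cast (factorial_sum_le β).trans_eq (by rw [Fintype.card_fin])
  calc (2 ^ n * n.factorial : ℝ) ≤ 2 ^ n * (N ^ n * (∏ i, (β i).factorial : ℕ)) := by gcongr
    _ = (2 * N) ^ n * (∏ i, (β i).factorial : ℕ) := by rw [mul_pow, mul_assoc]
    _ ≤ (((N : ℝ) + 1) ^ 2) ^ n * (∏ i, (β i).factorial : ℕ) := by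
        gcongr
        nlinarith [sq_nonneg (N : ℝ)]
    _ = _ := by rw [pow_right_comm]

lemma div_rpow_le_div_rpow_of_exponent_ge {a c s t : ℝ} (ha : 0 ≤ a) (hc : 0 < c) (hc' : c ≤ 1)
    (hst : s ≤ t) : a / c ^ s ≤ a / c ^ t :=
  div_le_div_of_nonneg_left ha (Real.rpow_pos_of_pos hc t)
    (Real.rpow_le_rpow_of_exponent_ge hc hc' hst)

lemma div_pow_mul_div_rpow_le {c₁ c₂ C₁ C₂ : ℝ} (hc₁ : 0 < c₁) (hc₁' : c₁ ≤ 1) (hc₂ : 0 < c₂)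
    (hc₂' : c₂ ≤ 1) (hC₁ : 0 ≤ C₁) (hC₂ : 0 ≤ C₂) (N A n : ℕ) :
    C₁ / c₁ ^ A * (C₂ / c₂ ^ (n + N / 2 : ℝ)) ≤
      C₁ / c₁ ^ (A + N / 4 : ℝ) * (C₂ / c₂ ^ (n + (N / 2 : ℕ) + 1 + N / 4 : ℝ)) := by
  have hN : (0 : ℝ) ≤ N / 4 := by positivity
  have hhalf : (N : ℝ) ≤ 2 * (N / 2 : ℕ) + 2 := by exact_mod_cast (by omega : N ≤ 2 * (N / 2) + 2)
  rw [← Real.rpow_natCast c₁ A]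
  refine mul_le_mul (div_rpow_le_div_rpow_of_exponent_ge hC₁ hc₁ hc₁' (by linarith only [hN]))
    (div_rpow_le_div_rpow_of_exponent_ge hC₂ hc₂ hc₂' ?_) (by positivity) (by positivity)
  linarith only [hN, hhalf]

theorem statement_13_general (N : ℕ) :
    ∃ C > (1 : ℝ), ∀ c₁ c₂ C₁ C₂ : ℝ, 0 < c₁ → 0 < c₂ →
      ∀ f : 𝓢(EuclideanSpace ℝ (Fin N), ℂ),
        (∀ x, ‖f x‖ ≤ C₁ * Real.exp (-c₁ * ‖x‖ ^ 2)) →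
        (∀ ξ : EuclideanSpace ℝ (Fin N),
          ‖∫ x : EuclideanSpace ℝ (Fin N),
              Complex.exp (-(Complex.I * ∑ i, (x i : ℂ) * (ξ i : ℂ))) * f x‖
            ≤ C₂ * Real.exp (-c₂ * ‖ξ‖ ^ 2)) →
        ∀ α β : Fin N → ℕ, ∀ x : EuclideanSpace ℝ (Fin N),
          ‖(∏ i, (x i : ℂ) ^ α i) * mderiv β f x‖
            ≤ C ^ (1 + (∑ i, α i) + ∑ i, β i) *
                √(C₁ / c₁ ^ (∑ i, α i) * (C₂ / c₂ ^ ((∑ i, β i : ℕ) + N / 2 : ℝ))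
                  * (∏ i, (α i).factorial : ℕ) * (∏ i, (β i).factorial : ℕ)) := by
  have h16 : (1 : ℝ) ≤ 16 ^ (N + 1) := one_le_pow₀ (by norm_num)
  refine ⟨4 * (N + 1) * 16 ^ (N + 1), by nlinarith [N.cast_nonneg (α := ℝ)], ?_⟩
  intro c₁ c₂ C₁ C₂ hc₁ hc₂ f hf hfhat α β x
  have hF (ζ) : ‖𝓕 ⇑f ζ‖ ≤ C₂ * Real.exp (-c₂ * (2 * Real.pi * ‖ζ‖) ^ 2) := by
    rw [fourier_apply_eq_integral]
    refine (hfhat _).trans_eq ?_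
    rw [norm_smul, Real.norm_of_nonneg Real.two_pi_pos.le]
  have hC₁ : 0 ≤ C₁ := by simpa using (norm_nonneg _).trans (hf 0)
  have hC₂ : 0 ≤ C₂ := by simpa using (norm_nonneg _).trans (hF 0)
  have hmonomial := norm_prod_pow_le_sqrt hc₁ α x
  have hderiv := norm_mderiv_le_of_gaussian hc₁ hc₂ hf hF rfl x (β := β)
  have hfactorial := two_pow_mul_factorial_sum_le β
  have hconst := two_mul_landauConst_mul_pow_le N (∑ i, α i) (∑ i, β i)
  have hL := landauConst_nonneg N (∑ i, β i)
  set n := ∑ i, β i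
  set A := ∑ i, α i
  set W := C₁ / c₁ ^ A * (C₂ / c₂ ^ (n + N / 2 : ℝ)) * (∏ i, (α i).factorial : ℕ)
  have hexp : Real.exp (c₁ * ‖x‖ ^ 2) * Real.exp (-c₁ * ‖x‖ ^ 2) = 1 := by
    rw [← Real.exp_add, neg_mul, add_neg_cancel, Real.exp_zero]
  rw [norm_mul]
  calc _ ≤ _ := mul_le_mul hmonomial hderiv (norm_nonneg _) (Real.sqrt_nonneg _)
    _ = 2 * landauConst N n * √(W * (2 ^ n * n.factorial)) := by
        rw [mul_left_comm, ← Real.sqrt_mul (by positivity)]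
        congr 2
        linear_combination W * (2 ^ n * n.factorial) * hexp
    _ ≤ 2 * landauConst N n * √(W * (((N + 1) ^ n) ^ 2 * (∏ i, (β i).factorial : ℕ))) := by
        gcongr
    _ = 2 * landauConst N n * (N + 1) ^ n * √(W * (∏ i, (β i).factorial : ℕ)) := by
        rw [mul_left_comm, Real.sqrt_mul (by positivity), Real.sqrt_sq (by positivity),
          ← mul_assoc]
    _ ≤ _ := by gcongr

end Uncertainty

/-- There exists `C > 1` depending only on `N` such that for all
`0 < c₁ < 1`, `0 < c₂ < 1`, `C₁, C₂ > 0` and every Schwartz function `f` with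
`|f(x)| ≤ C₁ e^{-c₁|x|²}` and `|f̂(ξ)| ≤ C₂ e^{-c₂|ξ|²}`, one has for all `α, β`:
`|x^α ∂_x^β f(x)| ≤ C^{1+|α|+|β|} [C₁ c₁^{-(|α|+N/4)} C₂ c₂^{-(|β|+⌊N/2⌋+1+N/4)} α! β!]^{1/2}`. -/
theorem statement_13 (N : ℕ) (hN : 1 ≤ N) :
    ∃ C > (1 : ℝ),
      ∀ c₁ c₂ C₁ C₂ : ℝ, 0 < c₁ → c₁ < 1 → 0 < c₂ → c₂ < 1 → 0 < C₁ → 0 < C₂ →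
        ∀ f : SchwartzMap (EuclideanSpace ℝ (Fin N)) ℂ,
          (∀ x, ‖f x‖ ≤ C₁ * Real.exp (-c₁ * ‖x‖ ^ 2)) →
          (∀ ξ : EuclideanSpace ℝ (Fin N),
            ‖∫ x : EuclideanSpace ℝ (Fin N),
                Complex.exp (-(Complex.I * ∑ i, (x i : ℂ) * (ξ i : ℂ))) * f x‖
              ≤ C₂ * Real.exp (-c₂ * ‖ξ‖ ^ 2)) →
          ∀ α β : Fin N → ℕ, ∀ x : EuclideanSpace ℝ (Fin N),
            ‖(∏ i, (x i : ℂ) ^ α i) * mderiv β (fun y => f y) x‖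
              ≤ C ^ (1 + (∑ i, α i) + ∑ i, β i) *
                  Real.sqrt (C₁ / c₁ ^ (((∑ i, α i : ℕ) : ℝ) + N / 4)
                    * (C₂ / c₂ ^ (((∑ i, β i : ℕ) : ℝ) + ((N / 2 : ℕ) : ℝ) + 1 + (N : ℝ) / 4))
                    * (∏ i, Nat.factorial (α i)) * (∏ i, Nat.factorial (β i))) := by
  obtain ⟨C, hC, hbound⟩ := statement_13_general N
  refine ⟨C, hC, fun c₁ c₂ C₁ C₂ hc₁ hc₁' hc₂ hc₂' hC₁ hC₂ f hf hfhat α β x =>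
    (hbound c₁ c₂ C₁ C₂ hc₁ hc₂ f hf hfhat α β x).trans ?_⟩
  gcongr ?_ * √(?_ * _ * _)
  exact div_pow_mul_div_rpow_le hc₁ hc₁'.le hc₂ hc₂'.le hC₁.le hC₂.le N _ _
end

section
/- Let N ≥ 1, let 0 < c₁ < 1, 0 < c₂ < 1, C₁ > 0, C₂ > 0, and let f ∈ 𝒮(ℝ^N) be a Schwartz function satisfying |f(x)| ≤ C₁ e^{−c₁|x|²} for all x ∈ ℝ^N and |f̂(ξ)| ≤ C₂ e^{−c₂|ξ|²} for all ξ ∈ ℝ^N. Then for all multi-indices α, β ∈ ℕ^N: ‖x^α ∂_x^β f(x)‖²_{L²(ℝ^N)} ≤ 2^{3|α|+3|β|−N/2} · C₁ c₁^{−(|α|+N/4)} · C₂ c₂^{−(|β|+N/4)} · α! · β!. -/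
open MeasureTheory
open scoped ENNReal

/-! By symmetry of multiplication by `x ^ α`, the square `‖x^α ∂^β f‖²` is the `L²` pairing of
`x^{2α} ∂^β f` with `∂^β f`. Integrating by parts one derivative at a time moves `∂^β` from the left
factor to the right one; the derivatives falling on the weight leave a sum over `γ ≤ β` of binomial
and falling-factorial multiples of the pairings of `x^{2α-γ} f` with `∂^{2β-γ} f`. Cauchy–Schwarz
bounds each pairing by `‖x^{2α-γ} f‖ ‖∂^{2β-γ} f‖`, where the first norm is controlled by the
Gaussian decay of `f` and the second, by Plancherel, by that of its Fourier transform. The bounds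
are products over the coordinates, so the combinatorial estimate is one-dimensional: lowering both
exponents by `γ` multiplies the bound by `(c₁c₂)^{γ/2} ≤ 1` and gains a ratio of factorials, which
absorbs the falling factorial up to a power of `2`. -/

open Complex (I)
open scoped FourierTransform InnerProductSpace LineDeriv Nat Real SchwartzMap

section Monomials

variable {ι : Type*} [Fintype ι]

/-- The real monomial function `x ^ a = ∏ i, x i ^ a i` attached to a multi-index `a`. -/
noncomputable def coordMonomial (a : ι → ℕ) (x : EuclideanSpace ℝ ι) : ℝ :=
  ∏ i, x i ^ a i

@[fun_prop]
theorem hasTemperateGrowth_coordMonomial (a : ι → ℕ) : (coordMonomial a).HasTemperateGrowth := by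
  classical
  have hprod (s : Finset ι) :
      (fun x : EuclideanSpace ℝ ι ↦ ∏ i ∈ s, x i ^ a i).HasTemperateGrowth := by
    induction s using Finset.induction_on with
    | empty => simpa only [Finset.prod_empty] using Function.HasTemperateGrowth.const 1
    | insert i s hi ih =>
      simp only [Finset.prod_insert hi]
      exact ((EuclideanSpace.proj (𝕜 := ℝ) i).hasTemperateGrowth.pow (a i)).mul ih
  exact hprod Finset.univ

theorem coordMonomial_add (a b : ι → ℕ) :
    coordMonomial (a + b) = coordMonomial a * coordMonomial b := by
  ext x
  simp only [coordMonomial, Pi.mul_apply, Pi.add_apply, pow_add, Finset.prod_mul_distrib]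

theorem hasLineDerivAt_coordMonomial [DecidableEq ι] (a : ι → ℕ) (i : ι)
    (x : EuclideanSpace ℝ ι) :
    HasLineDerivAt ℝ (coordMonomial a) (a i * coordMonomial (a - Pi.single i 1) x) x
      (EuclideanSpace.single i 1) := by
  have hline (t : ℝ) : coordMonomial a (x + t • EuclideanSpace.single i 1) =
      (x i + t) ^ a i * ∏ j ∈ {i}ᶜ, x j ^ a j := by
    rw [coordMonomial, Fintype.prod_eq_mul_prod_compl i]
    congr 1
    · simp
    · exact Finset.prod_congr rfl fun j hj ↦ by simp_all
  have hpred : coordMonomial (a - Pi.single i 1) x =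
      x i ^ (a i - 1) * ∏ j ∈ {i}ᶜ, x j ^ a j := by
    rw [coordMonomial, Fintype.prod_eq_mul_prod_compl i]
    congr 1
    · simp
    · exact Finset.prod_congr rfl fun j hj ↦ by simp_all
  have hpow : HasDerivAt (fun t : ℝ ↦ (x i + t) ^ a i) (a i * x i ^ (a i - 1)) 0 := by
    simpa using ((hasDerivAt_id (0 : ℝ)).const_add (x i)).fun_pow (a i)
  simpa only [HasLineDerivAt, hline, hpred, mul_assoc] using
    hpow.mul_const (∏ j ∈ {i}ᶜ, x j ^ a j)

theorem coordMonomial_sq_mul_exp_le (a : ι → ℕ) {c : ℝ} (hc : 0 < c) (x : EuclideanSpace ℝ ι) :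
    coordMonomial a x ^ 2 * Real.exp (-c * ‖x‖ ^ 2) ≤ ∏ i, ((a i)! / c ^ a i : ℝ) := by
  rw [coordMonomial, EuclideanSpace.norm_sq_eq, Finset.mul_sum, Real.exp_sum, ← Finset.prod_pow,
    ← Finset.prod_mul_distrib]
  refine Finset.prod_le_prod (fun _ _ ↦ by positivity) fun i _ ↦ ?_
  have hexp := Real.pow_div_factorial_le_exp (c * x i ^ 2) (by positivity) (a i)
  rw [div_le_iff₀ (by positivity)] at hexp
  rw [Real.norm_eq_abs, sq_abs, neg_mul, Real.exp_neg, ← div_eq_mul_inv,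
    div_le_div_iff₀ (Real.exp_pos _) (by positivity)]
  calc (x i ^ a i) ^ 2 * c ^ a i = (c * x i ^ 2) ^ a i := by ring
    _ ≤ (a i)! * Real.exp (c * x i ^ 2) := hexp.trans_eq (mul_comm _ _)

variable {F : Type*} [NormedAddCommGroup F] [NormedSpace ℝ F]

/-- Multiplication by the monomial `x ^ a` as an operator on Schwartz space. -/
noncomputable def mulMonomial (a : ι → ℕ) :
    𝓢(EuclideanSpace ℝ ι, F) →L[ℝ] 𝓢(EuclideanSpace ℝ ι, F) :=
  SchwartzMap.smulLeftCLM F (coordMonomial a)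

@[simp]
theorem mulMonomial_apply (a : ι → ℕ) (f : 𝓢(EuclideanSpace ℝ ι, F)) (x : EuclideanSpace ℝ ι) :
    mulMonomial a f x = coordMonomial a x • f x :=
  SchwartzMap.smulLeftCLM_apply_apply (by fun_prop) f x

theorem mulMonomial_add (a b : ι → ℕ) (f : 𝓢(EuclideanSpace ℝ ι, F)) :
    mulMonomial (a + b) f = mulMonomial a (mulMonomial b f) := by
  ext x
  simp only [mulMonomial_apply, coordMonomial_add, Pi.mul_apply, mul_smul]

theorem lineDerivOp_mulMonomial [DecidableEq ι] (a : ι → ℕ) (i : ι)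
    (f : 𝓢(EuclideanSpace ℝ ι, F)) :
    ∂_{EuclideanSpace.single i (1 : ℝ)} (mulMonomial a f) =
      (a i : ℝ) • mulMonomial (a - Pi.single i 1) f +
        mulMonomial a (∂_{EuclideanSpace.single i (1 : ℝ)} f) := by
  ext x
  have hf := (f.hasFDerivAt x).hasLineDerivAt (EuclideanSpace.single i 1)
  have hprod : HasLineDerivAt ℝ (mulMonomial a f)
      (coordMonomial a x • fderiv ℝ f x (EuclideanSpace.single i 1) +
        (a i * coordMonomial (a - Pi.single i 1) x) • f x) x (EuclideanSpace.single i 1) := by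
    simpa only [HasLineDerivAt, mulMonomial_apply, zero_smul, add_zero] using
      HasDerivAt.fun_smul (hasLineDerivAt_coordMonomial a i x) hf
  rw [SchwartzMap.lineDerivOp_apply, hprod.lineDeriv, add_comm, mul_smul]
  simp only [add_apply, smul_apply, mulMonomial_apply, SchwartzMap.lineDerivOp_apply_eq_fderiv]

end Monomials

section L2Adjoints

variable {H : Type*} [NormedAddCommGroup H] [InnerProductSpace ℂ H]

theorem inner_toLp_lineDerivOp_left {V : Type*} [NormedAddCommGroup V] [InnerProductSpace ℝ V]
    [FiniteDimensional ℝ V] [MeasurableSpace V] [BorelSpace V] (f g : 𝓢(V, H)) (v : V) :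
    ⟪(∂_{v} f).toLp 2, g.toLp 2⟫_ℂ = -⟪f.toLp 2, (∂_{v} g).toLp 2⟫_ℂ := by
  simp only [SchwartzMap.inner_toL2_toL2_eq]
  have hparts := SchwartzMap.integral_bilinear_lineDerivOp_right_eq_neg_left (μ := volume) f g
    (isBoundedBilinearMap_inner (𝕜 := ℂ) (E := H)).toContinuousLinearMap v
  exact (neg_eq_iff_eq_neg.mpr hparts).symm

variable {ι : Type*} [Fintype ι]

theorem inner_toLp_mulMonomial_left (a : ι → ℕ) (f g : 𝓢(EuclideanSpace ℝ ι, H)) :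
    ⟪(mulMonomial a f).toLp 2, g.toLp 2⟫_ℂ = ⟪f.toLp 2, (mulMonomial a g).toLp 2⟫_ℂ := by
  simp only [SchwartzMap.inner_toL2_toL2_eq, mulMonomial_apply, inner_smul_left_eq_smul,
    inner_smul_right_eq_smul]

theorem norm_toLp_mulMonomial_sq (a : ι → ℕ) (f : 𝓢(EuclideanSpace ℝ ι, H)) :
    ‖(mulMonomial a f).toLp 2‖ ^ 2 = ‖⟪(mulMonomial (2 • a) f).toLp 2, f.toLp 2⟫_ℂ‖ := by
  rw [two_nsmul, mulMonomial_add, inner_toLp_mulMonomial_left, inner_self_eq_norm_sq_to_K]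
  simp

theorem inner_toLp_mulMonomial_lineDerivOp_left [DecidableEq ι] (a : ι → ℕ) (i : ι)
    (f g : 𝓢(EuclideanSpace ℝ ι, H)) :
    ⟪(mulMonomial a (∂_{EuclideanSpace.single i (1 : ℝ)} f)).toLp 2, g.toLp 2⟫_ℂ =
      -(a i * ⟪(mulMonomial (a - Pi.single i 1) f).toLp 2, g.toLp 2⟫_ℂ +
        ⟪(mulMonomial a f).toLp 2, (∂_{EuclideanSpace.single i (1 : ℝ)} g).toLp 2⟫_ℂ) := by
  rw [inner_toLp_mulMonomial_left, inner_toLp_lineDerivOp_left, lineDerivOp_mulMonomial]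
  simp only [← SchwartzMap.toLpCLM_apply (𝕜 := ℝ), map_add, map_smul, inner_add_right,
    inner_smul_right_eq_smul]
  simp only [SchwartzMap.toLpCLM_apply, inner_toLp_mulMonomial_left, Complex.real_smul,
    Complex.ofReal_natCast]

end L2Adjoints

section Fourier

variable {H : Type*} [NormedAddCommGroup H] [NormedSpace ℂ H]

theorem fourier_lineDerivOp_single_apply {ι : Type*} [Fintype ι] [DecidableEq ι] (i : ι)
    (f : 𝓢(EuclideanSpace ℝ ι, H)) (w : EuclideanSpace ℝ ι) :
    𝓕 (∂_{EuclideanSpace.single i (1 : ℝ)} f) w = (2 * π * I * w i) • 𝓕 f w := by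
  rw [SchwartzMap.fourier_lineDerivOp_eq, smul_apply,
    SchwartzMap.smulLeftCLM_apply_apply (by fun_prop), EuclideanSpace.inner_single_right]
  simp only [conj_trivial, one_mul, ← Complex.coe_smul, smul_smul]

variable {N : ℕ}

/-- The multi-index derivative `∂_x^β` as an operator on Schwartz space; `mderiv` is its
counterpart for plain functions. -/
noncomputable def multiDeriv (β : Fin N → ℕ) :
    𝓢(EuclideanSpace ℝ (Fin N), H) → 𝓢(EuclideanSpace ℝ (Fin N), H) :=
  (List.ofFn fun i ↦ (∂_{EuclideanSpace.single i (1 : ℝ)})^[β i]).foldr (· ∘ ·) id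

theorem coe_multiDeriv (β : Fin N → ℕ) (f : 𝓢(EuclideanSpace ℝ (Fin N), ℂ)) :
    ⇑(multiDeriv β f) = mderiv β f := by
  have hiterate (i : Fin N) (n : ℕ) (g : 𝓢(EuclideanSpace ℝ (Fin N), ℂ)) :
      ⇑((∂_{EuclideanSpace.single i (1 : ℝ)})^[n] g) = (pderivE i)^[n] g := by
    have hderiv : Function.Semiconj (DFunLike.coe : 𝓢(EuclideanSpace ℝ (Fin N), ℂ) → _)
        (∂_{EuclideanSpace.single i (1 : ℝ)}) (pderivE i) :=
      fun g ↦ funext fun x ↦ SchwartzMap.lineDerivOp_apply_eq_fderiv _ g x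
    exact hderiv.iterate_right n g
  simp only [multiDeriv, mderiv, List.ofFn_eq_map]
  induction List.finRange N with
  | nil => rfl
  | cons i l ih => simp only [List.map_cons, List.foldr_cons, Function.comp, hiterate, ih]

theorem fourier_multiDeriv (β : Fin N → ℕ) (f : 𝓢(EuclideanSpace ℝ (Fin N), H)) :
    𝓕 (multiDeriv β f) = (2 * π * I) ^ (∑ i, β i) • mulMonomial β (𝓕 f) := by
  ext w
  have hiterate (i : Fin N) (n : ℕ) (g : 𝓢(EuclideanSpace ℝ (Fin N), H)) :
      𝓕 ((∂_{EuclideanSpace.single i (1 : ℝ)})^[n] g) w = (2 * π * I * w i) ^ n • 𝓕 g w := by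
    induction n with
    | zero => simp
    | succ n ih =>
      rw [Function.iterate_succ_apply', fourier_lineDerivOp_single_apply, ih, smul_smul, pow_succ']
  have hprod : 𝓕 (multiDeriv β f) w = (∏ i, (2 * π * I * w i) ^ β i) • 𝓕 f w := by
    rw [← List.prod_ofFn, multiDeriv, List.ofFn_eq_map, List.ofFn_eq_map]
    induction List.finRange N with
    | nil => simp
    | cons i l ih =>
      simp only [List.map_cons, List.foldr_cons, Function.comp, List.prod_cons, hiterate, ih,
        smul_smul]
  simp only [hprod, smul_apply, mulMonomial_apply, coordMonomial, mul_pow (2 * π * I),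
    Finset.prod_mul_distrib, Finset.prod_pow_eq_pow_sum, ← Complex.coe_smul, smul_smul,
    Complex.ofReal_prod, Complex.ofReal_pow]

theorem fourier_eq_integral_exp (f : 𝓢(EuclideanSpace ℝ (Fin N), ℂ))
    (w : EuclideanSpace ℝ (Fin N)) :
    𝓕 f w = ∫ x : EuclideanSpace ℝ (Fin N),
      Complex.exp (-(I * ∑ i, (x i : ℂ) * (((2 * π) • w) i : ℂ))) * f x := by
  rw [SchwartzMap.fourier_coe, Real.fourier_eq']
  refine integral_congr_ae (.of_forall fun x ↦ ?_)
  have hphase : (-2 * π * ⟪x, w⟫_ℝ : ℝ) * I = -(I * ∑ i, (x i : ℂ) * (((2 * π) • w) i : ℂ)) := by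
    simp only [PiLp.inner_apply, PiLp.smul_apply, smul_eq_mul, RCLike.inner_apply, conj_trivial,
      Finset.mul_sum, Complex.ofReal_sum, Complex.ofReal_mul, Finset.sum_mul,
      ← Finset.sum_neg_distrib]
    refine Finset.sum_congr rfl fun i _ ↦ ?_
    push_cast
    ring
  simp only [hphase, smul_eq_mul]

variable [CompleteSpace H]

theorem multiDeriv_zero (f : 𝓢(EuclideanSpace ℝ (Fin N), H)) : multiDeriv 0 f = f := by
  apply (FourierTransform.fourierEquiv ℂ 𝓢(EuclideanSpace ℝ (Fin N), H)).injective
  ext w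
  simp [fourier_multiDeriv, coordMonomial]

theorem multiDeriv_add_single (β : Fin N → ℕ) (i : Fin N) (f : 𝓢(EuclideanSpace ℝ (Fin N), H)) :
    multiDeriv (β + Pi.single i 1) f = ∂_{EuclideanSpace.single i (1 : ℝ)} (multiDeriv β f) := by
  apply (FourierTransform.fourierEquiv ℂ 𝓢(EuclideanSpace ℝ (Fin N), H)).injective
  ext w
  have hsum : ∑ j, (β + Pi.single i 1 : Fin N → ℕ) j = (∑ j, β j) + 1 := by
    simp [Finset.sum_add_distrib]
  have hmon : coordMonomial (β + Pi.single i 1) w = w i * coordMonomial β w := by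
    rw [coordMonomial_add, Pi.mul_apply, mul_comm]
    simp [coordMonomial, Pi.single_apply]
  simp only [FourierTransform.fourierEquiv_apply, fourier_lineDerivOp_single_apply,
    fourier_multiDeriv, smul_apply, mulMonomial_apply, hsum, hmon, ← Complex.coe_smul, smul_smul,
    Complex.ofReal_mul]
  congr 1
  ring

end Fourier

section L2Norm

theorem lintegral_enorm_sq_eq_ofReal_norm_toLp_sq {E F : Type*} [NormedAddCommGroup E]
    [NormedSpace ℝ E] [MeasurableSpace E] [BorelSpace E] [SecondCountableTopology E]
    [NormedAddCommGroup F] [NormedSpace ℝ F] (μ : Measure E) [μ.HasTemperateGrowth]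
    (f : 𝓢(E, F)) :
    ∫⁻ x, ‖f x‖ₑ ^ 2 ∂μ = ENNReal.ofReal (‖f.toLp 2 μ‖ ^ 2) := by
  rw [ENNReal.ofReal_pow (norm_nonneg _), SchwartzMap.norm_toLp,
    ENNReal.ofReal_toReal (f.memLp 2 μ).eLpNorm_ne_top]
  simpa using (eLpNorm_nnreal_pow_eq_lintegral (μ := μ) (f := f) (p := 2) two_ne_zero).symm

variable {ι : Type*} [Fintype ι]

variable {F : Type*} [NormedAddCommGroup F] [NormedSpace ℝ F]

theorem norm_mulMonomial_apply_sq_le (a : ι → ℕ) {c C : ℝ} (hc : 0 < c)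
    (f : 𝓢(EuclideanSpace ℝ ι, F)) {x : EuclideanSpace ℝ ι}
    (hf : ‖f x‖ ≤ C * Real.exp (-c * ‖x‖ ^ 2)) :
    ‖mulMonomial a f x‖ ^ 2 ≤
      C ^ 2 * (∏ i, ((a i)! / c ^ a i : ℝ)) * Real.exp (-c * ‖x‖ ^ 2) :=
  calc ‖mulMonomial a f x‖ ^ 2 = coordMonomial a x ^ 2 * ‖f x‖ ^ 2 := by
        rw [mulMonomial_apply, norm_smul, mul_pow, Real.norm_eq_abs, sq_abs]
    _ ≤ coordMonomial a x ^ 2 * (C * Real.exp (-c * ‖x‖ ^ 2)) ^ 2 := by gcongr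
    _ = C ^ 2 * (coordMonomial a x ^ 2 * Real.exp (-c * ‖x‖ ^ 2)) *
          Real.exp (-c * ‖x‖ ^ 2) := by ring
    _ ≤ C ^ 2 * (∏ i, ((a i)! / c ^ a i : ℝ)) * Real.exp (-c * ‖x‖ ^ 2) := by
        gcongr
        exact coordMonomial_sq_mul_exp_le a hc x

theorem norm_toLp_mulMonomial_le (a : ι → ℕ) {c C : ℝ} (hc : 0 < c)
    {f : 𝓢(EuclideanSpace ℝ ι, F)} (hf : ∀ x, ‖f x‖ ≤ C * Real.exp (-c * ‖x‖ ^ 2)) :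
    ‖(mulMonomial a f).toLp 2‖ ≤
      C * (π / c) ^ (Fintype.card ι / 4 : ℝ) * √(∏ i, ((a i)! / c ^ a i : ℝ)) := by
  have hC : 0 ≤ C := by simpa using (norm_nonneg _).trans (hf 0)
  set P : ℝ := ∏ i, ((a i)! / c ^ a i : ℝ)
  have hP : 0 ≤ P := by positivity
  have hgauss := GaussianFourier.integral_rexp_neg_mul_sq_norm (V := EuclideanSpace ℝ ι) hc
  rw [finrank_euclideanSpace] at hgauss
  have hint : Integrable fun x : EuclideanSpace ℝ ι ↦ Real.exp (-c * ‖x‖ ^ 2) :=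
    .of_integral_ne_zero (by rw [hgauss]; positivity)
  have hsq : ‖(mulMonomial a f).toLp 2‖ ^ 2 ≤ C ^ 2 * P * (π / c) ^ (Fintype.card ι / 2 : ℝ) := by
    rw [← ENNReal.ofReal_le_ofReal_iff (by positivity),
      ← lintegral_enorm_sq_eq_ofReal_norm_toLp_sq, ← hgauss, ← integral_const_mul,
      ofReal_integral_eq_lintegral_ofReal (hint.const_mul _) (.of_forall fun x ↦ by positivity)]
    refine lintegral_mono fun x ↦ ?_
    rw [← ofReal_norm, ← ENNReal.ofReal_pow (norm_nonneg _)]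
    exact ENNReal.ofReal_le_ofReal (norm_mulMonomial_apply_sq_le a hc f (hf x))
  refine (sq_le_sq₀ (norm_nonneg _) (by positivity)).mp (hsq.trans_eq ?_)
  rw [mul_pow, mul_pow, Real.sq_sqrt hP, ← Real.rpow_mul_natCast (by positivity)]
  ring_nf

variable {H : Type*} [NormedAddCommGroup H] [InnerProductSpace ℂ H] [CompleteSpace H] {N : ℕ}

theorem norm_toLp_multiDeriv (β : Fin N → ℕ) (f : 𝓢(EuclideanSpace ℝ (Fin N), H)) :
    ‖(multiDeriv β f).toLp 2‖ = (2 * π) ^ (∑ i, β i) * ‖(mulMonomial β (𝓕 f)).toLp 2‖ := by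
  rw [← SchwartzMap.norm_fourier_toL2_eq, fourier_multiDeriv,
    ← SchwartzMap.toLpCLM_apply (𝕜 := ℂ), map_smul, norm_smul, SchwartzMap.toLpCLM_apply]
  simp [abs_of_pos Real.pi_pos]

theorem norm_toLp_multiDeriv_le (β : Fin N → ℕ) {c C : ℝ} (hc : 0 < c)
    {f : 𝓢(EuclideanSpace ℝ (Fin N), H)}
    (hf : ∀ w, ‖𝓕 f w‖ ≤ C * Real.exp (-c * ‖(2 * π) • w‖ ^ 2)) :
    ‖(multiDeriv β f).toLp 2‖ ≤
      C * (4 * π * c)⁻¹ ^ (N / 4 : ℝ) * √(∏ i, ((β i)! / c ^ β i : ℝ)) := by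
  have hscale (w : EuclideanSpace ℝ (Fin N)) :
      ‖𝓕 f w‖ ≤ C * Real.exp (-((2 * π) ^ 2 * c) * ‖w‖ ^ 2) := by
    convert hf w using 3
    rw [norm_smul, Real.norm_of_nonneg (by positivity)]
    ring
  have hconst : π / ((2 * π) ^ 2 * c) = (4 * π * c)⁻¹ := by
    field_simp
    norm_num
  have hprod : (2 * π) ^ (∑ i, β i) * √(∏ i, ((β i)! / ((2 * π) ^ 2 * c) ^ β i : ℝ)) =
      √(∏ i, ((β i)! / c ^ β i : ℝ)) := by
    rw [← Real.sqrt_sq (show 0 ≤ (2 * π) ^ (∑ i, β i) by positivity),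
      ← Real.sqrt_mul (by positivity)]
    simp only [mul_pow ((2 * π) ^ 2) c, Finset.prod_div_distrib, Finset.prod_mul_distrib,
      Finset.prod_pow_eq_pow_sum]
    rw [pow_right_comm, mul_div_assoc', mul_div_mul_left _ _ (by positivity)]
  have hmul := norm_toLp_mulMonomial_le β (c := (2 * π) ^ 2 * c) (by positivity) hscale
  rw [Fintype.card_fin, hconst] at hmul
  rw [norm_toLp_multiDeriv, ← hprod, mul_left_comm]
  exact mul_le_mul_of_nonneg_left hmul (by positivity)

end L2Norm

section LeibnizSum

/-- The sum `∑ γ ≤ b, (b.choose γ) * a (a - 1) ⋯ (a - γ + 1) * h (a - γ) (B - γ)` produced by moving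
`b` derivatives off a function across a factor `x ^ a`; here `h a' B'` stands for (a bound on) the
pairing with weight `x ^ a'` in which `B'` derivatives fall on the other function. -/
def leibnizSum {R : Type*} [CommSemiring R] (h : ℕ → ℕ → R) (a b B : ℕ) : R :=
  ∑ γ ∈ Finset.range (b + 1), b.choose γ * a.descFactorial γ * h (a - γ) (B - γ)

theorem leibnizSum_succ {R : Type*} [CommSemiring R] (h : ℕ → ℕ → R) (a b B : ℕ) :
    leibnizSum h a (b + 1) (B + 1) =
      a * leibnizSum h (a - 1) b B + leibnizSum h a b (B + 1) := by
  have hlast : leibnizSum h a b (B + 1) = ∑ γ ∈ Finset.range (b + 1 + 1),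
      b.choose γ * a.descFactorial γ * h (a - γ) (B + 1 - γ) := by
    rw [Finset.sum_range_succ]
    simp [leibnizSum]
  have hdesc (γ : ℕ) : a.descFactorial (γ + 1) = a * (a - 1).descFactorial γ := by
    cases a with
    | zero => simp
    | succ a => rw [Nat.succ_descFactorial_succ, Nat.add_sub_cancel]
  rw [hlast, Finset.sum_range_succ', leibnizSum, leibnizSum, Finset.sum_range_succ' _ (b + 1),
    Finset.mul_sum, ← add_assoc, ← Finset.sum_add_distrib]
  congr 1
  · refine Finset.sum_congr rfl fun γ _ ↦ ?_
    rw [Nat.choose_succ_succ, hdesc, Nat.sub_sub, Nat.add_comm 1 γ, Nat.add_sub_add_right]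
    push_cast
    ring
  · simp

theorem mul_prod_add_prod_eq_of_eq_off {ι R : Type*} [Fintype ι] [CommSemiring R]
    {u v w : ι → R} {c : R} (i : ι) (hi : c * u i + v i = w i) (hu : ∀ j ≠ i, u j = w j)
    (hv : ∀ j ≠ i, v j = w j) : c * ∏ j, u j + ∏ j, v j = ∏ j, w j := by
  classical
  have hoff {u : ι → R} (hu : ∀ j ≠ i, u j = w j) : ∏ j ∈ {i}ᶜ, u j = ∏ j ∈ {i}ᶜ, w j :=
    Finset.prod_congr rfl fun j hj ↦ hu j (by simpa using hj)
  simp only [Fintype.prod_eq_mul_prod_compl i, hoff hu, hoff hv]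
  rw [← hi]
  ring

theorem prod_leibnizSum_add_single {ι R : Type*} [Fintype ι] [DecidableEq ι] [CommSemiring R]
    (h : ℕ → ℕ → R) (a b b' : ι → ℕ) (i : ι) :
    ∏ j, leibnizSum h (a j) ((b + Pi.single i 1 : ι → ℕ) j)
        ((b + Pi.single i 1 : ι → ℕ) j + b' j) =
      a i * ∏ j, leibnizSum h ((a - Pi.single i 1 : ι → ℕ) j) (b j) (b j + b' j) +
        ∏ j, leibnizSum h (a j) (b j) (b j + (b' + Pi.single i 1 : ι → ℕ) j) := by
  refine (mul_prod_add_prod_eq_of_eq_off i ?_ (fun j hj ↦ ?_) fun j hj ↦ ?_).symm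
  · simp only [Pi.add_apply, Pi.sub_apply, Pi.single_eq_same]
    rw [add_right_comm (b i) 1 (b' i), leibnizSum_succ, add_assoc (b i) (b' i) 1]
  · simp [hj]
  · simp [hj]

theorem multiIndex_induction {ι : Type*} [Finite ι] [DecidableEq ι] {p : (ι → ℕ) → Prop}
    (zero : p 0) (add_single : ∀ b i, p b → p (b + Pi.single i 1)) (b : ι → ℕ) : p b := by
  induction b using WellFoundedLT.induction with
  | ind b ih =>
    by_cases hb : b = 0
    · exact hb ▸ zero
    obtain ⟨i, hi⟩ := Function.ne_iff.mp hb
    obtain ⟨b, rfl⟩ : ∃ b', b = b' + Pi.single i 1 := by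
      refine ⟨b - Pi.single i 1, (tsub_add_cancel_of_le ?_).symm⟩
      exact update_le_iff.mpr ⟨Nat.one_le_iff_ne_zero.mpr hi, fun _ _ ↦ Nat.zero_le _⟩
    exact add_single b i (ih b (lt_add_of_pos_right b (Pi.single_pos.mpr one_pos)))

theorem norm_inner_mulMonomial_multiDeriv_le {H : Type*} [NormedAddCommGroup H]
    [InnerProductSpace ℂ H] [CompleteSpace H] {N : ℕ} {f g : 𝓢(EuclideanSpace ℝ (Fin N), H)}
    {h : ℕ → ℕ → ℝ} {K : ℝ}
    (hbase : ∀ a b : Fin N → ℕ,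
      ‖⟪(mulMonomial a f).toLp 2, (multiDeriv b g).toLp 2⟫_ℂ‖ ≤ K * ∏ i, h (a i) (b i))
    (b a b' : Fin N → ℕ) :
    ‖⟪(mulMonomial a (multiDeriv b f)).toLp 2, (multiDeriv b' g).toLp 2⟫_ℂ‖ ≤
      K * ∏ i, leibnizSum h (a i) (b i) (b i + b' i) := by
  induction b using multiIndex_induction generalizing a b' with
  | zero => simpa [multiDeriv_zero, leibnizSum] using hbase a b'
  | add_single b i ih =>
    rw [multiDeriv_add_single, inner_toLp_mulMonomial_lineDerivOp_left, norm_neg,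
      ← multiDeriv_add_single, prod_leibnizSum_add_single, mul_add, mul_left_comm]
    refine (norm_add_le _ _).trans (add_le_add ?_ (ih a (b' + Pi.single i 1)))
    rw [norm_mul, Complex.norm_natCast]
    gcongr
    exact ih _ b'

end LeibnizSum

section GaussWeight

/-- The weight `√(a! / c₁ ^ a * (b! / c₂ ^ b))`: up to a constant, the Cauchy–Schwarz bound in one
coordinate for the pairing of `x ^ a f` and `∂ ^ b f`, when `f` and its Fourier transform have
Gaussian decay with rates `c₁` and `c₂`. -/
noncomputable def gaussWeight (c₁ c₂ : ℝ) (a b : ℕ) : ℝ :=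
  √(a ! / c₁ ^ a * (b ! / c₂ ^ b))

theorem descFactorial_sq_mul_factorial_mul_factorial_le (m : ℕ) {n γ : ℕ} (hγ : γ ≤ n) :
    m.descFactorial γ ^ 2 * (m - γ)! * (n - γ)! ≤ 2 ^ m * m ! * n ! := by
  rcases lt_or_ge m γ with hm | hm
  · simp [Nat.descFactorial_of_lt hm]
  calc m.descFactorial γ ^ 2 * (m - γ)! * (n - γ)!
      = ((m - γ)! * m.descFactorial γ) * m.descFactorial γ * (n - γ)! := by ring
    _ = m.choose γ * m ! * (γ ! * (n - γ)!) := by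
        rw [Nat.factorial_mul_descFactorial hm, Nat.descFactorial_eq_factorial_mul_choose]
        ring
    _ ≤ 2 ^ m * m ! * n ! := by
        gcongr
        · exact Nat.choose_le_two_pow m γ
        · exact Nat.le_of_dvd n.factorial_pos (Nat.factorial_mul_factorial_dvd_factorial hγ)

theorem factorial_two_mul_le (n : ℕ) : (2 * n)! ≤ (2 ^ n * n !) ^ 2 :=
  calc (2 * n)! = (2 * n).choose n * n ! * n ! := by
        rw [two_mul, Nat.add_choose_mul_factorial_mul_factorial]
    _ ≤ 2 ^ (2 * n) * n ! * n ! := by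
        gcongr
        exact Nat.choose_le_two_pow _ _
    _ = (2 ^ n * n !) ^ 2 := by ring

variable {c₁ c₂ : ℝ}

theorem descFactorial_mul_gaussWeight_le (hc₁ : 0 < c₁) (hc₂ : 0 < c₂) (hc : c₁ * c₂ ≤ 1) (m : ℕ)
    {n γ : ℕ} (hγ : γ ≤ n) :
    m.descFactorial γ * gaussWeight c₁ c₂ (m - γ) (n - γ) ≤ √(2 ^ m) * gaussWeight c₁ c₂ m n := by
  rcases lt_or_ge m γ with hm | hm
  · rw [Nat.descFactorial_of_lt hm, Nat.cast_zero, zero_mul]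
    exact mul_nonneg (Real.sqrt_nonneg _) (Real.sqrt_nonneg _)
  have hfact : (m.descFactorial γ ^ 2 * (m - γ)! * (n - γ)! : ℝ) ≤ 2 ^ m * m ! * n ! := by
    exact_mod_cast descFactorial_sq_mul_factorial_mul_factorial_le m hγ
  have hpow : c₁ ^ m * c₂ ^ n ≤ c₁ ^ (m - γ) * c₂ ^ (n - γ) :=
    calc c₁ ^ m * c₂ ^ n = c₁ ^ (m - γ) * c₂ ^ (n - γ) * (c₁ * c₂) ^ γ := by
          rw [← pow_sub_mul_pow c₁ hm, ← pow_sub_mul_pow c₂ hγ]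
          ring
      _ ≤ c₁ ^ (m - γ) * c₂ ^ (n - γ) :=
          mul_le_of_le_one_right (by positivity) (pow_le_one₀ (by positivity) hc)
  rw [gaussWeight, gaussWeight, ← Real.sqrt_mul (by positivity),
    ← Real.sqrt_sq (Nat.cast_nonneg (m.descFactorial γ)), ← Real.sqrt_mul (by positivity)]
  apply Real.sqrt_le_sqrt
  calc (m.descFactorial γ ^ 2 * ((m - γ)! / c₁ ^ (m - γ) * ((n - γ)! / c₂ ^ (n - γ))) : ℝ)
      = m.descFactorial γ ^ 2 * (m - γ)! * (n - γ)! / (c₁ ^ (m - γ) * c₂ ^ (n - γ)) := by ring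
    _ ≤ 2 ^ m * m ! * n ! / (c₁ ^ m * c₂ ^ n) := by gcongr
    _ = 2 ^ m * (m ! / c₁ ^ m * (n ! / c₂ ^ n)) := by ring

theorem leibnizSum_gaussWeight_le (hc₁ : 0 < c₁) (hc₂ : 0 < c₂) (hc : c₁ * c₂ ≤ 1) (m : ℕ)
    {n b : ℕ} (hb : b ≤ n) :
    leibnizSum (gaussWeight c₁ c₂) m b n ≤ 2 ^ b * (√(2 ^ m) * gaussWeight c₁ c₂ m n) :=
  calc leibnizSum (gaussWeight c₁ c₂) m b n
      ≤ ∑ γ ∈ Finset.range (b + 1), b.choose γ * (√(2 ^ m) * gaussWeight c₁ c₂ m n) := by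
        refine Finset.sum_le_sum fun γ hγ ↦ ?_
        rw [mul_assoc]
        exact mul_le_mul_of_nonneg_left (descFactorial_mul_gaussWeight_le hc₁ hc₂ hc m
          ((Finset.mem_range_succ_iff.mp hγ).trans hb)) (Nat.cast_nonneg _)
    _ = 2 ^ b * (√(2 ^ m) * gaussWeight c₁ c₂ m n) := by
        rw [← Finset.sum_mul]
        exact_mod_cast congrArg (· * _) (congrArg Nat.cast (Nat.sum_range_choose b))

theorem gaussWeight_two_mul_le (hc₁ : 0 < c₁) (hc₂ : 0 < c₂) (a b : ℕ) :
    gaussWeight c₁ c₂ (2 * a) (2 * b) ≤ 2 ^ a * (a ! / c₁ ^ a) * (2 ^ b * (b ! / c₂ ^ b)) := by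
  have hfact (n : ℕ) : ((2 * n)! : ℝ) ≤ (2 ^ n * n !) ^ 2 := by
    exact_mod_cast factorial_two_mul_le n
  refine Real.sqrt_le_iff.mpr ⟨by positivity, ?_⟩
  calc ((2 * a)! / c₁ ^ (2 * a) * ((2 * b)! / c₂ ^ (2 * b)) : ℝ)
      ≤ (2 ^ a * a !) ^ 2 / c₁ ^ (2 * a) * ((2 ^ b * b !) ^ 2 / c₂ ^ (2 * b)) := by
        gcongr <;> exact hfact _
    _ = (2 ^ a * (a ! / c₁ ^ a) * (2 ^ b * (b ! / c₂ ^ b))) ^ 2 := by ring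

theorem leibnizSum_gaussWeight_two_mul_le (hc₁ : 0 < c₁) (hc₂ : 0 < c₂) (hc : c₁ * c₂ ≤ 1)
    (a b : ℕ) :
    leibnizSum (gaussWeight c₁ c₂) (2 * a) b (2 * b) ≤
      4 ^ a * (a ! / c₁ ^ a) * (4 ^ b * (b ! / c₂ ^ b)) :=
  calc leibnizSum (gaussWeight c₁ c₂) (2 * a) b (2 * b)
      ≤ 2 ^ b * (√(2 ^ (2 * a)) * gaussWeight c₁ c₂ (2 * a) (2 * b)) :=
        leibnizSum_gaussWeight_le hc₁ hc₂ hc _ (by lia)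
    _ ≤ 2 ^ b * (2 ^ a * (2 ^ a * (a ! / c₁ ^ a) * (2 ^ b * (b ! / c₂ ^ b)))) := by
        rw [mul_comm 2 a, pow_mul, Real.sqrt_sq (by positivity), mul_comm a 2]
        gcongr
        exact gaussWeight_two_mul_le hc₁ hc₂ a b
    _ = 4 ^ a * (a ! / c₁ ^ a) * (4 ^ b * (b ! / c₂ ^ b)) := by
        rw [show (4 : ℝ) = 2 * 2 by norm_num, mul_pow, mul_pow]
        ring

end GaussWeight

section GaussianDecay

variable {N : ℕ} {c₁ c₂ C₁ C₂ : ℝ}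

theorem norm_inner_mulMonomial_multiDeriv_le_gaussWeight {H : Type*} [NormedAddCommGroup H]
    [InnerProductSpace ℂ H] [CompleteSpace H] (hc₁ : 0 < c₁) (hc₂ : 0 < c₂)
    {f g : 𝓢(EuclideanSpace ℝ (Fin N), H)}
    (hf : ∀ x, ‖f x‖ ≤ C₁ * Real.exp (-c₁ * ‖x‖ ^ 2))
    (hg : ∀ w, ‖𝓕 g w‖ ≤ C₂ * Real.exp (-c₂ * ‖(2 * π) • w‖ ^ 2)) (a b : Fin N → ℕ) :
    ‖⟪(mulMonomial a f).toLp 2, (multiDeriv b g).toLp 2⟫_ℂ‖ ≤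
      C₁ * C₂ * (4 * c₁ * c₂)⁻¹ ^ (N / 4 : ℝ) * ∏ i, gaussWeight c₁ c₂ (a i) (b i) := by
  have hmul := norm_toLp_mulMonomial_le a hc₁ hf
  have hderiv := norm_toLp_multiDeriv_le b hc₂ hg
  rw [Fintype.card_fin] at hmul
  have hconst : (π / c₁) ^ (N / 4 : ℝ) * (4 * π * c₂)⁻¹ ^ (N / 4 : ℝ) =
      (4 * c₁ * c₂)⁻¹ ^ (N / 4 : ℝ) := by
    rw [← Real.mul_rpow (by positivity) (by positivity)]
    congr 1
    field_simp
  have hprod : √(∏ i, ((a i)! / c₁ ^ a i : ℝ)) * √(∏ i, ((b i)! / c₂ ^ b i : ℝ)) =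
      ∏ i, gaussWeight c₁ c₂ (a i) (b i) := by
    simp only [gaussWeight]
    rw [← Real.sqrt_mul (by positivity), ← Finset.prod_mul_distrib,
      Real.sqrt_prod _ fun i _ ↦ by positivity]
  refine (norm_inner_le_norm _ _).trans
    ((mul_le_mul hmul hderiv (norm_nonneg _) ((norm_nonneg _).trans hmul)).trans_eq ?_)
  rw [← hconst, ← hprod]
  ring

theorem norm_toLp_mulMonomial_multiDeriv_sq_le {H : Type*} [NormedAddCommGroup H]
    [InnerProductSpace ℂ H] [CompleteSpace H] (hc₁ : 0 < c₁) (hc₂ : 0 < c₂) (hc : c₁ * c₂ ≤ 1)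
    {f : 𝓢(EuclideanSpace ℝ (Fin N), H)}
    (hf : ∀ x, ‖f x‖ ≤ C₁ * Real.exp (-c₁ * ‖x‖ ^ 2))
    (hfhat : ∀ w, ‖𝓕 f w‖ ≤ C₂ * Real.exp (-c₂ * ‖(2 * π) • w‖ ^ 2)) (α β : Fin N → ℕ) :
    ‖(mulMonomial α (multiDeriv β f)).toLp 2‖ ^ 2 ≤ C₁ * C₂ * (4 * c₁ * c₂)⁻¹ ^ (N / 4 : ℝ) *
      ∏ i, (4 ^ α i * ((α i)! / c₁ ^ α i) * (4 ^ β i * ((β i)! / c₂ ^ β i)) : ℝ) := by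
  have hC₁ : 0 ≤ C₁ := by simpa using (norm_nonneg _).trans (hf 0)
  have hC₂ : 0 ≤ C₂ := by simpa using (norm_nonneg _).trans (hfhat 0)
  have hweight (a b : ℕ) : 0 ≤ gaussWeight c₁ c₂ a b := Real.sqrt_nonneg _
  rw [norm_toLp_mulMonomial_sq]
  refine (norm_inner_mulMonomial_multiDeriv_le
    (norm_inner_mulMonomial_multiDeriv_le_gaussWeight hc₁ hc₂ hf hfhat) β (2 • α) β).trans ?_
  refine mul_le_mul_of_nonneg_left (Finset.prod_le_prod (fun i _ ↦ ?_) fun i _ ↦ ?_) (by positivity)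
  · exact Finset.sum_nonneg fun γ _ ↦ mul_nonneg (by positivity) (hweight _ _)
  · rw [← two_mul]
    exact leibnizSum_gaussWeight_two_mul_le hc₁ hc₂ hc (α i) (β i)

theorem gaussian_constant_eq (hc₁ : 0 < c₁) (hc₂ : 0 < c₂) (α β : Fin N → ℕ) :
    C₁ * C₂ * (4 * c₁ * c₂)⁻¹ ^ (N / 4 : ℝ) *
        ∏ i, (4 ^ α i * ((α i)! / c₁ ^ α i) * (4 ^ β i * ((β i)! / c₂ ^ β i)) : ℝ) =
      (2 : ℝ) ^ ((2 * (∑ i, α i) + 2 * (∑ i, β i) : ℕ) - (N : ℝ) / 2)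
        * (C₁ / c₁ ^ (((∑ i, α i : ℕ) : ℝ) + N / 4))
        * (C₂ / c₂ ^ (((∑ i, β i : ℕ) : ℝ) + N / 4))
        * (∏ i, (α i)!) * (∏ i, (β i)!) := by
  have hfour : (4 : ℝ) ^ (N / 4 : ℝ) = 2 ^ (N / 2 : ℝ) := by
    rw [show (4 : ℝ) = 2 ^ (2 : ℝ) by norm_num, ← Real.rpow_mul zero_le_two]
    ring_nf
  rw [Real.inv_rpow (by positivity), Real.mul_rpow (by positivity) hc₂.le,
    Real.mul_rpow (by positivity) hc₁.le, hfour, Real.rpow_sub two_pos, Real.rpow_add hc₁,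
    Real.rpow_add hc₂]
  simp only [Real.rpow_natCast, Finset.prod_mul_distrib, Finset.prod_div_distrib,
    Finset.prod_pow_eq_pow_sum, pow_add, pow_mul, Nat.cast_prod, show (2 : ℝ) ^ 2 = 4 by norm_num]
  field_simp

end GaussianDecay

theorem statement_14_general (N : ℕ) (c₁ c₂ C₁ C₂ : ℝ)
    (hc₁ : 0 < c₁) (hc₂ : 0 < c₂) (hc : c₁ * c₂ ≤ 1)
    (f : SchwartzMap (EuclideanSpace ℝ (Fin N)) ℂ)
    (hf : ∀ x, ‖f x‖ ≤ C₁ * Real.exp (-c₁ * ‖x‖ ^ 2))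
    (hfhat : ∀ ξ : EuclideanSpace ℝ (Fin N),
      ‖∫ x : EuclideanSpace ℝ (Fin N),
          Complex.exp (-(Complex.I * ∑ i, (x i : ℂ) * (ξ i : ℂ))) * f x‖
        ≤ C₂ * Real.exp (-c₂ * ‖ξ‖ ^ 2))
    (α β : Fin N → ℕ) :
    (∫⁻ x : EuclideanSpace ℝ (Fin N),
        (‖(∏ i, (x i : ℂ) ^ α i) * mderiv β (fun y => f y) x‖₊ : ℝ≥0∞) ^ 2)
      ≤ ENNReal.ofReal
          ((2 : ℝ) ^ ((2 * (∑ i, α i) + 2 * (∑ i, β i) : ℕ) - (N : ℝ) / 2)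
            * (C₁ / c₁ ^ (((∑ i, α i : ℕ) : ℝ) + N / 4))
            * (C₂ / c₂ ^ (((∑ i, β i : ℕ) : ℝ) + N / 4))
            * (∏ i, Nat.factorial (α i)) * (∏ i, Nat.factorial (β i))) := by
  have hfourier (w : EuclideanSpace ℝ (Fin N)) :
      ‖𝓕 f w‖ ≤ C₂ * Real.exp (-c₂ * ‖(2 * π) • w‖ ^ 2) := by
    rw [fourier_eq_integral_exp]
    exact hfhat _
  have happly (x : EuclideanSpace ℝ (Fin N)) :
      (∏ i, (x i : ℂ) ^ α i) * mderiv β (fun y => f y) x = mulMonomial α (multiDeriv β f) x := by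
    simp [coe_multiDeriv, coordMonomial]
  simp only [happly, ← enorm_eq_nnnorm]
  rw [lintegral_enorm_sq_eq_ofReal_norm_toLp_sq, ← gaussian_constant_eq hc₁ hc₂]
  exact ENNReal.ofReal_le_ofReal
    (norm_toLp_mulMonomial_multiDeriv_sq_le hc₁ hc₂ hc hf hfourier α β)

/-- Let `N ≥ 1`, `0 < c₁ < 1`, `0 < c₂ < 1`, `C₁, C₂ > 0`, and let `f` be a
Schwartz function with `|f(x)| ≤ C₁ e^{-c₁|x|²}` and `|f̂(ξ)| ≤ C₂ e^{-c₂|ξ|²}`. Then for all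
multi-indices `α, β`:
`‖x^α ∂_x^β f‖²_{L²} ≤ 2^{3|α|+3|β|-N/2} C₁ c₁^{-(|α|+N/4)} C₂ c₂^{-(|β|+N/4)} α! β!`. -/
theorem statement_14 (N : ℕ) (hN : 1 ≤ N) (c₁ c₂ C₁ C₂ : ℝ)
    (hc₁ : 0 < c₁) (hc₁' : c₁ < 1) (hc₂ : 0 < c₂) (hc₂' : c₂ < 1)
    (hC₁ : 0 < C₁) (hC₂ : 0 < C₂)
    (f : SchwartzMap (EuclideanSpace ℝ (Fin N)) ℂ)
    (hf : ∀ x, ‖f x‖ ≤ C₁ * Real.exp (-c₁ * ‖x‖ ^ 2))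
    (hfhat : ∀ ξ : EuclideanSpace ℝ (Fin N),
      ‖∫ x : EuclideanSpace ℝ (Fin N),
          Complex.exp (-(Complex.I * ∑ i, (x i : ℂ) * (ξ i : ℂ))) * f x‖
        ≤ C₂ * Real.exp (-c₂ * ‖ξ‖ ^ 2)) :
    ∀ α β : Fin N → ℕ,
      (∫⁻ x : EuclideanSpace ℝ (Fin N),
          (‖(∏ i, (x i : ℂ) ^ α i) * mderiv β (fun y => f y) x‖₊ : ℝ≥0∞) ^ 2)
        ≤ ENNReal.ofReal
            ((2 : ℝ) ^ ((3 * (∑ i, α i) + 3 * (∑ i, β i) : ℕ) - (N : ℝ) / 2)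
              * (C₁ / c₁ ^ (((∑ i, α i : ℕ) : ℝ) + N / 4))
              * (C₂ / c₂ ^ (((∑ i, β i : ℕ) : ℝ) + N / 4))
              * (∏ i, Nat.factorial (α i)) * (∏ i, Nat.factorial (β i))) := by
  intro α β
  refine (statement_14_general N c₁ c₂ C₁ C₂ hc₁ hc₂ (mul_le_one₀ hc₁'.le hc₂.le hc₂'.le) f hf
    hfhat α β).trans (ENNReal.ofReal_le_ofReal ?_)
  gcongr <;> norm_num
end

section
/- Let q be the complex-valued quadratic form on ℝ^{4n} (with variables (x,v,ξ,η) ∈ ℝⁿ×ℝⁿ×ℝⁿ×ℝⁿ) of the Kramers–Fokker–Planck operator without external potential, q(x,v,ξ,η) = |η|² + (1/4)|v|² + i⟨v,ξ⟩. Then the singular space of q equals S = ℝⁿ × {0} × {0} × {0}, i.e. the set of vectors (x,0,0,0) with x ∈ ℝⁿ; moreover already Ker(Re F) ∩ Ker(Re F · Im F) ∩ ℝ^{4n} = ℝⁿ×{0}×{0}×{0}, where F is the Hamilton map of q. -/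
noncomputable section

open Matrix

/-- The phase space index type for `ℝ^{4n}`, with variables `(x, v, ξ, η)`:
`x i = X (inl (inl i))`, `v i = X (inl (inr i))`, `ξ i = X (inr (inl i))`,
`η i = X (inr (inr i))`. -/
abbrev PS (n : ℕ) := (Fin n ⊕ Fin n) ⊕ (Fin n ⊕ Fin n)

/-- The standard symplectic matrix `J = [[0, I], [-I, 0]]` on `ℝ^{2N}` (complexified). -/
def JmatG (m : Type*) [Fintype m] [DecidableEq m] : Matrix (m ⊕ m) (m ⊕ m) ℂ :=
  Matrix.fromBlocks 0 1 (-1) 0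

/-- The canonical embedding of a real vector into `ℂ^ι`. -/
def cvec {ι : Type*} (X : ι → ℝ) : ι → ℂ := fun i => (X i : ℂ)

end

/-!
Polarization recovers `Q` from `q`, so `F` is the explicit block matrix of the Kramers–Fokker–Planck
form. For `Z = (x, v, ξ, η)` it gives `Re F Z = (0, η, 0, -v/4)` and `Im F Z = (v/2, 0, 0, -ξ/2)`,
hence `Re F (Im F Z) = (0, -ξ/2, 0, 0)`. Thus `Re F Z` and `Re F (Im F Z)` both vanish exactly when
`v = ξ = η = 0`; in that case already `Im F Z = 0`, so the higher powers of `Im F` impose nothing.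
-/

open Matrix

section QuadraticForm

variable {ι R S : Type*} [Fintype ι] [CommRing R] [Semiring S]

theorem single_add_single_dotProduct_mulVec [DecidableEq ι] (A : Matrix ι ι R) (i j : ι) :
    (Pi.single i 1 + Pi.single j 1) ⬝ᵥ A *ᵥ (Pi.single i 1 + Pi.single j 1) =
      A i i + A j i + (A i j + A j j) := by
  simp [mulVec_add]

theorem eq_of_isSymm_of_dotProduct_mulVec_eq [IsAddTorsionFree R] (f : S →+* R)
    {A B : Matrix ι ι R} (hA : A.IsSymm) (hB : B.IsSymm)
    (h : ∀ X : ι → S, (f ∘ X) ⬝ᵥ A *ᵥ (f ∘ X) = (f ∘ X) ⬝ᵥ B *ᵥ (f ∘ X)) : A = B := by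
  classical
  have map_single (i : ι) : f ∘ Pi.single i 1 = Pi.single i 1 := by
    ext k
    simp [Pi.single_apply, apply_ite f]
  have diag (i : ι) : A i i = B i i := by
    simpa [map_single] using h (Pi.single i 1)
  ext i j
  have polar : A i i + A j i + (A i j + A j j) = B i i + B j i + (B i j + B j j) := by
    have map_single_add : f ∘ (Pi.single i 1 + Pi.single j 1 : ι → S) =
        Pi.single i 1 + Pi.single j 1 := by
      rw [← map_single i, ← map_single j]
      ext k
      simp
    have eq_on_sum := h (Pi.single i 1 + Pi.single j 1)
    rwa [map_single_add, single_add_single_dotProduct_mulVec,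
      single_add_single_dotProduct_mulVec] at eq_on_sum
  rw [hA.apply i j, hB.apply i j, diag i, diag j] at polar
  refine nsmul_right_injective two_ne_zero ?_
  linear_combination polar

end QuadraticForm

theorem forall_lt_mul_pow_mulVec_eq_zero_iff {ι κ R : Type*} [Fintype ι] [DecidableEq ι]
    [Semiring R] {A : Matrix κ ι R} {B : Matrix ι ι R} {z : ι → R} {k : ℕ} (hk : 1 < k)
    (h : A *ᵥ z = 0 → (A * B) *ᵥ z = 0 → B *ᵥ z = 0) :
    (∀ j < k, (A * B ^ j) *ᵥ z = 0) ↔ A *ᵥ z = 0 ∧ (A * B) *ᵥ z = 0 := by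
  refine ⟨fun hz => ⟨?_, ?_⟩, fun ⟨hA, hAB⟩ j _ => ?_⟩
  · simpa using hz 0 (by lia)
  · simpa using hz 1 hk
  · cases j with
    | zero => simpa using hA
    | succ j => rw [pow_succ, ← Matrix.mul_assoc, ← mulVec_mulVec, h hA hAB, mulVec_zero]

section RealImaginaryParts

variable {ι : Type*}

theorem matRe_fromBlocks (A B C D : Matrix ι ι ℂ) :
    matRe (fromBlocks A B C D) = fromBlocks (matRe A) (matRe B) (matRe C) (matRe D) :=
  fromBlocks_map ..

theorem matIm_fromBlocks (A B C D : Matrix ι ι ℂ) :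
    matIm (fromBlocks A B C D) = fromBlocks (matIm A) (matIm B) (matIm C) (matIm D) :=
  fromBlocks_map ..

theorem matRe_zero : matRe (0 : Matrix ι ι ℂ) = 0 := by
  ext
  simp [matRe]

theorem matIm_zero : matIm (0 : Matrix ι ι ℂ) = 0 := by
  ext
  simp [matIm]

variable [DecidableEq ι]

theorem matRe_smul_one (c : ℂ) : matRe (c • (1 : Matrix ι ι ℂ)) = (c.re : ℂ) • 1 := by
  ext i j
  by_cases h : i = j <;> simp [matRe, one_apply, h]

theorem matIm_smul_one (c : ℂ) : matIm (c • (1 : Matrix ι ι ℂ)) = (c.im : ℂ) • 1 := by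
  ext i j
  by_cases h : i = j <;> simp [matIm, one_apply, h]

end RealImaginaryParts

theorem JmatG_mul_fromBlocks {m : Type*} [Fintype m] [DecidableEq m] (A B C D : Matrix m m ℂ) :
    JmatG m * fromBlocks A B C D = fromBlocks C D (-A) (-B) := by
  simp [JmatG, fromBlocks_multiply]

section KramersFokkerPlanck

variable (m : Type*) [DecidableEq m]

/-- The symmetric matrix of the Kramers–Fokker–Planck form `|η|² + (1/4)|v|² + i⟨v,ξ⟩`, in blocks
indexed by `(x, v)` and `(ξ, η)`; each variable ranges over `ℝ^m`. The cross term is split evenly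
between the `(v, ξ)` and `(ξ, v)` entries. -/
noncomputable def kfpMatrix : Matrix ((m ⊕ m) ⊕ (m ⊕ m)) ((m ⊕ m) ⊕ (m ⊕ m)) ℂ :=
  fromBlocks
    (fromBlocks 0 0 0 ((1 / 4 : ℂ) • 1)) (fromBlocks 0 0 ((Complex.I / 2) • 1) 0)
    (fromBlocks 0 ((Complex.I / 2) • 1) 0 0) (fromBlocks 0 0 0 1)

/-- The Hamilton map `F = J Q` of the Kramers–Fokker–Planck form, where `Q` is `kfpMatrix`. -/
noncomputable def kfpHamiltonMap [Fintype m] :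
    Matrix ((m ⊕ m) ⊕ (m ⊕ m)) ((m ⊕ m) ⊕ (m ⊕ m)) ℂ :=
  JmatG (m ⊕ m) * kfpMatrix m

theorem kfpMatrix_isSymm : (kfpMatrix m).IsSymm := by
  simp [IsSymm, kfpMatrix, fromBlocks_transpose]

variable [Fintype m]

theorem kfpHamiltonMap_eq_fromBlocks :
    kfpHamiltonMap m = fromBlocks
      (fromBlocks 0 ((Complex.I / 2) • 1) 0 0) (fromBlocks 0 0 0 ((1 : ℂ) • 1))
      (fromBlocks 0 0 0 ((-1 / 4 : ℂ) • 1)) (fromBlocks 0 0 ((-Complex.I / 2) • 1) 0) := by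
  simp [kfpHamiltonMap, kfpMatrix, JmatG_mul_fromBlocks, fromBlocks_neg, neg_div]

theorem matRe_kfpHamiltonMap :
    matRe (kfpHamiltonMap m) = fromBlocks
      0 (fromBlocks 0 0 0 1)
      (fromBlocks 0 0 0 ((-1 / 4 : ℂ) • 1)) 0 := by
  simp only [kfpHamiltonMap_eq_fromBlocks, matRe_fromBlocks, matRe_zero, matRe_smul_one]
  norm_num

theorem matIm_kfpHamiltonMap :
    matIm (kfpHamiltonMap m) = fromBlocks
      (fromBlocks 0 ((1 / 2 : ℂ) • 1) 0 0) 0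
      0 (fromBlocks 0 0 ((-1 / 2 : ℂ) • 1) 0) := by
  simp only [kfpHamiltonMap_eq_fromBlocks, matIm_fromBlocks, matIm_zero, matIm_smul_one]
  norm_num

theorem matRe_mul_matIm_kfpHamiltonMap :
    matRe (kfpHamiltonMap m) * matIm (kfpHamiltonMap m) = fromBlocks
      0 (fromBlocks 0 0 ((-1 / 2 : ℂ) • 1) 0)
      0 0 := by
  simp [matRe_kfpHamiltonMap, matIm_kfpHamiltonMap, fromBlocks_multiply]

variable {m} (Z : (m ⊕ m) ⊕ (m ⊕ m) → ℂ)

theorem dotProduct_kfpMatrix_mulVec :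
    Z ⬝ᵥ kfpMatrix m *ᵥ Z =
      (∑ i, Z (Sum.inr (Sum.inr i)) ^ 2)
        + (1 / 4 : ℂ) * ∑ i, Z (Sum.inl (Sum.inr i)) ^ 2
        + Complex.I * ∑ i, Z (Sum.inl (Sum.inr i)) * Z (Sum.inr (Sum.inl i)) := by
  simp only [kfpMatrix, fromBlocks_mulVec, smul_mulVec, one_mulVec, zero_mulVec, dotProduct,
    Fintype.sum_sum_type, Sum.elim_inl, Sum.elim_inr, Function.comp_apply, Pi.add_apply,
    Pi.smul_apply, Pi.zero_apply, smul_eq_mul, zero_add, add_zero, mul_zero,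
    Finset.sum_const_zero, Finset.mul_sum, ← Finset.sum_add_distrib]
  exact Finset.sum_congr rfl fun i _ => by ring

theorem matRe_kfpHamiltonMap_mulVec_eq_zero_iff :
    matRe (kfpHamiltonMap m) *ᵥ Z = 0 ↔
      (∀ i, Z (Sum.inl (Sum.inr i)) = 0) ∧ ∀ i, Z (Sum.inr (Sum.inr i)) = 0 := by
  simp [matRe_kfpHamiltonMap, fromBlocks_mulVec, smul_mulVec, funext_iff, and_comm]

theorem matIm_kfpHamiltonMap_mulVec_eq_zero_iff :
    matIm (kfpHamiltonMap m) *ᵥ Z = 0 ↔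
      (∀ i, Z (Sum.inl (Sum.inr i)) = 0) ∧ ∀ i, Z (Sum.inr (Sum.inl i)) = 0 := by
  simp [matIm_kfpHamiltonMap, fromBlocks_mulVec, smul_mulVec, funext_iff]

theorem matRe_mul_matIm_kfpHamiltonMap_mulVec_eq_zero_iff :
    (matRe (kfpHamiltonMap m) * matIm (kfpHamiltonMap m)) *ᵥ Z = 0 ↔
      ∀ i, Z (Sum.inr (Sum.inl i)) = 0 := by
  simp [matRe_mul_matIm_kfpHamiltonMap, fromBlocks_mulVec, smul_mulVec, funext_iff]

theorem eq_kfpMatrix_of_isSymm {Q : Matrix ((m ⊕ m) ⊕ (m ⊕ m)) ((m ⊕ m) ⊕ (m ⊕ m)) ℂ}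
    (hQ : Q.IsSymm)
    (hq : ∀ X : (m ⊕ m) ⊕ (m ⊕ m) → ℝ,
      cvec X ⬝ᵥ Q *ᵥ cvec X
        = (∑ i, cvec X (Sum.inr (Sum.inr i)) ^ 2)
          + (1 / 4 : ℂ) * ∑ i, cvec X (Sum.inl (Sum.inr i)) ^ 2
          + Complex.I * ∑ i, cvec X (Sum.inl (Sum.inr i)) * cvec X (Sum.inr (Sum.inl i))) :
    Q = kfpMatrix m :=
  eq_of_isSymm_of_dotProduct_mulVec_eq Complex.ofRealHom hQ (kfpMatrix_isSymm m) fun X =>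
    (hq X).trans (dotProduct_kfpMatrix_mulVec (cvec X)).symm

end KramersFokkerPlanck

theorem statement_15_general {m : Type*} [Fintype m] [DecidableEq m]
    {Q F : Matrix ((m ⊕ m) ⊕ (m ⊕ m)) ((m ⊕ m) ⊕ (m ⊕ m)) ℂ} (hQ : Q.IsSymm)
    (hq : ∀ X : (m ⊕ m) ⊕ (m ⊕ m) → ℝ,
      cvec X ⬝ᵥ Q *ᵥ cvec X
        = (∑ i, cvec X (Sum.inr (Sum.inr i)) ^ 2)
          + (1 / 4 : ℂ) * ∑ i, cvec X (Sum.inl (Sum.inr i)) ^ 2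
          + Complex.I * ∑ i, cvec X (Sum.inl (Sum.inr i)) * cvec X (Sum.inr (Sum.inl i)))
    (hF : F = JmatG (m ⊕ m) * Q) {k : ℕ} (hk : 1 < k) (Z : (m ⊕ m) ⊕ (m ⊕ m) → ℂ) :
    ((matRe F *ᵥ Z = 0 ∧ (matRe F * matIm F) *ᵥ Z = 0)
      ↔ ((∀ i, Z (Sum.inl (Sum.inr i)) = 0) ∧ (∀ i, Z (Sum.inr (Sum.inl i)) = 0)
          ∧ ∀ i, Z (Sum.inr (Sum.inr i)) = 0))
    ∧ ((∀ j < k, (matRe F * matIm F ^ j) *ᵥ Z = 0)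
      ↔ ((∀ i, Z (Sum.inl (Sum.inr i)) = 0) ∧ (∀ i, Z (Sum.inr (Sum.inl i)) = 0)
          ∧ ∀ i, Z (Sum.inr (Sum.inr i)) = 0)) := by
  obtain rfl : F = kfpHamiltonMap m := by rw [hF, eq_kfpMatrix_of_isSymm hQ hq, kfpHamiltonMap]
  have re_iff := matRe_kfpHamiltonMap_mulVec_eq_zero_iff Z
  have re_im_iff := matRe_mul_matIm_kfpHamiltonMap_mulVec_eq_zero_iff Z
  have ker_iff : (matRe (kfpHamiltonMap m) *ᵥ Z = 0 ∧
        (matRe (kfpHamiltonMap m) * matIm (kfpHamiltonMap m)) *ᵥ Z = 0)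
      ↔ ((∀ i, Z (Sum.inl (Sum.inr i)) = 0) ∧ (∀ i, Z (Sum.inr (Sum.inl i)) = 0)
          ∧ ∀ i, Z (Sum.inr (Sum.inr i)) = 0) := by
    rw [re_iff, re_im_iff, and_right_comm, and_assoc]
  have singular_iff := forall_lt_mul_pow_mulVec_eq_zero_iff hk fun hre hreim =>
    (matIm_kfpHamiltonMap_mulVec_eq_zero_iff Z).2 ⟨(re_iff.1 hre).1, re_im_iff.1 hreim⟩
  exact ⟨ker_iff, singular_iff.trans ker_iff⟩

/-- Let `q(x,v,ξ,η) = |η|² + (1/4)|v|² + i⟨v,ξ⟩` be the quadratic symbol of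
the Kramers–Fokker–Planck operator without external potential, with symmetric matrix `Q` and
Hamilton map `F = JQ`. Then the singular space of `q` equals `ℝⁿ × {0} × {0} × {0}`; moreover
already `Ker(Re F) ∩ Ker(Re F · Im F) ∩ ℝ^{4n} = ℝⁿ × {0} × {0} × {0}`. -/
theorem statement_15 (n : ℕ) (hn : 0 < n)
    (Q : Matrix (PS n) (PS n) ℂ) (hQsymm : Q.IsSymm)
    (hq : ∀ X : PS n → ℂ,
      ∑ i, X i * Q.mulVec X i
        = (∑ i, X (Sum.inr (Sum.inr i)) ^ 2)
          + (1 / 4 : ℂ) * ∑ i, X (Sum.inl (Sum.inr i)) ^ 2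
          + Complex.I * ∑ i, X (Sum.inl (Sum.inr i)) * X (Sum.inr (Sum.inl i)))
    (F : Matrix (PS n) (PS n) ℂ) (hF : F = JmatG (Fin n ⊕ Fin n) * Q) :
    ∀ X : PS n → ℝ,
      (((matRe F).mulVec (cvec X) = 0 ∧ (matRe F * matIm F).mulVec (cvec X) = 0)
        ↔ ((∀ i, X (Sum.inl (Sum.inr i)) = 0) ∧ (∀ i, X (Sum.inr (Sum.inl i)) = 0)
            ∧ ∀ i, X (Sum.inr (Sum.inr i)) = 0))
      ∧ ((∀ j < 4 * n, (matRe F * matIm F ^ j).mulVec (cvec X) = 0)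
        ↔ ((∀ i, X (Sum.inl (Sum.inr i)) = 0) ∧ (∀ i, X (Sum.inr (Sum.inl i)) = 0)
            ∧ ∀ i, X (Sum.inr (Sum.inr i)) = 0)) := by
  intro X
  simpa only [cvec, Complex.ofReal_eq_zero] using
    statement_15_general hQsymm (fun Y => hq (cvec Y)) hF (k := 4 * n) (by lia) (cvec X)
end

section
/- Let B, Q, R be real n×n matrices with Q and R symmetric positive semidefinite, and let q be the complex-valued quadratic form on ℝ^{2n} defined by q(x,ξ) = (1/2)⟨Qξ,ξ⟩ + (1/2)⟨Rx,x⟩ − i⟨Bx,ξ⟩ for (x,ξ) ∈ ℝⁿ×ℝⁿ. Then the Hamilton map of q is F = (1/2)·[[−iB, Q],[−R, iBᵀ]] (in n×n blocks), and the singular space of q equals S = [⋂_{j=0}^{2n−1} Ker(R B^j)] × [⋂_{j=0}^{2n−1} Ker(Q (Bᵀ)^j)] ⊂ ℝⁿ×ℝⁿ. -/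
noncomputable section

open Matrix

/-- The standard symplectic matrix `J = [[0, I], [-I, 0]]` on `ℝ^{2n}` (complexified). -/
def Jmat (n : ℕ) : Matrix (Fin n ⊕ Fin n) (Fin n ⊕ Fin n) ℂ :=
  Matrix.fromBlocks 0 1 (-1) 0

/-- The complexification of a real matrix. -/
def cmat {ι κ : Type*} (M : Matrix ι κ ℝ) : Matrix ι κ ℂ := M.map fun r => (r : ℂ)

end

/-
The symmetric matrix of a quadratic form on real vectors is unique, by polarization, so `Q̃` can be
read off from the symbol and `F = JQ̃` can be computed blockwise. This exhibits `Re F` as block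
antidiagonal and `Im F` as block diagonal, whence `Re F (Im F)^j` is again block antidiagonal, with
blocks `±R B^j` and `Q (Bᵀ)^j` up to nonzero factors: its kernel is the product of their kernels.
-/

open Matrix

theorem eq_of_isSymm_of_dotProduct_mulVec_map_eq {ι R A : Type*} [Fintype ι] [NonAssocSemiring R]
    [Ring A] (f : R →+* A) (h_two : IsLeftRegular (2 : A)) {M N : Matrix ι ι A}
    (hM : M.IsSymm) (hN : N.IsSymm)
    (h : ∀ x : ι → R, (f ∘ x) ⬝ᵥ M *ᵥ (f ∘ x) = (f ∘ x) ⬝ᵥ N *ᵥ (f ∘ x)) : M = N := by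
  classical
  have h_single (i : ι) : f ∘ Pi.single i 1 = Pi.single i 1 := by
    ext j
    simp [Pi.single_apply, apply_ite f]
  have h_diag (i : ι) : M i i = N i i := by
    simpa [h_single] using h (Pi.single i 1)
  have h_add (i j : ι) : f ∘ (Pi.single i 1 + Pi.single j 1) = Pi.single i 1 + Pi.single j 1 := by
    rw [← h_single i, ← h_single j]
    exact funext fun _ => map_add f _ _
  ext i j
  have h_polar : M i j + M j i = N i j + N j i := by
    have h_ij := h (Pi.single i 1 + Pi.single j 1)
    simp only [h_add, mulVec_add, add_dotProduct, dotProduct_add, mulVec_single_one,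
      single_one_dotProduct, col_apply, h_diag] at h_ij
    grind
  apply h_two
  simpa only [hM.apply i j, hN.apply i j, ← two_mul] using h_polar

section Blocks

variable {ι κ R : Type*} [Fintype ι] [Fintype κ]

theorem fromBlocks_antidiagonal_mul_diagonal_pow [Semiring R] [DecidableEq ι] [DecidableEq κ]
    (P : Matrix ι κ R) (S : Matrix κ ι R) (A : Matrix ι ι R) (D : Matrix κ κ R) (j : ℕ) :
    fromBlocks 0 P S 0 * fromBlocks A 0 0 D ^ j = fromBlocks 0 (P * D ^ j) (S * A ^ j) 0 := by
  simp [fromBlocks_diagonal_pow, fromBlocks_multiply]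

theorem fromBlocks_antidiagonal_mulVec_eq_zero_iff [NonUnitalNonAssocSemiring R] {μ ν : Type*}
    (P : Matrix μ κ R) (S : Matrix ν ι R) (x : ι ⊕ κ → R) :
    fromBlocks 0 P S 0 *ᵥ x = 0 ↔ S *ᵥ (x ∘ Sum.inl) = 0 ∧ P *ᵥ (x ∘ Sum.inr) = 0 := by
  simp [fromBlocks_mulVec, funext_iff, and_comm]

end Blocks

section Complexification

variable {ι : Type*}

theorem matRe_cmat_add_I_smul_cmat (M N : Matrix ι ι ℝ) :
    matRe (cmat M + Complex.I • cmat N) = cmat M := by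
  ext i j
  simp [matRe, cmat]

theorem matIm_cmat_add_I_smul_cmat (M N : Matrix ι ι ℝ) :
    matIm (cmat M + Complex.I • cmat N) = cmat N := by
  ext i j
  simp [matIm, cmat]

theorem cmat_mulVec_cvec_eq_zero_iff {κ : Type*} [Fintype κ] (M : Matrix ι κ ℝ) (x : κ → ℝ) :
    cmat M *ᵥ cvec x = 0 ↔ M *ᵥ x = 0 := by
  have h_map : cmat M *ᵥ cvec x = cvec (M *ᵥ x) :=
    funext fun i => (Complex.ofRealHom.map_mulVec M x i).symm
  simp [h_map, cvec, funext_iff]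

theorem cmat_mul_pow [Fintype ι] [DecidableEq ι] (M N : Matrix ι ι ℝ) (j : ℕ) :
    cmat (M * N ^ j) = cmat M * cmat N ^ j :=
  (map_mul Complex.ofRealHom.mapMatrix M (N ^ j)).trans
    (congrArg (cmat M * ·) (map_pow Complex.ofRealHom.mapMatrix N j))

end Complexification

section OrnsteinUhlenbeck

variable {ι : Type*} (B Q R : Matrix ι ι ℝ)

/-- The quadratic symbol `q(x, ξ) = ½⟨Qξ, ξ⟩ + ½⟨Rx, x⟩ - i⟨Bx, ξ⟩` of a generalized
Ornstein–Uhlenbeck operator, extended to complex vectors `X = (x, ξ)` by the bilinear pairing. -/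
noncomputable def ouSymbol [Fintype ι] (X : ι ⊕ ι → ℂ) : ℂ :=
  (1 / 2) * (cmat Q *ᵥ (X ∘ Sum.inr) ⬝ᵥ (X ∘ Sum.inr))
    + (1 / 2) * (cmat R *ᵥ (X ∘ Sum.inl) ⬝ᵥ (X ∘ Sum.inl))
    - Complex.I * (cmat B *ᵥ (X ∘ Sum.inl) ⬝ᵥ (X ∘ Sum.inr))

/-- The matrix `Q̃` of the quadratic form `ouSymbol B Q R` for symmetric `Q` and `R`. -/
noncomputable def ouSymbolMatrix : Matrix (ι ⊕ ι) (ι ⊕ ι) ℂ :=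
  (1 / 2 : ℂ) • fromBlocks (cmat R) (-(Complex.I • cmat Bᵀ)) (-(Complex.I • cmat B)) (cmat Q)

/-- The Hamilton map `F = JQ̃` of the quadratic form `ouSymbol B Q R`, in block form. -/
noncomputable def ouHamiltonMap : Matrix (ι ⊕ ι) (ι ⊕ ι) ℂ :=
  (1 / 2 : ℂ) • fromBlocks (-(Complex.I • cmat B)) (cmat Q) (-(cmat R)) (Complex.I • cmat Bᵀ)

variable {Q R} in
theorem isSymm_ouSymbolMatrix (hQ : Q.IsSymm) (hR : R.IsSymm) : (ouSymbolMatrix B Q R).IsSymm :=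
  (IsSymm.fromBlocks (hR.map _) (by simp [cmat, transpose_map]) (hQ.map _)).smul _

theorem dotProduct_ouSymbolMatrix_mulVec [Fintype ι] (X : ι ⊕ ι → ℂ) :
    X ⬝ᵥ ouSymbolMatrix B Q R *ᵥ X = ouSymbol B Q R X := by
  have h_cross : X ∘ Sum.inl ⬝ᵥ cmat Bᵀ *ᵥ (X ∘ Sum.inr)
      = cmat B *ᵥ (X ∘ Sum.inl) ⬝ᵥ X ∘ Sum.inr := by
    rw [dotProduct_comm (cmat B *ᵥ _)]
    exact dotProduct_transpose_mulVec (cmat B) _ _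
  simp only [ouSymbolMatrix, ouSymbol, smul_mulVec, dotProduct_smul, fromBlocks_mulVec,
    dotProduct_block, Sum.elim_comp_inl, Sum.elim_comp_inr, dotProduct_add, neg_mulVec,
    dotProduct_neg, smul_eq_mul, h_cross, dotProduct_comm _ (cmat _ *ᵥ _)]
  ring

theorem symplectic_mul_ouSymbolMatrix [Fintype ι] [DecidableEq ι] :
    fromBlocks 0 1 (-1) 0 * ouSymbolMatrix B Q R = ouHamiltonMap B Q R := by
  simp [ouSymbolMatrix, ouHamiltonMap, fromBlocks_multiply]

theorem ouHamiltonMap_eq_cmat_add_I_smul_cmat :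
    ouHamiltonMap B Q R = cmat ((1 / 2 : ℝ) • fromBlocks 0 Q (-R) 0)
      + Complex.I • cmat ((1 / 2 : ℝ) • fromBlocks (-B) 0 0 Bᵀ) := by
  ext (i | i) (j | j) <;> simp [ouHamiltonMap, cmat] <;> ring

theorem matRe_mul_matIm_pow_ouHamiltonMap_mulVec_eq_zero_iff [Fintype ι] [DecidableEq ι] (j : ℕ)
    (X : ι ⊕ ι → ℝ) :
    (matRe (ouHamiltonMap B Q R) * matIm (ouHamiltonMap B Q R) ^ j) *ᵥ cvec X = 0 ↔
      (R * B ^ j) *ᵥ (X ∘ Sum.inl) = 0 ∧ (Q * Bᵀ ^ j) *ᵥ (X ∘ Sum.inr) = 0 := by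
  have h_sign : -R * (-B) ^ j = (-1 : ℝ) ^ (j + 1) • (R * B ^ j) := by
    rw [← neg_one_smul ℝ B, smul_pow, Matrix.mul_smul, neg_mul, pow_succ, mul_neg_one, neg_smul,
      smul_neg]
  have h_prod : ((1 / 2 : ℝ) • fromBlocks 0 Q (-R) 0)
        * ((1 / 2 : ℝ) • fromBlocks (-B) 0 0 Bᵀ) ^ j
      = (1 / 2 : ℝ) ^ (j + 1) • fromBlocks 0 (Q * Bᵀ ^ j) ((-1 : ℝ) ^ (j + 1) • (R * B ^ j)) 0 := by
    rw [smul_pow, smul_mul_smul_comm, ← pow_succ', fromBlocks_antidiagonal_mul_diagonal_pow, h_sign]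
  rw [ouHamiltonMap_eq_cmat_add_I_smul_cmat, matRe_cmat_add_I_smul_cmat,
    matIm_cmat_add_I_smul_cmat, ← cmat_mul_pow, cmat_mulVec_cvec_eq_zero_iff, h_prod, smul_mulVec,
    smul_eq_zero_iff_right (by positivity), fromBlocks_antidiagonal_mulVec_eq_zero_iff, smul_mulVec,
    smul_eq_zero_iff_right (by simp)]

end OrnsteinUhlenbeck

theorem statement_19_general {ι : Type*} [Fintype ι] [DecidableEq ι] (B Q R : Matrix ι ι ℝ)
    (hQ : Q.IsSymm) (hR : R.IsSymm) (Qtilde : Matrix (ι ⊕ ι) (ι ⊕ ι) ℂ) (hQtsymm : Qtilde.IsSymm)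
    (hq : ∀ X : ι ⊕ ι → ℝ, cvec X ⬝ᵥ Qtilde *ᵥ cvec X = ouSymbol B Q R (cvec X))
    (F : Matrix (ι ⊕ ι) (ι ⊕ ι) ℂ) (hF : F = fromBlocks 0 1 (-1) 0 * Qtilde) :
    F = ouHamiltonMap B Q R ∧ ∀ (X : ι ⊕ ι → ℝ) (j : ℕ),
      (matRe F * matIm F ^ j) *ᵥ cvec X = 0 ↔
        (R * B ^ j) *ᵥ (X ∘ Sum.inl) = 0 ∧ (Q * Bᵀ ^ j) *ᵥ (X ∘ Sum.inr) = 0 := by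
  have h_matrix : Qtilde = ouSymbolMatrix B Q R :=
    eq_of_isSymm_of_dotProduct_mulVec_map_eq Complex.ofRealHom
      (IsRegular.of_ne_zero two_ne_zero).left hQtsymm (isSymm_ouSymbolMatrix B hQ hR)
      fun X => (hq X).trans (dotProduct_ouSymbolMatrix_mulVec B Q R (cvec X)).symm
  have h_hamilton : F = ouHamiltonMap B Q R := by
    rw [hF, h_matrix, symplectic_mul_ouSymbolMatrix]
  refine ⟨h_hamilton, fun X j => ?_⟩
  rw [h_hamilton, matRe_mul_matIm_pow_ouHamiltonMap_mulVec_eq_zero_iff]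

/-- Let `B, Q, R` be real `n×n` matrices with `Q` and `R` symmetric positive
semidefinite, and let `q(x,ξ) = (1/2)⟨Qξ,ξ⟩ + (1/2)⟨Rx,x⟩ - i⟨Bx,ξ⟩` be the quadratic symbol
of the associated generalized Ornstein–Uhlenbeck operator, with symmetric matrix `Q̃` and
Hamilton map `F = JQ̃`. Then `F = (1/2)[[-iB, Q], [-R, iBᵀ]]` and the singular space of `q`
equals `[⋂_{j=0}^{2n-1} Ker(R B^j)] × [⋂_{j=0}^{2n-1} Ker(Q (Bᵀ)^j)]`. -/
theorem statement_19 (n : ℕ) (hn : 0 < n) (B Q R : Matrix (Fin n) (Fin n) ℝ)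
    (hQ : Q.PosSemidef) (hR : R.PosSemidef)
    (Qtilde : Matrix (Fin n ⊕ Fin n) (Fin n ⊕ Fin n) ℂ) (hQtsymm : Qtilde.IsSymm)
    (hq : ∀ X : Fin n ⊕ Fin n → ℂ,
      ∑ i, X i * Qtilde.mulVec X i
        = (1 / 2 : ℂ) * (∑ i, (cmat Q).mulVec (fun j => X (Sum.inr j)) i * X (Sum.inr i))
          + (1 / 2 : ℂ) * (∑ i, (cmat R).mulVec (fun j => X (Sum.inl j)) i * X (Sum.inl i))
          - Complex.I * ∑ i, (cmat B).mulVec (fun j => X (Sum.inl j)) i * X (Sum.inr i))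
    (F : Matrix (Fin n ⊕ Fin n) (Fin n ⊕ Fin n) ℂ) (hF : F = Jmat n * Qtilde) :
    F = (1 / 2 : ℂ) • Matrix.fromBlocks (-(Complex.I • cmat B)) (cmat Q)
          (-(cmat R)) (Complex.I • cmat B.transpose)
      ∧ ∀ X : Fin n ⊕ Fin n → ℝ,
          (∀ j < 2 * n, (matRe F * matIm F ^ j).mulVec (cvec X) = 0)
            ↔ ((∀ j < 2 * n, (R * B ^ j).mulVec (fun i => X (Sum.inl i)) = 0)
                ∧ ∀ j < 2 * n, (Q * B.transpose ^ j).mulVec (fun i => X (Sum.inr i)) = 0) := by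
  have ⟨hF_eq, h_ker⟩ := statement_19_general B Q R (isHermitian_iff_isSymm.mp hQ.isHermitian)
    (isHermitian_iff_isSymm.mp hR.isHermitian) Qtilde hQtsymm (fun X => hq (cvec X)) F hF
  exact ⟨hF_eq, fun X => (forall₂_congr fun j _ => h_ker X j).trans forall₂_and⟩
end
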